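/- Let R1 be a reduced root system spanning V* and let ξ : K → V be a generic linear residual point of R1. Then ξ is rational: for every α ∈ R1, the linear functional K → ℝ, k ↦ α(ξ(k)), is a linear combination with rational coefficients of the evaluation functionals k ↦ k(β) for β ∈ R1. -/

import Mathlib

open Classical

noncomputable section

namespace GenRes

variable (V : Type*) [AddCommGroup V] [Module ℝ V]

/-- a reduced (crystallographic) root system in `V*` spanning `V*`:  a finite set of
nonzero linear functionals on `V`, spanning `V*`, closed under the reflections
associated to the coroots, integral, and reduced -/
structure RedRootSystem where
  roots : Finset (Module.Dual ℝ V)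
  zero_not_mem : (0 : Module.Dual ℝ V) ∉ roots
  spanning : Submodule.span ℝ (roots : Set (Module.Dual ℝ V)) = ⊤
  coroot : Module.Dual ℝ V → V
  coroot_two : ∀ α ∈ roots, α (coroot α) = 2
  reflect_mem : ∀ α ∈ roots, ∀ β ∈ roots, β - β (coroot α) • α ∈ roots
  integral : ∀ α ∈ roots, ∀ β ∈ roots, ∃ z : ℤ, β (coroot α) = (z : ℝ)
  reduced : ∀ α ∈ roots, ∀ c : ℝ, c • α ∈ roots → c = 1 ∨ c = -1

variable {V} (rs : RedRootSystem V)

/-- a parameter function `k : R1 → ℝ` is `W0`-invariant iff it is invariant under all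
the reflections `β ↦ β − β(α∨)α` -/
def Invariant (k : rs.roots → ℝ) : Prop :=
  ∀ α β : rs.roots,
    k ⟨(β : Module.Dual ℝ V) - (β : Module.Dual ℝ V) (rs.coroot α) • (α : Module.Dual ℝ V),
        rs.reflect_mem α α.2 β β.2⟩ = k β

/-- the space `K` of `W0`-invariant parameter functions `R1 → ℝ`, as a submodule of the
space of all functions `R1 → ℝ` -/
def ParamSub : Submodule ℝ (rs.roots → ℝ) where
  carrier := {k | Invariant rs k}
  add_mem' := by
    intro a b ha hb α β
    simp only [Pi.add_apply, ha α β, hb α β]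
  zero_mem' := by intro α β; rfl
  smul_mem' := by
    intro c a ha α β
    simp only [Pi.smul_apply, ha α β]

/-- `ξ ∈ V` is a linear `(R1,k)`-residual point:
`#{α ∈ R1 : α(ξ) = k(α)} = #{α ∈ R1 : α(ξ) = 0} + dim V` -/
def IsLinResidual (k : rs.roots → ℝ) (ξ : V) : Prop :=
  {α : rs.roots | (α : Module.Dual ℝ V) ξ = k α}.ncard =
    {α : rs.roots | (α : Module.Dual ℝ V) ξ = 0}.ncard + Module.finrank ℝ V

/-- a linear map `ξ : K → V` is a generic linear residual point of `R1` if `ξ(k)` is a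
linear `(R1,k)`-residual point for all `k` in a dense open subset of `K` -/
def IsGeneric (ξ : (ParamSub rs) →ₗ[ℝ] V) : Prop :=
  ∃ U : Set (ParamSub rs), IsOpen U ∧ Dense U ∧
    ∀ k ∈ U, IsLinResidual rs (k : rs.roots → ℝ) (ξ k)

/-- the reflection of `V` associated to the root `α`:  `v ↦ v − α(v)·α∨` -/
def reflV (α : Module.Dual ℝ V) : V →ₗ[ℝ] V :=
  LinearMap.id - α.smulRight (rs.coroot α)

/-- the element of the Weyl group `W0` given by a word in the reflections -/
def weylOf (L : List (Module.Dual ℝ V)) : V →ₗ[ℝ] V :=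
  (L.map (fun α => reflV rs α)).prod



section TraceLemma
variable {F : Type*} [Field F] {J : Type*} [Fintype J]

/-- a projection onto the kernel of a matrix -/
lemma exists_ker_proj (X : Matrix J J F) :
    ∃ p : Matrix J J F, X * p = 0 ∧ ∀ A : Matrix J J F, X * A = 0 → p * A = A := by
  obtain ⟨q, hq⟩ := Submodule.exists_isCompl (LinearMap.ker (Matrix.toLin' X))
  set K := LinearMap.ker (Matrix.toLin' X) with hK
  let pr : (J → F) →ₗ[F] (J → F) := K.subtype ∘ₗ (Submodule.projectionOnto K q hq)
  have h1 : ∀ v, X.mulVec (pr v) = 0 := by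
    intro v
    have : (pr v) ∈ K := ((Submodule.projectionOnto K q hq) v).2
    rw [hK, LinearMap.mem_ker, Matrix.toLin'_apply] at this
    exact this
  have h2 : ∀ v, X.mulVec v = 0 → pr v = v := by
    intro v hv
    have : v ∈ K := by rw [hK, LinearMap.mem_ker, Matrix.toLin'_apply]; exact hv
    have h3 := Submodule.projectionOnto_apply_left hq ⟨v, this⟩
    simp only [pr, LinearMap.comp_apply]
    exact congrArg Subtype.val h3
  refine ⟨LinearMap.toMatrix' pr, ?_, ?_⟩
  · apply Matrix.toLin'.injective
    rw [Matrix.toLin'_mul, Matrix.toLin'_toMatrix']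
    ext1 v
    ext
    simp [h1]
  · intro A hA
    apply Matrix.toLin'.injective
    rw [Matrix.toLin'_mul, Matrix.toLin'_toMatrix']
    apply LinearMap.ext
    intro v
    rw [LinearMap.comp_apply]
    apply h2
    rw [Matrix.toLin'_apply, Matrix.mulVec_mulVec, hA, Matrix.zero_mulVec]

lemma map_mul_deriv (d : F → F) (hadd : ∀ x y, d (x + y) = d x + d y)
    (hmul : ∀ x y, d (x * y) = d x * y + x * d y) (A B : Matrix J J F) :
    (A * B).map d = A.map d * B + A * B.map d := by
  have h0 : d 0 = 0 := by simpa using hadd 0 0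
  let D : F →+ F := ⟨⟨d, h0⟩, hadd⟩
  ext i j
  simp only [Matrix.map_apply, Matrix.mul_apply, Matrix.add_apply]
  change D _ = _
  rw [map_sum, ← Finset.sum_add_distrib]
  exact Finset.sum_congr rfl fun k _ => hmul _ _

theorem trace_deriv_zero (d : F → F) (hadd : ∀ x y, d (x + y) = d x + d y)
    (hmul : ∀ x y, d (x * y) = d x * y + x * d y) (m : ℕ) :
    ∀ (X Y : Matrix J J F), X ^ (m+1) = 0 → X * Y = Y * X → (X.map d * Y).trace = 0 := by
  have h0 : d 0 = 0 := by simpa using hadd 0 0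
  let D : F →+ F := ⟨⟨d, h0⟩, hadd⟩
  have hsub : ∀ A B : Matrix J J F, (A - B).map d = A.map d - B.map d := by
    intro A B; ext i j; exact map_sub D _ _
  have hm0 : (0 : Matrix J J F).map d = 0 := by ext i j; exact h0
  induction m with
  | zero =>
    intro X Y hX _
    have : X = 0 := by simpa using hX
    rw [this, hm0]; simp
  | succ m ih =>
    intro X Y hX hXY
    obtain ⟨p, hp, hpA⟩ := exists_ker_proj X
    have hpp : p * p = p := hpA p hp
    have hYp : p * (Y * p) = Y * p := by
      apply hpA
      rw [← mul_assoc, hXY, mul_assoc, hp, mul_zero]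
    have hd : X.map d * p + X * p.map d = 0 := by
      rw [← map_mul_deriv d hadd hmul, hp, hm0]
    -- q = 1 - p
    have hXq : X * (1 - p) = X := by rw [mul_sub, hp, mul_one, sub_zero]
    have hqYq : (1 - p) * Y * (1 - p) = (1 - p) * Y := by
      have : (1 - p) * Y * p = 0 := by rw [mul_assoc, sub_mul, hYp, one_mul, sub_self]
      rw [mul_sub, this, mul_one, sub_zero]
    have hpow : ∀ k : ℕ, ((1 - p) * X) ^ (k+1) = (1 - p) * X ^ (k+1) := by
      intro k
      induction k with
      | zero => simp
      | succ k ih2 =>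
        rw [pow_succ, ih2, pow_succ X (k+1)]
        have : X ^ (k+1) * (1 - p) = X ^ (k+1) := by
          rw [pow_succ, mul_assoc, hXq]
        calc (1 - p) * X ^ (k+1) * ((1 - p) * X) = (1 - p) * (X ^ (k+1) * (1 - p)) * X := by
              simp only [mul_assoc]
          _ = _ := by rw [this, mul_assoc]
    have hX' : ((1 - p) * X) ^ (m+1) = 0 := by
      rw [hpow]
      have : p * X ^ (m+1) = X ^ (m+1) := hpA _ (by rw [← pow_succ', hX])
      rw [sub_mul, this, one_mul, sub_self]
    have hcomm : ((1 - p) * X) * ((1 - p) * Y) = ((1 - p) * Y) * ((1 - p) * X) := by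
      calc ((1 - p) * X) * ((1 - p) * Y) = (1 - p) * (X * (1 - p)) * Y := by
            simp only [mul_assoc]
        _ = (1 - p) * (X * Y) := by rw [hXq, mul_assoc]
        _ = (1 - p) * Y * X := by rw [hXY, mul_assoc]
        _ = (1 - p) * Y * (1 - p) * X := by rw [hqYq]
        _ = _ := by simp only [mul_assoc]
    have key := ih _ _ hX' hcomm
    have h1 : ((1 : Matrix J J F) - p).map d = - p.map d := by
      have e := map_mul_deriv d hadd hmul (1 : Matrix J J F) 1
      rw [mul_one, mul_one, one_mul] at e
      have e1 : (1 : Matrix J J F).map d = 0 := by simpa using e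
      rw [hsub, e1, zero_sub]
    rw [map_mul_deriv d hadd hmul, h1, add_mul, Matrix.trace_add] at key
    have t1 : (-p.map d * X * ((1 - p) * Y)).trace = (X.map d * p * Y).trace := by
      have : -p.map d * X * ((1 - p) * Y) = -(p.map d * Y * X) := by
        calc -p.map d * X * ((1 - p) * Y) = -p.map d * (X * (1 - p)) * Y := by
              simp only [mul_assoc]
          _ = -p.map d * (X * Y) := by rw [hXq, mul_assoc]
          _ = _ := by rw [hXY, ← mul_assoc, neg_mul, neg_mul]
      rw [this, Matrix.trace_neg, Matrix.trace_mul_comm, ← mul_assoc,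
        ← eq_neg_of_add_eq_zero_left hd |> fun h => (neg_eq_iff_eq_neg.mpr h : -(X.map d * p) = _)]
      simp
    have t2 : ((1 - p) * X.map d * ((1 - p) * Y)).trace = (X.map d * ((1 - p) * Y)).trace := by
      rw [mul_assoc, Matrix.trace_mul_comm, mul_assoc, hqYq]
    rw [t1, t2, ← Matrix.trace_add, mul_assoc, ← mul_add] at key
    have : p * Y + (1 - p) * Y = Y := by rw [← add_mul]; simp
    rwa [this] at key
end TraceLemma


section KeyLemma
open MvPolynomial

lemma exists_partial_deriv (P : Type*) (F : Type*) [Field F] [Algebra ℝ F]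
    [Algebra (MvPolynomial P ℝ) F] [IsScalarTower ℝ (MvPolynomial P ℝ) F]
    [IsFractionRing (MvPolynomial P ℝ) F] (a : P) :
    ∃ d : F → F,
      (∀ x y, d (x + y) = d x + d y) ∧ (∀ x y, d (x * y) = d x * y + x * d y) ∧
      (∀ c : ℝ, d (algebraMap ℝ _ c) = 0) ∧
      (∀ b : P, d (algebraMap (MvPolynomial P ℝ) _ (X b)) = if a = b then 1 else 0) := by
  let φ : MvPolynomial P ℝ →+* TrivSqZeroExt F F :=
    eval₂Hom ((TrivSqZeroExt.inlHom F F).comp (algebraMap ℝ F))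
      (fun b => TrivSqZeroExt.inl (algebraMap (MvPolynomial P ℝ) F (X b)) +
        TrivSqZeroExt.inr (if a = b then (1 : F) else 0))
  let fs : TrivSqZeroExt F F →+* F := (TrivSqZeroExt.fstHom F F F).toRingHom
  have hfst : fs.comp φ = algebraMap (MvPolynomial P ℝ) F := by
    apply MvPolynomial.ringHom_ext
    · intro r
      simp only [φ, fs, RingHom.comp_apply, coe_eval₂Hom, eval₂_C]
      simp [IsScalarTower.algebraMap_apply ℝ (MvPolynomial P ℝ) F, MvPolynomial.algebraMap_eq]
    · intro b
      by_cases h : a = b <;> simp [φ, fs, h]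
  have hu : ∀ y : nonZeroDivisors (MvPolynomial P ℝ), IsUnit (φ y) := by
    intro y
    rw [TrivSqZeroExt.isUnit_iff_isUnit_fst]
    have h1 : (φ y).fst = algebraMap (MvPolynomial P ℝ) F y := RingHom.congr_fun hfst y
    rw [h1]
    exact IsLocalization.map_units F y
  let ψ : F →+* TrivSqZeroExt F F := IsLocalization.lift hu
  have hψ : ∀ x, ψ (algebraMap (MvPolynomial P ℝ) F x) = φ x := fun x => IsLocalization.lift_eq hu x
  have hψf : fs.comp ψ = RingHom.id F := by
    apply IsLocalization.ringHom_ext (nonZeroDivisors (MvPolynomial P ℝ))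
    refine RingHom.ext fun x => ?_
    have := RingHom.congr_fun hfst x
    simp only [RingHom.comp_apply] at this
    simp [hψ, this]
  have hψf' : ∀ x, (ψ x).fst = x := fun x => RingHom.congr_fun hψf x
  refine ⟨fun x => (ψ x).snd, ?_, ?_, ?_, ?_⟩
  · intro x y; simp
  · intro x y
    simp [hψf', TrivSqZeroExt.snd_mul]
    ring
  · intro c
    show (ψ _).snd = 0
    rw [IsScalarTower.algebraMap_apply ℝ (MvPolynomial P ℝ) F, hψ]
    simp [φ, MvPolynomial.algebraMap_eq]
  · intro b
    show (ψ _).snd = _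
    rw [hψ]
    by_cases h : a = b <;> simp [φ, h]

lemma nilp_of_grading {F : Type*} [Field F] {J : Type*} [Fintype J] (X : Matrix J J F)
    (deg : J → ℝ) (h : ∀ i j, X i j ≠ 0 → deg j + 1 ≤ deg i) : ∃ m : ℕ, X ^ (m+1) = 0 := by
  have hp : ∀ (n : ℕ) (i j), (X ^ n) i j ≠ 0 → deg j + n ≤ deg i := by
    intro n
    induction n with
    | zero =>
      intro i j hij
      have : i = j := by
        by_contra hne
        exact hij (by rw [pow_zero, Matrix.one_apply_ne hne])
      simp [this]
    | succ n ih =>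
      intro i j hij
      rw [pow_succ, Matrix.mul_apply] at hij
      obtain ⟨k, _, hk⟩ := Finset.exists_ne_zero_of_sum_ne_zero hij
      have h1 := ih i k (left_ne_zero_of_mul hk)
      have h2 := h k j (right_ne_zero_of_mul hk)
      push_cast
      linarith
  obtain ⟨m, hm⟩ := exists_nat_gt (∑ j, 2 * |deg j|)
  refine ⟨m, ?_⟩
  ext i j
  by_contra hne
  have h1 := hp _ i j hne
  have h2 : ∀ j, 2 * |deg j| ≤ ∑ j, 2 * |deg j| := fun j =>
    Finset.single_le_sum (f := fun j => 2 * |deg j|) (fun _ _ => by positivity) (Finset.mem_univ j)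
  have h3 := h2 i
  have h4 := h2 j
  have h5 := le_abs_self (deg i)
  have h6 := neg_abs_le (deg j)
  push_cast at h1
  linarith

theorem key_lemma_aux {P J : Type*} [Fintype P] [Fintype J] (F : Type*) [Field F] [Algebra ℝ F]
    (t : P → F) (hder : ∀ a : P, ∃ d : F → F,
      (∀ x y, d (x + y) = d x + d y) ∧ (∀ x y, d (x * y) = d x * y + x * d y) ∧
      (∀ c : ℝ, d (algebraMap ℝ _ c) = 0) ∧
      (∀ b : P, d (t b) = if a = b then 1 else 0)) (e f : P → Matrix J J ℝ)
    (S : Submodule ℝ (Matrix J J ℝ)) (hS : ∀ a b, e a * f b - f b * e a ∈ S)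
    (c : P → ℝ) (hc : ∀ a, c a ≠ 0)
    (htr : ∀ a b, (e a * f b).trace = if a = b then c a else 0)
    (deg : J → ℝ) (hdeg : ∀ a i j, e a i j ≠ 0 → deg j + 1 ≤ deg i) :
    Fintype.card P ≤ Module.finrank ℝ S := by
  let ι : ℝ →+* F := algebraMap ℝ F
  let E : P → Matrix J J F := fun a => (e a).map ι
  let G : P → Matrix J J F := fun a => (f a).map ι
  let Xm : Matrix J J F := ∑ a, t a • E a
  let bs := Module.finBasis ℝ S
  let co : P → P → Fin (Module.finrank ℝ S) → ℝ := fun a b s => bs.repr ⟨_, hS a b⟩ s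
  have hco : ∀ a b, e a * f b - f b * e a = ∑ s, co a b s • (bs s : Matrix J J ℝ) := by
    intro a b
    have := congrArg Subtype.val (bs.sum_repr ⟨_, hS a b⟩)
    simp only [Submodule.coe_sum, Submodule.coe_smul] at this
    exact this.symm
  have hco' : ∀ a b, E a * G b - G b * E a =
      ∑ s, ι (co a b s) • (bs s : Matrix J J ℝ).map ι := by
    intro a b
    have := congrArg (ι.mapMatrix) (hco a b)
    rw [map_sub, map_mul, map_mul, map_sum] at this
    rw [show E a = ι.mapMatrix (e a) from rfl, show G b = ι.mapMatrix (f b) from rfl, this]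
    refine Finset.sum_congr rfl fun s _ => ?_
    ext i j
    simp
  let Λ : (P → F) →ₗ[F] (Fin (Module.finrank ℝ S) → F) :=
    LinearMap.pi fun s => ∑ b, (∑ a, t a * ι (co a b s)) • LinearMap.proj b
  have hΛ : ∀ y s, Λ y s = ∑ b, (∑ a, t a * ι (co a b s)) * y b := by
    intro y s
    simp [Λ]
  have hinj : Function.Injective Λ := by
    rw [← LinearMap.ker_eq_bot, LinearMap.ker_eq_bot']
    intro y hy
    let Y : Matrix J J F := ∑ b, y b • G b
    have hcomm : Xm * Y - Y * Xm = 0 := by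
      have : Xm * Y - Y * Xm = ∑ s, (Λ y s) • (bs s : Matrix J J ℝ).map ι := by
        have h1 : Xm * Y = ∑ b, ∑ a, (t a * y b) • (E a * G b) := by
          simp only [Xm, Y, Finset.sum_mul_sum, smul_mul_smul_comm]
          rw [Finset.sum_comm]
        have h2 : Y * Xm = ∑ b, ∑ a, (t a * y b) • (G b * E a) := by
          simp only [Xm, Y, Finset.sum_mul_sum, smul_mul_smul_comm, mul_comm (t _)]
        rw [h1, h2, ← Finset.sum_sub_distrib]
        simp only [← Finset.sum_sub_distrib, ← smul_sub, hco', Finset.smul_sum, smul_smul, hΛ,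
          Finset.sum_smul, Finset.sum_mul]
        have : ∀ b, (∑ a, ∑ s, (t a * y b * ι (co a b s)) • (bs s : Matrix J J ℝ).map ι) =
            ∑ s, ∑ a, (t a * ι (co a b s) * y b) • (bs s : Matrix J J ℝ).map ι := by
          intro b
          rw [Finset.sum_comm]
          refine Finset.sum_congr rfl fun s _ => Finset.sum_congr rfl fun a _ => ?_
          congr 1; ring
        rw [Finset.sum_congr rfl fun b _ => this b, Finset.sum_comm]
      rw [this, hy]; simp
    have hXdeg : ∀ i j, Xm i j ≠ 0 → deg j + 1 ≤ deg i := by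
      intro i j hij
      have h1 : Xm i j = ∑ a, t a * ι (e a i j) := by
        simp [Xm, E, Matrix.sum_apply]
      rw [h1] at hij
      obtain ⟨a, _, ha⟩ := Finset.exists_ne_zero_of_sum_ne_zero hij
      apply hdeg a
      intro h0
      apply ha
      rw [h0, map_zero, mul_zero]
    obtain ⟨m, hm⟩ := nilp_of_grading Xm deg hXdeg
    funext a
    obtain ⟨d, hadd, hmul, hdc, hdt⟩ := hder a
    have h0 : d 0 = 0 := by simpa using hadd 0 0
    let D : F →+ F := ⟨⟨d, h0⟩, hadd⟩
    have htrace := trace_deriv_zero d hadd hmul m Xm Y hm (sub_eq_zero.mp hcomm)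
    have hdX : Xm.map d = E a := by
      ext i j
      have h1 : Xm i j = ∑ a, t a * ι (e a i j) := by
        simp [Xm, E, Matrix.sum_apply]
      rw [Matrix.map_apply, h1]
      change D _ = _
      rw [map_sum]
      have : ∀ b, D (t b * ι (e b i j)) = if a = b then ι (e b i j) else 0 := by
        intro b
        change d _ = _
        rw [hmul, hdt, hdc]
        split_ifs <;> simp
      simp [this, E]
    rw [hdX] at htrace
    have hEG : ∀ b, (E a * G b).trace = if a = b then ι (c a) else 0 := by
      intro b
      have : (E a * G b) = ι.mapMatrix (e a * f b) := by rw [map_mul]; rfl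
      rw [this, RingHom.mapMatrix_apply, ← AddMonoidHom.map_trace ι, htr]
      split_ifs <;> simp
    simp only [Y, Finset.mul_sum, Matrix.trace_sum, Matrix.mul_smul, Matrix.trace_smul, hEG] at htrace
    simp at htrace
    rcases htrace with h | h
    · exact h
    · exact absurd h (by simpa [ι] using hc a)
  have := LinearMap.finrank_le_finrank_of_injective hinj
  simpa using this

theorem key_lemma {P J : Type*} [Fintype P] [Fintype J] (e f : P → Matrix J J ℝ)
    (S : Submodule ℝ (Matrix J J ℝ)) (hS : ∀ a b, e a * f b - f b * e a ∈ S)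
    (c : P → ℝ) (hc : ∀ a, c a ≠ 0)
    (htr : ∀ a b, (e a * f b).trace = if a = b then c a else 0)
    (deg : J → ℝ) (hdeg : ∀ a i j, e a i j ≠ 0 → deg j + 1 ≤ deg i) :
    Fintype.card P ≤ Module.finrank ℝ S :=
  key_lemma_aux (FractionRing (MvPolynomial P ℝ)) _
    (fun a => exists_partial_deriv P (FractionRing (MvPolynomial P ℝ)) a) e f S hS c hc htr deg hdeg

end KeyLemma


section Cocycle
variable {E : Type*} [AddCommGroup E] [Module ℝ E]

lemma span_int_pairing (Ψ : Finset E) (b : E →ₗ[ℝ] E →ₗ[ℝ] ℝ)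
    (hintg : ∀ α ∈ Ψ, ∀ β ∈ Ψ, ∃ z : ℤ, b α β = z) (x y : E)
    (hx : x ∈ Submodule.span ℤ (Ψ : Set E)) (hy : y ∈ Submodule.span ℤ (Ψ : Set E)) :
    ∃ z : ℤ, b x y = z := by
  induction hx using Submodule.span_induction with
  | mem x hx =>
    induction hy using Submodule.span_induction with
    | mem y hy => exact hintg x hx y hy
    | zero => exact ⟨0, by simp⟩
    | add y y' _ _ h1 h2 =>
      obtain ⟨z1, h1⟩ := h1
      obtain ⟨z2, h2⟩ := h2
      exact ⟨z1 + z2, by simp [h1, h2]⟩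
    | smul n y _ h1 =>
      obtain ⟨z1, h1⟩ := h1
      exact ⟨n * z1, by simp [h1]⟩
  | zero => exact ⟨0, by simp⟩
  | add y y' _ _ h1 h2 =>
    obtain ⟨z1, h1⟩ := h1
    obtain ⟨z2, h2⟩ := h2
    exact ⟨z1 + z2, by simp [h1, h2]⟩
  | smul n y _ h1 =>
    obtain ⟨z1, h1⟩ := h1
    exact ⟨n * z1, by simp [h1]⟩

lemma span_int_even (Ψ : Finset E) (b : E →ₗ[ℝ] E →ₗ[ℝ] ℝ) (hsymm : ∀ x y, b x y = b y x)
    (hintg : ∀ α ∈ Ψ, ∀ β ∈ Ψ, ∃ z : ℤ, b α β = z) (h2 : ∀ α ∈ Ψ, b α α = 2) (x : E)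
    (hx : x ∈ Submodule.span ℤ (Ψ : Set E)) :
    ∃ z : ℤ, b x x = 2 * z := by
  induction hx using Submodule.span_induction with
  | mem x hx => exact ⟨1, by simp [h2 x hx]⟩
  | zero => exact ⟨0, by simp⟩
  | add y y' hy hy' h1 h2 =>
    obtain ⟨z1, h1⟩ := h1
    obtain ⟨z2, h2⟩ := h2
    obtain ⟨z3, h3⟩ := span_int_pairing Ψ b hintg y y' hy hy'
    refine ⟨z1 + z2 + z3, ?_⟩
    simp only [map_add, LinearMap.add_apply, h1, h2, h3, hsymm y' y]
    push_cast; ring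
  | smul n y _ h1 =>
    obtain ⟨z1, h1⟩ := h1
    refine ⟨n * n * z1, ?_⟩
    simp [h1]; ring

lemma exists_cocycle (Ψ : Finset E) (b : E →ₗ[ℝ] E →ₗ[ℝ] ℝ) (hsymm : ∀ x y, b x y = b y x)
    (hintg : ∀ α ∈ Ψ, ∀ β ∈ Ψ, ∃ z : ℤ, b α β = z) (h2 : ∀ α ∈ Ψ, b α α = 2) :
    ∃ B : E → E → ℤ,
      (∀ x ∈ Submodule.span ℤ (Ψ : Set E), ∀ y ∈ Submodule.span ℤ (Ψ : Set E),
        ∀ z ∈ Submodule.span ℤ (Ψ : Set E), B (x + y) z = B x z + B y z) ∧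
      (∀ x ∈ Submodule.span ℤ (Ψ : Set E), ∀ y ∈ Submodule.span ℤ (Ψ : Set E),
        ∀ z ∈ Submodule.span ℤ (Ψ : Set E), B z (x + y) = B z x + B z y) ∧
      (∀ x ∈ Submodule.span ℤ (Ψ : Set E), ∀ y ∈ Submodule.span ℤ (Ψ : Set E),
        ((B x y + B y x : ℤ) : ℝ) = b x y) := by
  set Q := Submodule.span ℤ (Ψ : Set E) with hQ
  have : Module.Finite ℤ Q := Module.Finite.span_of_finite ℤ Ψ.finite_toSet
  have : Module.IsTorsionFree ℤ E := Module.IsTorsionFree.trans_faithfulSMul ℤ ℝ E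
  have : Module.Free ℤ Q := inferInstance
  let v := Module.finBasis ℤ Q
  choose n hn using fun i j => span_int_pairing Ψ b hintg (v i) (v j) (v i).2 (v j).2
  choose m hm using fun i => span_int_even Ψ b hsymm hintg h2 (v i) (v i).2
  let w : Fin (Module.finrank ℤ Q) → Fin (Module.finrank ℤ Q) → ℤ := fun i j =>
    if i < j then n i j else if i = j then m i else 0
  have hw : ∀ i j, w i j + w j i = n i j := by
    intro i j
    have hs : n i j = n j i := by
      have := hsymm (v i) (v j)
      rw [hn, hn] at this
      exact_mod_cast this
    rcases lt_trichotomy i j with h | h | h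
    · simp [w, h, h.not_gt, h.ne']
    · subst h
      have := hn i i
      rw [hm] at this
      have h3 : 2 * m i = n i i := by exact_mod_cast this
      simp [w]; omega
    · simp [w, h, h.not_gt, h.ne', hs]
  let B0 : Q → Q → ℤ := fun x y => ∑ i, ∑ j, v.repr x i * v.repr y j * w i j
  have hB1 : ∀ x y z, B0 (x + y) z = B0 x z + B0 y z := by
    intro x y z
    simp only [B0, map_add, Finsupp.add_apply, add_mul, Finset.sum_add_distrib]
  have hB2 : ∀ x y z, B0 z (x + y) = B0 z x + B0 z y := by
    intro x y z
    simp only [B0, map_add, Finsupp.add_apply, add_mul, mul_add, Finset.sum_add_distrib]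
  have hB3 : ∀ x y, ((B0 x y + B0 y x : ℤ) : ℝ) = b x y := by
    intro x y
    have h1 : B0 x y + B0 y x = ∑ i, ∑ j, v.repr x i * v.repr y j * n i j := by
      have : B0 y x = ∑ i, ∑ j, v.repr x i * v.repr y j * w j i := by
        simp only [B0]
        rw [Finset.sum_comm]
        refine Finset.sum_congr rfl fun i _ => Finset.sum_congr rfl fun j _ => ?_
        ring
      rw [this]
      simp only [B0, ← Finset.sum_add_distrib, ← mul_add, hw]
    have hx : (x : E) = ∑ i, ((v.repr x i : ℤ) : ℝ) • (v i : E) := by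
      have := congrArg Subtype.val (v.sum_repr x)
      simp only [Submodule.coe_sum, Submodule.coe_smul] at this
      simp only [Int.cast_smul_eq_zsmul, this]
    have hy : (y : E) = ∑ i, ((v.repr y i : ℤ) : ℝ) • (v i : E) := by
      have := congrArg Subtype.val (v.sum_repr y)
      simp only [Submodule.coe_sum, Submodule.coe_smul] at this
      simp only [Int.cast_smul_eq_zsmul, this]
    rw [h1, hx, hy]
    simp only [map_sum, LinearMap.sum_apply, map_smul, LinearMap.smul_apply, hn, smul_eq_mul, Finset.mul_sum]
    push_cast
    rw [Finset.sum_comm]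
    refine Finset.sum_congr rfl fun i _ => Finset.sum_congr rfl fun j _ => ?_
    ring
  refine ⟨fun x y => if hx : x ∈ Q then if hy : y ∈ Q then B0 ⟨x, hx⟩ ⟨y, hy⟩ else 0 else 0,
    ?_, ?_, ?_⟩
  · intro x hx y hy z hz
    simp only [hx, hy, hz, Q.add_mem hx hy, dif_pos]
    exact hB1 ⟨x, hx⟩ ⟨y, hy⟩ ⟨z, hz⟩
  · intro x hx y hy z hz
    simp only [hx, hy, hz, Q.add_mem hx hy, dif_pos]
    exact hB2 ⟨x, hx⟩ ⟨y, hy⟩ ⟨z, hz⟩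
  · intro x hx y hy
    simp only [hx, hy, dif_pos]
    exact hB3 ⟨x, hx⟩ ⟨y, hy⟩
end Cocycle


/-- Simply laced root data together with a sign cocycle. -/
structure SLData (E : Type*) [AddCommGroup E] [Module ℝ E] where
  Ψ : Finset E
  b : E →ₗ[ℝ] E →ₗ[ℝ] ℝ
  symm : ∀ x y, b x y = b y x
  h2 : ∀ α ∈ Ψ, b α α = 2
  vals : ∀ α ∈ Ψ, ∀ β ∈ Ψ, b α β = -2 ∨ b α β = -1 ∨ b α β = 0 ∨ b α β = 1 ∨ b α β = 2
  add_mem : ∀ α ∈ Ψ, ∀ β ∈ Ψ, b α β = -1 → α + β ∈ Ψ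
  neg_mem : ∀ α ∈ Ψ, -α ∈ Ψ
  eq_of_two : ∀ α ∈ Ψ, ∀ β ∈ Ψ, b α β = 2 → β = α
  ε : E → E → ℝ
  ε_add_left : ∀ x ∈ Submodule.span ℤ (Ψ : Set E), ∀ y ∈ Submodule.span ℤ (Ψ : Set E),
        ∀ z ∈ Submodule.span ℤ (Ψ : Set E), ε (x + y) z = ε x z * ε y z
  ε_add_right : ∀ x ∈ Submodule.span ℤ (Ψ : Set E), ∀ y ∈ Submodule.span ℤ (Ψ : Set E),
        ∀ z ∈ Submodule.span ℤ (Ψ : Set E), ε z (x + y) = ε z x * ε z y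
  ε_neg_left : ∀ x ∈ Submodule.span ℤ (Ψ : Set E), ∀ y ∈ Submodule.span ℤ (Ψ : Set E),
    ε (-x) y = ε x y
  ε_neg_right : ∀ x ∈ Submodule.span ℤ (Ψ : Set E), ∀ y ∈ Submodule.span ℤ (Ψ : Set E),
    ε x (-y) = ε x y
  ε_sq : ∀ x y, ε x y * ε x y = 1
  ε_self : ∀ α ∈ Ψ, ε α α = -1
  ε_comm : ∀ α ∈ Ψ, ∀ β ∈ Ψ, b α β = 0 → ε β α = ε α β
  ε_anti : ∀ α ∈ Ψ, ∀ β ∈ Ψ, (b α β = 1 ∨ b α β = -1) → ε β α = - ε α β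

namespace SLData
variable {E : Type*} [AddCommGroup E] [Module ℝ E] (D : SLData E)

lemma mem_span {α : E} (h : α ∈ D.Ψ) : α ∈ Submodule.span ℤ (D.Ψ : Set E) :=
  Submodule.subset_span h

lemma zero_not_mem : (0 : E) ∉ D.Ψ := by
  intro h
  have := D.h2 0 h
  simp at this

lemma ne_zero {α : E} (h : α ∈ D.Ψ) : α ≠ 0 := by
  rintro rfl; exact D.zero_not_mem h

lemma ne_neg_self {α : E} (h : α ∈ D.Ψ) : α ≠ -α := by
  intro h1
  have h3 := D.h2 α h
  have h4 : D.b α α = D.b α (-α) := congrArg (D.b α) h1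
  rw [map_neg] at h4
  linarith

lemma eq_neg_of {α β : E} (hα : α ∈ D.Ψ) (hβ : β ∈ D.Ψ) (h : D.b α β = -2) : β = -α := by
  have := D.eq_of_two α hα (-β) (D.neg_mem β hβ) (by rw [map_neg, h]; norm_num)
  rw [← this, neg_neg]

lemma add_mem_iff {α β : E} (hα : α ∈ D.Ψ) (hβ : β ∈ D.Ψ) : α + β ∈ D.Ψ ↔ D.b α β = -1 := by
  refine ⟨fun h => ?_, D.add_mem α hα β hβ⟩
  have h1 := D.h2 _ h
  simp only [map_add, LinearMap.add_apply, D.h2 α hα, D.h2 β hβ, D.symm β α] at h1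
  linarith

/-- basis vector attached to `γ` (zero if `γ` is not a root) -/
def u (γ : E) : D.Ψ → ℝ := fun δ => if (δ : E) = γ then 1 else 0

lemma u_zero {γ : E} (h : γ ∉ D.Ψ) : D.u γ = 0 := by
  funext δ
  have : (δ : E) ≠ γ := fun h1 => h (h1 ▸ δ.2)
  simp [u, this]

def A (α γ : E) : E × (D.Ψ → ℝ) := (if γ = -α then -α else 0, D.ε α γ • D.u (α + γ))

def Op (α : E) : (E × (D.Ψ → ℝ)) →ₗ[ℝ] (E × (D.Ψ → ℝ)) :=
  LinearMap.coprod (-(D.b α).smulRight ((0, D.u α) : E × (D.Ψ → ℝ)))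
    (∑ γ : D.Ψ, (LinearMap.proj (R := ℝ) (φ := fun _ : D.Ψ => ℝ) γ).smulRight (D.A α γ))

lemma Op_inl (α h : E) : D.Op α (h, 0) = (0, -(D.b α h) • D.u α) := by
  simp [Op]

lemma Op_u (α : E) {γ : E} (hγ : γ ∈ D.Ψ) : D.Op α (0, D.u γ) = D.A α γ := by
  simp only [Op, LinearMap.coprod_apply, map_zero, zero_add, LinearMap.sum_apply,
    LinearMap.smulRight_apply, LinearMap.proj_apply]
  rw [Finset.sum_eq_single ⟨γ, hγ⟩]
  · simp [u]
  · intro δ _ hδ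
    have : (δ : E) ≠ γ := fun h => hδ (Subtype.ext h)
    simp [u, this]
  · simp

def H : E →ₗ[ℝ] ((E × (D.Ψ → ℝ)) →ₗ[ℝ] (E × (D.Ψ → ℝ))) where
  toFun h := (LinearMap.inr ℝ E (D.Ψ → ℝ)) ∘ₗ
    (LinearMap.pi fun γ : D.Ψ => (-(D.b h γ)) • LinearMap.proj γ) ∘ₗ (LinearMap.snd ℝ E (D.Ψ → ℝ))
  map_add' x y := by
    apply LinearMap.ext; rintro ⟨h, v⟩
    ext <;> simp [add_mul, add_comm]
  map_smul' c x := by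
    apply LinearMap.ext; rintro ⟨h, v⟩
    ext <;> simp [mul_assoc]

lemma H_inl (x h : E) : D.H x (h, 0) = 0 := by
  ext <;> simp [H]

lemma H_u (x : E) {γ : E} : D.H x (0, D.u γ) = (0, -(D.b x γ) • D.u γ) := by
  ext δ
  · simp [H]
  · by_cases h : (δ : E) = γ <;> simp [H, u, h]

lemma ext_op {f g : (E × (D.Ψ → ℝ)) →ₗ[ℝ] (E × (D.Ψ → ℝ))} (h1 : ∀ h, f (h, 0) = g (h, 0))
    (h2 : ∀ γ ∈ D.Ψ, f (0, D.u γ) = g (0, D.u γ)) : f = g := by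
  apply LinearMap.prod_ext
  · apply LinearMap.ext; intro h; exact h1 h
  · apply LinearMap.pi_ext'
    intro γ
    apply LinearMap.ext_ring
    have : (LinearMap.single ℝ (fun _ : D.Ψ => ℝ) γ) 1 = D.u γ := by
      funext δ
      by_cases h : δ = γ
      · subst h; simp [u]
      · have h' : (δ : E) ≠ γ := fun h1 => h (Subtype.ext h1)
        simp [u, h, h']
    simp only [LinearMap.comp_apply, this]
    exact h2 γ γ.2

/-- composite on a root vector, special case -/
lemma OpOp_neg (α β : E) (hβ : β ∈ D.Ψ) :
    D.Op α (D.Op β (0, D.u (-β))) = (0, D.b α β • D.u α) := by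
  rw [D.Op_u β (D.neg_mem β hβ), A, if_pos rfl, add_neg_cancel, D.u_zero D.zero_not_mem, smul_zero,
    Op_inl, map_neg, neg_neg]

lemma OpOp_gen (α β γ : E) (hβ : β ∈ D.Ψ) (hγ : γ ∈ D.Ψ) (h : γ ≠ -β) :
    D.Op α (D.Op β (0, D.u γ)) = if D.b β γ = -1 then D.ε β γ • D.A α (β + γ) else 0 := by
  rw [D.Op_u β hγ, A, if_neg h]
  have : ((0 : E), D.ε β γ • D.u (β + γ)) = D.ε β γ • ((0 : E), D.u (β + γ)) := by simp
  rw [this, map_smul]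
  split_ifs with h1
  · rw [D.Op_u α (D.add_mem β hβ γ hγ h1)]
  · rw [D.u_zero (fun h2 => h1 ((D.add_mem_iff hβ hγ).1 h2))]
    rw [show ((0 : E), (0 : D.Ψ → ℝ)) = 0 from rfl, map_zero, smul_zero]

lemma OpOp_inl (α β h : E) (hβ : β ∈ D.Ψ) :
    D.Op α (D.Op β (h, 0)) = -(D.b β h) • D.A α β := by
  rw [Op_inl]
  have : ((0 : E), -(D.b β h) • D.u β) = -(D.b β h) • ((0 : E), D.u β) := by simp
  rw [this, map_smul, D.Op_u α hβ]

end SLData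


namespace SLData
variable {E : Type*} [AddCommGroup E] [Module ℝ E] (D : SLData E)

lemma comm_H {α : E} (hα : α ∈ D.Ψ) :
    D.Op α ∘ₗ D.Op (-α) - D.Op (-α) ∘ₗ D.Op α = D.H α := by
  have hnα := D.neg_mem α hα
  have sα := D.mem_span hα
  apply D.ext_op
  · intro h
    rw [LinearMap.sub_apply, LinearMap.comp_apply, LinearMap.comp_apply, D.OpOp_inl _ _ _ hnα,
      D.OpOp_inl _ _ _ hα, H_inl]
    simp [A, D.u_zero D.zero_not_mem]
  · intro γ hγ
    have sγ := D.mem_span hγ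
    rw [LinearMap.sub_apply, LinearMap.comp_apply, LinearMap.comp_apply, H_u]
    by_cases h1 : γ = α
    · subst h1
      have e1 := D.OpOp_neg γ (-γ) hnα
      rw [neg_neg] at e1
      rw [e1, D.OpOp_gen _ _ _ hα hα (D.ne_neg_self hα)]
      simp [D.h2 γ hα]
      norm_num
    by_cases h2 : γ = -α
    · subst h2
      rw [D.OpOp_neg _ _ hα, D.OpOp_gen _ _ _ hnα hnα (D.ne_neg_self hnα)]
      simp [D.h2 α hα]
      norm_num
    · rw [D.OpOp_gen _ _ _ hnα hγ (by rwa [neg_neg]), D.OpOp_gen _ _ _ hα hγ h2]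
      have hε : D.ε α (α + γ) = - D.ε α γ := by
        rw [D.ε_add_right α sα γ sγ α sα, D.ε_self α hα]; ring
      have hε2 : D.ε α (-α + γ) = - D.ε α γ := by
        rw [D.ε_add_right (-α) (Submodule.neg_mem _ sα) γ sγ α sα, D.ε_neg_right α sα α sα,
          D.ε_self α hα]; ring
      have hε3 : D.ε (-α) γ = D.ε α γ := D.ε_neg_left α sα γ sγ
      have hε4 : D.ε (-α) (α + γ) = - D.ε α γ := by
        rw [D.ε_neg_left α sα _ (Submodule.add_mem _ sα sγ), hε]
      have hsq := D.ε_sq α γ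
      have hγ0 := D.ne_zero hγ
      rcases D.vals α hα γ hγ with h | h | h | h | h
      · exact absurd (D.eq_neg_of hα hγ h) h2
      · have h' : ¬ (α + γ = α) := by simpa using hγ0
        simp only [map_neg, LinearMap.neg_apply, h, A, neg_neg, if_neg h']
        norm_num
        simp [hε4, smul_smul, hsq]
      · simp [h, Prod.zero_eq_mk]
      · have h' : ¬ (-α + γ = -α) := by simpa using hγ0
        simp only [map_neg, LinearMap.neg_apply, h, A, neg_neg, if_neg h']
        norm_num
        simp [hε3, hε2, smul_smul, hsq]
      · exact absurd (D.eq_of_two α hα γ hγ h) h1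

lemma comm_zero {α β : E} (hα : α ∈ D.Ψ) (hβ : β ∈ D.Ψ) (hab : α + β ∉ D.Ψ) (hne : β ≠ -α) :
    D.Op α ∘ₗ D.Op β - D.Op β ∘ₗ D.Op α = 0 := by
  have sα := D.mem_span hα
  have sβ := D.mem_span hβ
  by_cases hE : β = α
  · subst hE; simp
  have hne' : α ≠ -β := fun h => hne (by rw [h, neg_neg])
  have hb : D.b α β = 0 ∨ D.b α β = 1 := by
    rcases D.vals α hα β hβ with h | h | h | h | h
    · exact absurd (D.eq_neg_of hα hβ h) hne
    · exact absurd (D.add_mem α hα β hβ h) hab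
    · exact Or.inl h
    · exact Or.inr h
    · exact absurd (D.eq_of_two α hα β hβ h) hE
  have special : ∀ α β : E, α ∈ D.Ψ → β ∈ D.Ψ → β ≠ α → (D.b α β = 0 ∨ D.b α β = 1) →
      D.Op α (D.Op β (0, D.u (-β))) - D.Op β (D.Op α (0, D.u (-β))) = 0 := by
    intro α β hα hβ hE hb
    have sα := D.mem_span hα
    have sβ := D.mem_span hβ
    have h1 : -β ≠ -α := fun h => hE (neg_injective h)
    rw [D.OpOp_neg α β hβ, D.OpOp_gen β α (-β) hα (D.neg_mem β hβ) h1]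
    rcases hb with hb | hb
    · simp [hb]
    · have h2 : ¬ (α + -β = -β) := by simpa using D.ne_zero hα
      simp only [map_neg, hb, if_true, A, if_neg h2]
      rw [D.ε_add_right α sα (-β) (Submodule.neg_mem _ sβ) β sβ, D.ε_neg_right α sα β sβ,
        D.ε_neg_right β sβ β sβ, D.ε_self β hβ, D.ε_anti α hα β hβ (Or.inl hb)]
      have hsq := D.ε_sq α β
      simp [smul_smul, hsq]
  apply D.ext_op
  · intro h
    rw [LinearMap.sub_apply, LinearMap.comp_apply, LinearMap.comp_apply, D.OpOp_inl _ _ _ hβ,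
      D.OpOp_inl _ _ _ hα]
    have hba : β + α ∉ D.Ψ := by rwa [add_comm]
    simp [A, hne, hne', D.u_zero hab, D.u_zero hba]
  · intro γ hγ
    have sγ := D.mem_span hγ
    rw [LinearMap.sub_apply, LinearMap.comp_apply, LinearMap.comp_apply, LinearMap.zero_apply]
    by_cases h1 : γ = -β
    · subst h1
      exact special α β hα hβ hE hb
    by_cases h2 : γ = -α
    · subst h2
      have := special β α hβ hα (Ne.symm hE) (by rwa [D.symm])
      rw [← neg_eq_zero, neg_sub]
      exact this
    rw [D.OpOp_gen _ _ _ hβ hγ h1, D.OpOp_gen _ _ _ hα hγ h2]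
    have h3 : ¬ (β + γ = -α) := by
      intro h
      apply hab
      have h4 : α + β = -γ := by
        have : γ = -α - β := by rw [← h]; abel
        rw [this]; abel
      rw [h4]; exact D.neg_mem γ hγ
    have h4 : ¬ (α + γ = -β) := by
      intro h
      apply h3
      have : γ = -β - α := by rw [← h]; abel
      rw [this]; abel
    simp only [A, if_neg h3, if_neg h4]
    have hadd : β + (α + γ) = α + (β + γ) := by abel
    rw [hadd]
    by_cases hm : α + (β + γ) ∈ D.Ψ
    · have hs := D.h2 _ hm
      simp only [map_add, LinearMap.add_apply, D.h2 α hα, D.h2 β hβ, D.h2 γ hγ, D.symm β α,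
        D.symm γ α, D.symm γ β] at hs
      have hp : D.b α γ = -1 ∧ D.b β γ = -1 ∧ D.b α β = 0 := by
        rcases D.vals α hα γ hγ with h | h | h | h | h
        · exact absurd (D.eq_neg_of hα hγ h) h2
        all_goals
          rcases D.vals β hβ γ hγ with h' | h' | h' | h' | h'
          · exact absurd (D.eq_neg_of hβ hγ h') h1
          all_goals
            rcases hb with hb | hb <;> rw [h, h', hb] at hs <;> norm_num at hs <;> exact ⟨h, h', hb⟩
      obtain ⟨p1, p2, p3⟩ := hp
      rw [if_pos p1, if_pos p2, D.ε_add_right β sβ γ sγ α sα, D.ε_add_right α sα γ sγ β sβ,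
        D.ε_comm α hα β hβ p3, sub_eq_zero]
      ext
      · simp
      · simp; ring
    · simp [D.u_zero hm, ← Prod.zero_eq_mk]

lemma comm_add {α β : E} (hα : α ∈ D.Ψ) (hβ : β ∈ D.Ψ) (hab : α + β ∈ D.Ψ) :
    D.Op α ∘ₗ D.Op β - D.Op β ∘ₗ D.Op α = D.ε α β • D.Op (α + β) := by
  have sα := D.mem_span hα
  have sβ := D.mem_span hβ
  have sab := D.mem_span hab
  have hb := (D.add_mem_iff hα hβ).1 hab
  have hanti := D.ε_anti α hα β hβ (Or.inr hb)
  have hsq := D.ε_sq α β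
  have hne : β ≠ -α := by
    rintro rfl
    rw [add_neg_cancel] at hab
    exact D.zero_not_mem hab
  have hne' : α ≠ -β := fun h => hne (by rw [h, neg_neg])
  have hE : β ≠ α := by
    rintro rfl
    rw [D.h2 β hβ] at hb; norm_num at hb
  apply D.ext_op
  · intro h
    rw [LinearMap.sub_apply, LinearMap.comp_apply, LinearMap.comp_apply, D.OpOp_inl _ _ _ hβ,
      D.OpOp_inl _ _ _ hα, LinearMap.smul_apply, Op_inl]
    simp only [A, if_neg hne, if_neg hne', hanti, add_comm β α, map_add, LinearMap.add_apply]
    ext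
    · simp
    · simp; ring
  · intro γ hγ
    have sγ := D.mem_span hγ
    rw [LinearMap.sub_apply, LinearMap.comp_apply, LinearMap.comp_apply, LinearMap.smul_apply,
      D.Op_u (α + β) hγ]
    by_cases h1 : γ = -β
    · subst h1
      have h2 : -β ≠ -α := fun h => hE (neg_injective h)
      rw [D.OpOp_neg α β hβ, D.OpOp_gen β α (-β) hα (D.neg_mem β hβ) h2]
      have h3 : ¬ (-β = -(α + β)) := by simpa using D.ne_zero hα
      simp only [map_neg, hb, A, if_neg h3]
      rw [D.ε_neg_right _ sab β sβ, D.ε_add_left α sα β sβ β sβ, D.ε_self β hβ]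
      norm_num
      simp [smul_smul, hsq]
    by_cases h2 : γ = -α
    · subst h2
      have h2 : -α ≠ -β := fun h => hE (neg_injective h).symm
      rw [D.OpOp_neg β α hα, D.OpOp_gen α β (-α) hβ (D.neg_mem α hα) h2]
      have h3 : ¬ (-α = -(α + β)) := by simpa using D.ne_zero hβ
      simp only [map_neg, D.symm β α, hb, A, if_neg h3]
      rw [D.ε_neg_right _ sab α sα, D.ε_add_left α sα β sβ α sα, D.ε_self α hα, hanti]
      norm_num
      simp [smul_smul, hsq]
    rw [D.OpOp_gen _ _ _ hβ hγ h1, D.OpOp_gen _ _ _ hα hγ h2]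
    by_cases h5 : γ = -(α + β)
    · subst h5
      have q1 : D.b β (-(α + β)) = -1 := by
        rw [map_neg, map_add, D.symm β α, hb, D.h2 β hβ]; norm_num
      have q2 : D.b α (-(α + β)) = -1 := by
        rw [map_neg, map_add, hb, D.h2 α hα]; norm_num
      rw [if_pos q1, if_pos q2]
      have r1 : β + -(α + β) = -α := by abel
      have r2 : α + -(α + β) = -β := by abel
      have r3 : α + -α = 0 := by abel
      have r4 : β + -β = 0 := by abel
      have r5 : α + β + -(α + β) = 0 := by abel
      simp only [A, r1, r2, if_true, r3, r4, r5, D.u_zero D.zero_not_mem]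
      rw [D.ε_neg_right _ sβ _ sab, D.ε_neg_right _ sα _ sab, D.ε_add_right α sα β sβ α sα,
        D.ε_add_right α sα β sβ β sβ, D.ε_self α hα, D.ε_self β hβ, hanti]
      ext
      · simp; abel
      · simp
    have h3 : ¬ (β + γ = -α) := by
      intro h
      apply h5
      have : γ = -α - β := by rw [← h]; abel
      rw [this]; abel
    have h4 : ¬ (α + γ = -β) := by
      intro h
      apply h3
      have : γ = -β - α := by rw [← h]; abel
      rw [this]; abel
    have hadd : β + (α + γ) = α + (β + γ) := by abel
    have hadd' : α + β + γ = α + (β + γ) := by abel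
    simp only [A, if_neg h3, if_neg h4, if_neg h5, hadd, hadd']
    by_cases hm : α + (β + γ) ∈ D.Ψ
    · have hs := D.h2 _ hm
      simp only [map_add, LinearMap.add_apply, D.h2 α hα, D.h2 β hβ, D.h2 γ hγ, D.symm β α,
        D.symm γ α, D.symm γ β, hb] at hs
      rw [D.ε_add_right β sβ γ sγ α sα, D.ε_add_right α sα γ sγ β sβ, D.ε_add_left α sα β sβ γ sγ,
        hanti]
      have hp : (D.b α γ = -1 ∧ D.b β γ = 0) ∨ (D.b α γ = 0 ∧ D.b β γ = -1) := by
        rcases D.vals α hα γ hγ with h | h | h | h | h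
        · exact absurd (D.eq_neg_of hα hγ h) h2
        all_goals
          rcases D.vals β hβ γ hγ with h' | h' | h' | h' | h'
          · exact absurd (D.eq_neg_of hβ hγ h') h1
          all_goals
            rw [h, h'] at hs; norm_num at hs <;> simp [h, h']
      rcases hp with ⟨p1, p2⟩ | ⟨p1, p2⟩
      · rw [p1, p2]
        norm_num
        ext
        · simp; ring
      · rw [p1, p2]
        norm_num
        ext
        · simp; ring
    · simp [D.u_zero hm, ← Prod.zero_eq_mk]

end SLData


lemma key_lemma_end {P J M : Type*} [Fintype P] [Fintype J] [AddCommGroup M] [Module ℝ M]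
    (v : Module.Basis J ℝ M) (e f : P → (M →ₗ[ℝ] M))
    (S : Submodule ℝ (M →ₗ[ℝ] M)) (hS : ∀ a b, e a ∘ₗ f b - f b ∘ₗ e a ∈ S)
    (c : P → ℝ) (hc : ∀ a, c a ≠ 0)
    (htr : ∀ a b, ∑ j, v.repr (e a (f b (v j))) j = if a = b then c a else 0)
    (deg : J → ℝ) (hdeg : ∀ a i j, v.repr (e a (v j)) i ≠ 0 → deg j + 1 ≤ deg i) :
    Fintype.card P ≤ Module.finrank ℝ S := by
  let φ := LinearMap.toMatrix v v
  have h := key_lemma (fun a => φ (e a)) (fun a => φ (f a)) (S.map φ.toLinearMap) ?_ c hc ?_ deg ?_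
  · rwa [LinearEquiv.finrank_map_eq] at h
  · intro a b
    refine ⟨_, hS a b, ?_⟩
    simp only [φ]
    change LinearMap.toMatrix v v _ = _
    rw [map_sub, LinearMap.toMatrix_comp v v v, LinearMap.toMatrix_comp v v v]
  · intro a b
    simp only [φ]
    rw [← LinearMap.toMatrix_comp v v v, ← htr a b, Matrix.trace]
    refine Finset.sum_congr rfl fun j _ => ?_
    rw [Matrix.diag_apply, LinearMap.toMatrix_apply]; rfl
  · intro a i j
    simp only [φ]
    rw [LinearMap.toMatrix_apply]
    exact hdeg a i j

namespace SLData
variable {E : Type*} [AddCommGroup E] [Module ℝ E] [FiniteDimensional ℝ E] (D : SLData E)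
  {T : Type*} [AddCommGroup T] [Module ℝ T]

theorem count (L : E →ₗ[ℝ] T) (κ : T) (hκ : κ ≠ 0) :
    (D.Ψ.filter (fun α => L α = κ)).card ≤
      (D.Ψ.filter (fun α => L α = 0)).card +
        Module.finrank ℝ (Submodule.span ℝ (D.Ψ : Set E)) := by
  obtain ⟨g, hg⟩ : ∃ g : T →ₗ[ℝ] ℝ, g κ = 1 := by
    have h0 : ¬ ∀ g : Module.Dual ℝ T, g κ = 0 := by
      rw [Module.forall_dual_apply_eq_zero_iff]; exact hκ
    push Not at h0
    obtain ⟨g, hg⟩ := h0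
    exact ⟨(g κ)⁻¹ • g, by simp [hg]⟩
  set P := D.Ψ.filter (fun α => L α = κ) with hP
  set Z := D.Ψ.filter (fun α => L α = 0) with hZ
  let bE := Module.finBasis ℝ E
  let v := bE.prod (Pi.basisFun ℝ D.Ψ)
  have hPm : ∀ a : P, (a : E) ∈ D.Ψ := fun a => (Finset.mem_filter.1 a.2).1
  have hPL : ∀ a : P, L a = κ := fun a => (Finset.mem_filter.1 a.2).2
  let S : Submodule ℝ ((E × (D.Ψ → ℝ)) →ₗ[ℝ] (E × (D.Ψ → ℝ))) :=
    (Submodule.span ℝ (D.Ψ : Set E)).map D.H ⊔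
      Submodule.span ℝ ((Z.image D.Op : Finset _) : Set ((E × (D.Ψ → ℝ)) →ₗ[ℝ] (E × (D.Ψ → ℝ))))
  have hvl : ∀ i, v (Sum.inl i) = (bE i, 0) := by intro i; simp [v]
  have hvr : ∀ γ : D.Ψ, v (Sum.inr γ) = (0, D.u γ) := by
    intro γ
    simp only [v, Module.Basis.prod_apply, Sum.elim_inr, Function.comp_apply, LinearMap.inr_apply,
      Pi.basisFun_apply]
    congr 1
    funext δ
    by_cases h : δ = γ
    · subst h; simp [u]
    · have h' : (δ : E) ≠ γ := fun h1 => h (Subtype.ext h1)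
      simp [u, h, h']
  have hrl : ∀ (x : E × (D.Ψ → ℝ)) i, v.repr x (Sum.inl i) = bE.repr x.1 i := by
    intro x i; simp [v]
  have hrr : ∀ (x : E × (D.Ψ → ℝ)) γ, v.repr x (Sum.inr γ) = x.2 γ := by
    intro x i; simp [v]
  have hcard := key_lemma_end v (fun a : P => D.Op a) (fun a : P => D.Op (-a)) S ?_
    (fun a : P => ∑ j, v.repr (D.Op a (D.Op (-a) (v j))) j) ?_ ?_
    (Sum.elim (fun _ => 0) (fun γ => g (L γ))) ?_
  · rw [Fintype.card_coe] at hcard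
    refine hcard.trans ?_
    refine (Submodule.finrank_add_le_finrank_add_finrank _ _).trans ?_
    rw [add_comm]
    refine add_le_add ?_ ?_
    · exact (finrank_span_finset_le_card _).trans Finset.card_image_le
    · exact Submodule.finrank_map_le _ _
  · intro a b
    by_cases hab : a = b
    · subst hab
      rw [D.comm_H (hPm a)]
      exact Submodule.mem_sup_left ⟨_, Submodule.subset_span (hPm a), rfl⟩
    · by_cases hm : (a : E) + -b ∈ D.Ψ
      · rw [D.comm_add (hPm a) (D.neg_mem _ (hPm b)) hm]
        apply Submodule.mem_sup_right
        apply Submodule.smul_mem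
        apply Submodule.subset_span
        rw [Finset.mem_coe]
        apply Finset.mem_image_of_mem
        rw [hZ, Finset.mem_filter]
        exact ⟨hm, by rw [map_add, map_neg, hPL, hPL, add_neg_cancel]⟩
      · rw [D.comm_zero (hPm a) (D.neg_mem _ (hPm b)) hm]
        · exact Submodule.zero_mem _
        · intro h
          exact hab (Subtype.ext (neg_injective h)).symm
  · intro a
    apply ne_of_lt
    have ha := hPm a
    have hna := D.neg_mem _ ha
    have sα := D.mem_span ha
    rw [Fintype.sum_sum_type]
    have h1 : ∑ i, v.repr (D.Op a (D.Op (-a) (v (Sum.inl i)))) (Sum.inl i) = -2 := by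
      have : ∀ i, v.repr (D.Op a (D.Op (-a) (v (Sum.inl i)))) (Sum.inl i) =
          - (bE.repr (a : E) i * D.b a (bE i)) := by
        intro i
        rw [hvl, hrl, D.OpOp_inl _ _ _ hna]
        simp [A]; ring
      rw [Finset.sum_congr rfl fun i _ => this i, Finset.sum_neg_distrib]
      have h2 : D.b (a : E) a = ∑ i, bE.repr (a : E) i * D.b a (bE i) := by
        calc D.b (a : E) a = D.b a (∑ i, bE.repr (a : E) i • bE i) := by rw [bE.sum_repr]
          _ = _ := by simp only [map_sum, map_smul, smul_eq_mul]
      rw [← h2, D.h2 _ ha]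
    have h2 : ∑ γ, v.repr (D.Op a (D.Op (-a) (v (Sum.inr γ)))) (Sum.inr γ) ≤ 0 := by
      apply Finset.sum_nonpos
      intro γ _
      rw [hvr, hrr]
      by_cases h : (γ : E) = a
      · have := D.OpOp_neg a (-a) hna
        rw [neg_neg] at this
        rw [h, this]
        simp [D.h2 _ ha, u, h]
      · rw [D.OpOp_gen _ _ _ hna γ.2 (by rwa [neg_neg])]
        split_ifs with h3
        · have e : (a : E) + (-a + γ) = γ := by abel
          have sγ := D.mem_span γ.2
          have : D.ε a (-a + γ) = - D.ε a γ := by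
            rw [D.ε_add_right (-a) (Submodule.neg_mem _ sα) γ sγ a sα, D.ε_neg_right a sα a sα,
              D.ε_self a ha]; ring
          simp only [A, e, Prod.smul_mk, Pi.smul_apply, smul_eq_mul, this, u, if_true,
            D.ε_neg_left a sα γ sγ]
          have := D.ε_sq a γ
          linarith
        · simp
    linarith
  · intro a b
    by_cases hab : a = b
    · subst hab; simp
    rw [if_neg hab]
    apply Finset.sum_eq_zero
    have hne : (a : E) ≠ b := fun h => hab (Subtype.ext h)
    have ha := hPm a
    have hnb := D.neg_mem _ (hPm b)
    intro j _
    rcases j with i | γ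
    · rw [hvl, hrl, D.OpOp_inl _ _ _ hnb]
      simp [A, hne.symm]
    · rw [hvr, hrr]
      by_cases h : (γ : E) = b
      · have := D.OpOp_neg a (-b) hnb
        rw [neg_neg] at this
        rw [h, this]
        simp [u, h, hne.symm]
      · rw [D.OpOp_gen _ _ _ hnb γ.2 (by rwa [neg_neg])]
        split_ifs with h3
        · have e : ¬ ((γ : E) = a + (-b + γ)) := by
            intro h
            apply hne
            have : (a : E) + (-b + γ) - γ = 0 := by rw [← h, sub_self]
            have e2 : (a : E) + (-b + γ) - γ = a - b := by abel
            rw [e2] at this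
            exact sub_eq_zero.1 this
          simp [A, u, e]
        · simp
  · intro a i j hij
    rcases j with j | γ
    · rw [hvl, D.Op_inl] at hij
      rcases i with i | δ
      · rw [hrl] at hij; simp at hij
      · rw [hrr] at hij
        have : (δ : E) = a := by
          by_contra h; simp [u, h] at hij
        simp [this, hPL, hg]
    · rw [hvr, D.Op_u _ γ.2] at hij
      rcases i with i | δ
      · rw [hrl] at hij
        have : (γ : E) = -a := by
          by_contra h; simp [A, h] at hij
        simp [this, hPL, hg]
      · rw [hrr] at hij
        have : (δ : E) = a + γ := by
          by_contra h; simp [A, u, h] at hij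
        simp [this, hPL, hg, add_comm]

end SLData


/-- A reduced crystallographic root system in a euclidean space. -/
structure IsRS {E : Type*} [NormedAddCommGroup E] [InnerProductSpace ℝ E] (Φ : Finset E) :
    Prop where
  ne0 : (0 : E) ∉ Φ
  refl : ∀ α ∈ Φ, ∀ β ∈ Φ, ∃ z : ℤ, 2 * inner ℝ α β = z * inner ℝ α α ∧ β - (z : ℝ) • α ∈ Φ
  red : ∀ α ∈ Φ, ∀ c : ℝ, c • α ∈ Φ → c = 1 ∨ c = -1

namespace IsRS
variable {E : Type*} [NormedAddCommGroup E] [InnerProductSpace ℝ E] {Φ : Finset E}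

lemma pos (h : IsRS Φ) {α : E} (hα : α ∈ Φ) : 0 < inner ℝ α α := by
  have : α ≠ 0 := by rintro rfl; exact h.ne0 hα
  exact real_inner_self_pos.2 this

lemma refl_mem (h : IsRS Φ) {α β : E} (hα : α ∈ Φ) (hβ : β ∈ Φ) (c : ℝ)
    (hc : 2 * inner ℝ α β = c * inner ℝ α α) : β - c • α ∈ Φ := by
  obtain ⟨z, hz, hm⟩ := h.refl α hα β hβ
  have := h.pos hα
  have e : c = z := by
    have : c * inner ℝ α α = z * inner ℝ α α := by rw [← hc, hz]
    exact mul_right_cancel₀ (h.pos hα).ne' this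
  rwa [e]

lemma neg_mem (h : IsRS Φ) {α : E} (hα : α ∈ Φ) : -α ∈ Φ := by
  have := h.refl_mem hα hα 2 rfl
  have e : α - (2 : ℝ) • α = -α := by rw [two_smul]; abel
  rwa [e] at this

lemma sub_mem (h : IsRS Φ) {α β : E} (hα : α ∈ Φ) (hβ : β ∈ Φ)
    (hc : 2 * inner ℝ α β = inner ℝ α α) : β - α ∈ Φ := by
  have := h.refl_mem hα hβ 1 (by rw [hc, one_mul])
  rwa [one_smul] at this

lemma add_mem (h : IsRS Φ) {α β : E} (hα : α ∈ Φ) (hβ : β ∈ Φ)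
    (hc : 2 * inner ℝ α β = - inner ℝ α α) : β + α ∈ Φ := by
  have := h.refl_mem hα hβ (-1) (by rw [hc]; ring)
  rwa [neg_smul, one_smul, sub_neg_eq_add] at this

lemma sub' (h : IsRS Φ) {S : Finset E} (hS : S ⊆ Φ)
    (hst : ∀ α ∈ S, ∀ β ∈ S, ∀ z : ℤ, 2 * inner ℝ α β = z * inner ℝ α α →
      β - (z : ℝ) • α ∈ Φ → β - (z : ℝ) • α ∈ S) : IsRS S where
  ne0 := fun h0 => h.ne0 (hS h0)
  refl := by
    intro α hα β hβ
    obtain ⟨z, hz, hm⟩ := h.refl α (hS hα) β (hS hβ)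
    exact ⟨z, hz, hst α hα β hβ z hz hm⟩
  red := fun α hα c hc => h.red α (hS hα) c (hS hc)

lemma inner_refl_refl {α β : E} {c : ℝ} (hc : 2 * inner ℝ α β = c * inner ℝ α α) :
    inner ℝ (β - c • α) (β - c • α) = inner ℝ β β := by
  rw [inner_sub_left, inner_sub_right, inner_sub_right, real_inner_smul_left,
    real_inner_smul_right, real_inner_smul_right, real_inner_smul_left, real_inner_comm α β]
  linear_combination (-c) * hc

lemma vals (h : IsRS Φ) {α β : E} (hα : α ∈ Φ) (hβ : β ∈ Φ)
    (hn : inner ℝ α α = inner ℝ β β) :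
    (β = α) ∨ 2 * inner ℝ α β = inner ℝ α α ∨ inner ℝ α β = 0 ∨
      2 * inner ℝ α β = - inner ℝ α α ∨ (β = -α) := by
  obtain ⟨z, hz, -⟩ := h.refl α hα β hβ
  have hp := h.pos hα
  have hs1 : inner ℝ (α - β) (α - β) = 2 * inner ℝ α α - 2 * inner ℝ α β := by
    rw [inner_sub_left, inner_sub_right, inner_sub_right, ← hn, real_inner_comm α β]; ring
  have hs2 : inner ℝ (α + β) (α + β) = 2 * inner ℝ α α + 2 * inner ℝ α β := by
    rw [inner_add_left, inner_add_right, inner_add_right, ← hn, real_inner_comm α β]; ring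
  have h1 : 0 ≤ inner ℝ (α - β) (α - β) := real_inner_self_nonneg
  have h2 : 0 ≤ inner ℝ (α + β) (α + β) := real_inner_self_nonneg
  rw [hs1, hz] at h1
  rw [hs2, hz] at h2
  have z1 : z ≤ 2 := by
    by_contra hc
    have : (3 : ℝ) ≤ z := by exact_mod_cast (by omega : 3 ≤ z)
    nlinarith
  have z2 : -2 ≤ z := by
    by_contra hc
    have : (z : ℝ) ≤ -3 := by exact_mod_cast (by omega : z ≤ -3)
    nlinarith
  rcases (by omega : z = 2 ∨ z = 1 ∨ z = 0 ∨ z = -1 ∨ z = -2) with rfl | rfl | rfl | rfl | rfl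
  · left
    rw [hz] at hs1
    push_cast at hs1
    rw [sub_self, inner_self_eq_zero, sub_eq_zero] at hs1
    exact hs1.symm
  · right; left; simpa using hz
  · right; right; left; simpa using hz
  · right; right; right; left; simpa using hz
  · right; right; right; right
    rw [hz] at hs2
    push_cast at hs2
    rw [neg_mul, add_neg_cancel, inner_self_eq_zero] at hs2
    exact eq_neg_of_add_eq_zero_right hs2

theorem SL_count [FiniteDimensional ℝ E] (h : IsRS Φ) (N : ℝ) (hN : ∀ α ∈ Φ, inner ℝ α α = N)
    {T : Type*} [AddCommGroup T] [Module ℝ T] (L : E →ₗ[ℝ] T) (κ : T) (hκ : κ ≠ 0) :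
    (Φ.filter (fun α => L α = κ)).card ≤
      (Φ.filter (fun α => L α = 0)).card + Module.finrank ℝ (Submodule.span ℝ (Φ : Set E)) := by
  by_cases hne : Φ = ∅
  · subst hne; simp
  obtain ⟨α0, hα0⟩ := Finset.nonempty_iff_ne_empty.2 hne
  have hNpos : 0 < N := hN α0 hα0 ▸ h.pos hα0
  let b : E →ₗ[ℝ] E →ₗ[ℝ] ℝ := (2 / N) • innerₗ E
  have hb : ∀ x y, b x y = 2 / N * inner ℝ x y := by intro x y; simp [b]
  have hvals : ∀ α ∈ Φ, ∀ β ∈ Φ, (β = α ∧ b α β = 2) ∨ b α β = 1 ∨ b α β = 0 ∨ b α β = -1 ∨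
      (β = - α ∧ b α β = -2) := by
    intro α hα β hβ
    have e := hN α hα
    rcases h.vals hα hβ (by rw [hN α hα, hN β hβ]) with h1 | h1 | h1 | h1 | h1
    · left; refine ⟨h1, ?_⟩; rw [h1, hb, e]; field_simp
    · right; left; rw [hb]; rw [e] at h1; field_simp; linarith
    · right; right; left; rw [hb, h1]; simp
    · right; right; right; left; rw [hb]; rw [e] at h1; field_simp; linarith
    · right; right; right; right; refine ⟨h1, ?_⟩; rw [h1, hb, inner_neg_right, e]; field_simp
  have hsymm : ∀ x y, b x y = b y x := by intro x y; rw [hb, hb, real_inner_comm]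
  have h22 : ∀ α ∈ Φ, b α α = 2 := by intro α hα; rw [hb, hN α hα]; field_simp
  obtain ⟨B, hB1, hB2, hB3⟩ := exists_cocycle Φ b hsymm (by
    intro α hα β hβ
    rcases hvals α hα β hβ with ⟨-, h1⟩ | h1 | h1 | h1 | ⟨-, h1⟩
    · exact ⟨2, by simp [h1]⟩
    · exact ⟨1, by simp [h1]⟩
    · exact ⟨0, by simp [h1]⟩
    · exact ⟨-1, by simp [h1]⟩
    · exact ⟨-2, by simp [h1]⟩) h22
  have hs : ∀ α ∈ Φ, α ∈ Submodule.span ℤ (Φ : Set E) := fun α hα => Submodule.subset_span hα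
  have hB1n : ∀ x ∈ Submodule.span ℤ (Φ : Set E), ∀ y ∈ Submodule.span ℤ (Φ : Set E),
      B (-x) y = - B x y := by
    intro x hx y hy
    have h0 := hB1 0 (Submodule.zero_mem _) 0 (Submodule.zero_mem _) y hy
    have h1 := hB1 x hx (-x) (Submodule.neg_mem _ hx) y hy
    rw [add_neg_cancel] at h1
    rw [add_zero] at h0
    omega
  have hB2n : ∀ x ∈ Submodule.span ℤ (Φ : Set E), ∀ y ∈ Submodule.span ℤ (Φ : Set E),
      B x (-y) = - B x y := by
    intro x hx y hy
    have h0 := hB2 0 (Submodule.zero_mem _) 0 (Submodule.zero_mem _) x hx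
    have h1 := hB2 y hy (-y) (Submodule.neg_mem _ hy) x hx
    rw [add_neg_cancel] at h1
    rw [add_zero] at h0
    omega
  have m1 : (-1 : ℝ) ≠ 0 := by norm_num
  have hsq : ∀ z : ℤ, (-1 : ℝ) ^ z * (-1 : ℝ) ^ z = 1 := by
    intro z; rw [← mul_zpow]; norm_num
  have hBself : ∀ α ∈ Φ, B α α = 1 := by
    intro α hα
    have := hB3 α (hs α hα) α (hs α hα)
    rw [h22 α hα] at this
    have h3 : B α α + B α α = 2 := by exact_mod_cast this
    omega
  have hBs : ∀ α ∈ Φ, ∀ β ∈ Φ, ∀ z : ℤ, b α β = z → B β α = z - B α β := by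
    intro α hα β hβ z hz
    have := hB3 α (hs α hα) β (hs β hβ)
    rw [hz] at this
    have h3 : B α β + B β α = z := by exact_mod_cast this
    omega
  let D : SLData E :=
    { Ψ := Φ
      b := b
      symm := hsymm
      h2 := h22
      vals := by
        intro α hα β hβ
        rcases hvals α hα β hβ with ⟨-, h1⟩ | h1 | h1 | h1 | ⟨-, h1⟩ <;> simp [h1]
      add_mem := by
        intro α hα β hβ hab
        rw [add_comm]
        apply h.add_mem hα hβ
        rw [hN α hα]
        rw [hb] at hab
        field_simp at hab
        linarith
      neg_mem := fun α hα => h.neg_mem hα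
      eq_of_two := by
        intro α hα β hβ hab
        rcases hvals α hα β hβ with ⟨h1, -⟩ | h1 | h1 | h1 | ⟨-, h1⟩
        · exact h1
        all_goals (rw [h1] at hab; norm_num at hab)
      ε := fun x y => (-1 : ℝ) ^ (B x y)
      ε_add_left := by
        intro x hx y hy z hz
        rw [hB1 x hx y hy z hz, zpow_add₀ m1]
      ε_add_right := by
        intro x hx y hy z hz
        rw [hB2 x hx y hy z hz, zpow_add₀ m1]
      ε_neg_left := by
        intro x hx y hy
        rw [hB1n x hx y hy, zpow_neg]
        exact inv_eq_of_mul_eq_one_left (hsq _)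
      ε_neg_right := by
        intro x hx y hy
        rw [hB2n x hx y hy, zpow_neg]
        exact inv_eq_of_mul_eq_one_left (hsq _)
      ε_sq := fun x y => hsq _
      ε_self := by
        intro α hα
        simp only [hBself α hα, zpow_one]
      ε_comm := by
        intro α hα β hβ hab
        rw [hBs α hα β hβ 0 (by simpa using hab), zero_sub, zpow_neg]
        exact inv_eq_of_mul_eq_one_left (hsq _)
      ε_anti := by
        intro α hα β hβ hab
        have hh : ((-1 : ℝ) ^ (B α β))⁻¹ = (-1) ^ B α β :=
          inv_eq_of_mul_eq_one_left (hsq _)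
        rcases hab with hab | hab
        · rw [hBs α hα β hβ 1 (by simpa using hab), zpow_sub₀ m1, div_eq_mul_inv, hh, zpow_one]
          ring
        · rw [hBs α hα β hβ (-1) (by simpa using hab), zpow_sub₀ m1, div_eq_mul_inv, hh]
          norm_num }
  exact D.count L κ hκ

end IsRS


/-- irreducibility: no nontrivial orthogonal decomposition -/
def Irr {E : Type*} [NormedAddCommGroup E] [InnerProductSpace ℝ E] (Φ : Finset E) : Prop :=
  ∀ S ⊆ Φ, S.Nonempty → (∀ α ∈ S, ∀ β ∈ Φ, β ∉ S → inner ℝ α β = 0) → S = Φ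

/-- a predicate on roots stable under all reflections -/
def Stab {E : Type*} [NormedAddCommGroup E] [InnerProductSpace ℝ E] (Φ : Finset E)
    (p : E → Prop) : Prop :=
  ∀ α ∈ Φ, ∀ β ∈ Φ, ∀ c : ℝ, 2 * inner ℝ α β = c * inner ℝ α α → p β → p (β - c • α)

namespace IsRS
variable {E : Type*} [NormedAddCommGroup E] [InnerProductSpace ℝ E] {Φ : Finset E}

lemma TR (h : IsRS Φ) (hi : Irr Φ) {p : E → Prop} (hp : Stab Φ p) {α0 : E} (h0 : α0 ∈ Φ)
    (hp0 : p α0) {β : E} (hβ : β ∈ Φ) : ∃ α ∈ Φ, p α ∧ inner ℝ α β ≠ 0 := by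
  have hS := hi (Φ.filter (fun β => ∃ α ∈ Φ, p α ∧ inner ℝ α β ≠ 0)) (Finset.filter_subset _ _)
    ⟨α0, Finset.mem_filter.2 ⟨h0, α0, h0, hp0, (h.pos h0).ne'⟩⟩ ?_
  · rw [← hS] at hβ
    exact (Finset.mem_filter.1 hβ).2
  · intro γ hγ δ hδ hn
    obtain ⟨hγ, α, hα, hpα, hne⟩ := Finset.mem_filter.1 hγ
    by_contra hγδ
    apply hn
    refine Finset.mem_filter.2 ⟨hδ, ?_⟩
    by_cases hαδ : inner ℝ α δ = 0
    · obtain ⟨z, hz, hm⟩ := h.refl γ hγ α hα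
      refine ⟨_, hm, hp γ hγ α hα z hz hpα, ?_⟩
      rw [inner_sub_left, real_inner_smul_left, hαδ, zero_sub, neg_ne_zero]
      refine mul_ne_zero ?_ hγδ
      intro hz0
      rw [hz0, zero_mul, real_inner_comm] at hz
      apply hne
      linarith
    · exact ⟨α, hα, hpα, hαδ⟩

lemma stab_norm {p : E → Prop} (hp : Stab Φ p) (N : ℝ) :
    Stab Φ (fun x => p x ∧ inner ℝ x x = N) := by
  intro α hα β hβ c hc h1
  exact ⟨hp α hα β hβ c hc h1.1, by rw [inner_refl_refl hc]; exact h1.2⟩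

lemma TRn (h : IsRS Φ) (hi : Irr Φ) {α β : E} (hα : α ∈ Φ) (hβ : β ∈ Φ) :
    ∃ β' ∈ Φ, inner ℝ β' β' = inner ℝ β β ∧ 0 < inner ℝ β' α := by
  have hp : Stab Φ (fun _ => True) := by intro _ _ _ _ _ _ _; trivial
  obtain ⟨γ, hγ, ⟨-, h1⟩, h2⟩ := h.TR hi (stab_norm hp (inner ℝ β β)) hβ ⟨trivial, rfl⟩ hα
  rcases lt_or_gt_of_ne h2 with h3 | h3
  · exact ⟨-γ, h.neg_mem hγ, by rw [inner_neg_neg, h1], by rw [inner_neg_left]; linarith⟩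
  · exact ⟨γ, hγ, h1, h3⟩

lemma conj (h : IsRS Φ) (hi : Irr Φ) {p : E → Prop} (hp : Stab Φ p) {α β : E} (hα : α ∈ Φ)
    (hpα : p α) (hβ : β ∈ Φ) (hn : inner ℝ β β = inner ℝ α α) : p β := by
  obtain ⟨γ, hγ, ⟨h1, h2⟩, h3⟩ := h.TR hi (stab_norm hp (inner ℝ β β)) hα ⟨hpα, hn.symm⟩ hβ
  rcases h.vals hγ hβ h2 with h4 | h4 | h4 | h4 | h4
  · rwa [h4]
  · have a1 := hp β hβ γ hγ 1 (by rw [real_inner_comm, h4, h2, one_mul]) h1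
    have m1 := h.refl_mem hβ hγ 1 (by rw [real_inner_comm, h4, h2, one_mul])
    rw [one_smul] at a1 m1
    have e1 : 2 * inner ℝ γ (γ - β) = 1 * inner ℝ γ γ := by
      rw [inner_sub_right]; linarith
    have a2 := hp γ hγ _ m1 1 e1 a1
    have e2 : γ - β - (1 : ℝ) • γ = -β := by rw [one_smul]; abel
    rw [e2] at a2
    have a3 := hp β hβ (-β) (h.neg_mem hβ) (-2) (by rw [inner_neg_right]; ring) a2
    have e3 : -β - (-2 : ℝ) • β = β := by rw [neg_smul, two_smul]; abel
    rwa [e3] at a3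
  · exact absurd h4 h3
  · have a1 := hp β hβ γ hγ (-1) (by rw [real_inner_comm, h4, h2]; ring) h1
    have m1 := h.refl_mem hβ hγ (-1) (by rw [real_inner_comm, h4, h2]; ring)
    have e1 : 2 * inner ℝ γ (γ - (-1 : ℝ) • β) = 1 * inner ℝ γ γ := by
      rw [inner_sub_right, real_inner_smul_right]; linarith
    have a2 := hp γ hγ _ m1 1 e1 a1
    have e2 : γ - (-1 : ℝ) • β - (1 : ℝ) • γ = β := by rw [neg_smul, one_smul, one_smul]; abel
    rwa [e2] at a2
  · have a2 := hp γ hγ γ hγ 2 rfl h1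
    have e2 : γ - (2 : ℝ) • γ = β := by rw [h4, two_smul]; abel
    rwa [e2] at a2

/-- norm ratio lemma -/
lemma NR (h : IsRS Φ) {α β : E} (hα : α ∈ Φ) (hβ : β ∈ Φ) (hab : inner ℝ α β ≠ 0)
    (hlt : inner ℝ α α < inner ℝ β β) :
    (inner ℝ β β = 2 * inner ℝ α α ∨ inner ℝ β β = 3 * inner ℝ α α) ∧
    (2 * inner ℝ α β = inner ℝ β β ∨ 2 * inner ℝ α β = - inner ℝ β β) := by
  obtain ⟨z, hz, -⟩ := h.refl α hα β hβ
  obtain ⟨w, hw, -⟩ := h.refl β hβ α hα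
  rw [real_inner_comm] at hw
  have hpa := h.pos hα
  have hpb := h.pos hβ
  have hcs : inner ℝ α β * inner ℝ α β < inner ℝ α α * inner ℝ β β := by
    rcases lt_or_eq_of_le (real_inner_mul_inner_self_le α β) with h1 | h1
    · exact h1
    · exfalso
      have : inner ℝ (β - (inner ℝ α β / inner ℝ α α) • α)
          (β - (inner ℝ α β / inner ℝ α α) • α) = 0 := by
        rw [inner_sub_left, inner_sub_right, inner_sub_right, real_inner_smul_left,
          real_inner_smul_right, real_inner_smul_right, real_inner_smul_left, real_inner_comm α β]
        field_simp
        linarith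
      rw [inner_self_eq_zero, sub_eq_zero] at this
      have h2 := h.red α hα _ (this ▸ hβ)
      have : inner ℝ β β = inner ℝ α α := by
        rcases h2 with h2 | h2 <;> rw [h2] at this <;> rw [this] <;> simp
      linarith
  have hmul : ((z * w : ℤ) : ℝ) * (inner ℝ α α * inner ℝ β β) =
      4 * (inner ℝ α β * inner ℝ α β) := by
    push_cast
    linear_combination (-2 * inner ℝ α β) * hz - z * inner ℝ α α * hw
  have hpp : 0 < inner ℝ α α * inner ℝ β β := mul_pos hpa hpb
  have h1 : z * w < 4 := by
    by_contra hc
    have : (4 : ℝ) ≤ ((z * w : ℤ) : ℝ) := by exact_mod_cast (by omega : 4 ≤ z * w)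
    nlinarith
  have h2 : 0 < z * w := by
    by_contra hc
    have : ((z * w : ℤ) : ℝ) ≤ 0 := by exact_mod_cast (by omega : z * w ≤ 0)
    have : 0 < inner ℝ α β * inner ℝ α β := mul_self_pos.2 hab
    nlinarith
  have hzw : (z : ℝ) * inner ℝ α α = w * inner ℝ β β := by rw [← hz, hw]
  have hlt' : w * w < z * w := by
    by_contra hc
    have h3 : ((z * w : ℤ) : ℝ) ≤ ((w * w : ℤ) : ℝ) := by exact_mod_cast (not_lt.1 hc)
    push_cast at h3
    have hw2 : (0 : ℝ) < w * w := by
      apply mul_self_pos.2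
      rintro h0
      rw [h0, zero_mul] at hzw hw
      apply hab; linarith
    have : (w * w : ℝ) * inner ℝ β β = z * w * inner ℝ α α := by linear_combination -w * hzw
    nlinarith
  have hw1 : w = 1 ∨ w = -1 := by
    have : w * w < 4 := by omega
    have h5 : w ≠ 0 := by rintro rfl; simp at h2
    have h3 : w < 2 := by nlinarith
    have h4 : -2 < w := by nlinarith
    omega
  rcases hw1 with rfl | rfl
  · have hz' : z = 2 ∨ z = 3 := by omega
    push_cast at hw hzw
    rw [one_mul] at hw hzw
    refine ⟨?_, Or.inl hw⟩
    rcases hz' with rfl | rfl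
    · left; rw [← hzw]; norm_num
    · right; rw [← hzw]; norm_num
  · have hz' : z = -2 ∨ z = -3 := by omega
    push_cast at hw hzw
    rw [neg_one_mul] at hw hzw
    refine ⟨?_, Or.inr hw⟩
    rcases hz' with rfl | rfl
    · left; push_cast at hzw; linarith
    · right; push_cast at hzw; linarith

/-- in an irreducible system, two different norms have ratio 2 or 3 -/
lemma NRi (h : IsRS Φ) (hi : Irr Φ) {α β : E} (hα : α ∈ Φ) (hβ : β ∈ Φ)
    (hlt : inner ℝ α α < inner ℝ β β) :
    inner ℝ β β = 2 * inner ℝ α α ∨ inner ℝ β β = 3 * inner ℝ α α := by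
  obtain ⟨γ, hγ, h1, h2⟩ := h.TRn hi hα hβ
  rw [real_inner_comm] at h2
  have := (h.NR hα hγ h2.ne' (by rw [h1]; exact hlt)).1
  rwa [h1] at this

lemma norms (h : IsRS Φ) (hi : Irr Φ) :
    (∃ N, ∀ α ∈ Φ, inner ℝ α α = N) ∨
    ∃ N : ℝ, 0 < N ∧ ∃ r : ℝ, (r = 2 ∨ r = 3) ∧ (∃ α ∈ Φ, inner ℝ α α = N) ∧
      (∃ α ∈ Φ, inner ℝ α α = r * N) ∧
      ∀ α ∈ Φ, inner ℝ α α = N ∨ inner ℝ α α = r * N := by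
  by_cases hne : Φ = ∅
  · left; subst hne; simp
  obtain ⟨α, hα, hmin⟩ := Finset.exists_min_image Φ (fun x => (inner ℝ x x : ℝ))
    (Finset.nonempty_iff_ne_empty.2 hne)
  by_cases hall : ∀ β ∈ Φ, inner ℝ β β = inner ℝ α α
  · left; exact ⟨_, hall⟩
  right
  push Not at hall
  obtain ⟨β, hβ, hb⟩ := hall
  have hlt := lt_of_le_of_ne (hmin β hβ) hb.symm
  have hp := h.pos hα
  have : ∃ r : ℝ, (r = 2 ∨ r = 3) ∧ inner ℝ β β = r * inner ℝ α α := by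
    rcases h.NRi hi hα hβ hlt with h1 | h1
    · exact ⟨2, Or.inl rfl, h1⟩
    · exact ⟨3, Or.inr rfl, h1⟩
  obtain ⟨r, hr, hr'⟩ := this
  refine ⟨_, hp, r, hr, ⟨α, hα, rfl⟩, ⟨β, hβ, hr'⟩, ?_⟩
  intro γ hγ
  by_contra hc
  push Not at hc
  have hlt2 := lt_of_le_of_ne (hmin γ hγ) hc.1.symm
  rw [← hr'] at hc
  have h2 := h.NRi hi hα hγ hlt2
  have h1 := h.NRi hi hα hβ hlt
  rcases lt_or_gt_of_ne hc.2 with h3 | h3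
  · have := h.NRi hi hγ hβ h3
    rcases h1 with h1 | h1 <;> rcases h2 with h2 | h2 <;> rcases this with h4 | h4 <;> linarith
  · have := h.NRi hi hβ hγ h3
    rcases h1 with h1 | h1 <;> rcases h2 with h2 | h2 <;> rcases this with h4 | h4 <;> linarith

/-- the roots of a given norm form a root system -/
lemma norm_class (h : IsRS Φ) (N : ℝ) : IsRS (Φ.filter (fun α => inner ℝ α α = N)) := by
  apply h.sub' (Finset.filter_subset _ _)
  intro α hα β hβ z hz hm
  refine Finset.mem_filter.2 ⟨hm, ?_⟩
  rw [inner_refl_refl hz, (Finset.mem_filter.1 hβ).2]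

end IsRS


lemma seq_ineq (m : ℕ → ℤ) (c n : ℕ) (hcn : c ≤ n) :
    2 * ∑ i ∈ Finset.range n, m i * m (i + 1) + 2 * m c - m 0 - m n ≤
      ∑ i ∈ Finset.range n, (m i * m i + m (i + 1) * m (i + 1)) := by
  have hsq : ∀ t : ℤ, t ≤ t * t := by
    intro t
    rcases lt_or_ge 0 t with h | h
    · nlinarith
    · nlinarith
  have h1 : ∀ n : ℕ, 2 * ∑ i ∈ Finset.range n, m i * m (i + 1) + (m n - m 0) ≤
      ∑ i ∈ Finset.range n, (m i * m i + m (i + 1) * m (i + 1)) := by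
    intro n
    induction n with
    | zero => simp
    | succ n ih =>
      rw [Finset.sum_range_succ, Finset.sum_range_succ]
      have := hsq (m (n + 1) - m n)
      nlinarith
  induction n, hcn using Nat.le_induction with
  | base => have := h1 c; linarith
  | succ n hn ih =>
      rw [Finset.sum_range_succ, Finset.sum_range_succ]
      have := hsq (m n - m (n + 1))
      nlinarith

lemma comb_nat {X : Type*} (J : Finset X) (g : X → ℕ) (c n : ℕ) (hc : c ≤ n)
    (hg : ∀ x ∈ J, 0 < g x ∧ g x < n) :
    (J.filter (fun x => g x = c)).card +
      ((J ×ˢ J).filter (fun p => g p.1 = g p.2 + 1)).card ≤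
      ((J ×ˢ J).filter (fun p => g p.1 = g p.2)).card := by
  let m : ℕ → ℤ := fun i => ((J.filter (fun x => g x = i)).card : ℤ)
  have e1 : (((J ×ˢ J).filter (fun p => g p.1 = g p.2 + 1)).card : ℤ) =
      ∑ i ∈ Finset.range n, m i * m (i + 1) := by
    rw [Finset.card_eq_sum_card_fiberwise (f := fun p => g p.2) (t := Finset.range n)]
    · push_cast
      refine Finset.sum_congr rfl fun i _ => ?_
      simp only [m]
      rw [← Nat.cast_mul, ← Finset.card_product]
      congr 1
      apply Finset.card_bij (fun p _ => (p.2, p.1))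
      · intro p hp
        simp only [Finset.mem_filter, Finset.mem_product] at hp ⊢
        obtain ⟨⟨⟨h1, h2⟩, h3⟩, h4⟩ := hp
        exact ⟨⟨h2, h4⟩, h1, by omega⟩
      · intro p _ q _ h; simp at h; exact Prod.ext h.2 h.1
      · intro q hq; refine ⟨(q.2, q.1), ?_, rfl⟩
        simp only [Finset.mem_filter, Finset.mem_product] at hq ⊢
        obtain ⟨⟨h1, h2⟩, h3, h4⟩ := hq
        exact ⟨⟨⟨h3, h1⟩, by omega⟩, h2⟩
    · intro p hp
      simp at hp ⊢
      exact (hg _ hp.1.2).2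
  have e2 : (((J ×ˢ J).filter (fun p => g p.1 = g p.2)).card : ℤ) =
      ∑ i ∈ Finset.range n, m i * m i := by
    rw [Finset.card_eq_sum_card_fiberwise (f := fun p => g p.2) (t := Finset.range n)]
    · push_cast
      refine Finset.sum_congr rfl fun i _ => ?_
      simp only [m]
      rw [← Nat.cast_mul, ← Finset.card_product]
      congr 2
      ext p
      simp only [Finset.mem_filter, Finset.mem_product]
      constructor
      · rintro ⟨⟨⟨h1, h2⟩, h3⟩, h4⟩; exact ⟨⟨h1, by omega⟩, h2, h4⟩
      · rintro ⟨⟨h1, h2⟩, h3, h4⟩; exact ⟨⟨⟨h1, h3⟩, by omega⟩, h4⟩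
    · intro p hp
      simp at hp ⊢
      exact (hg _ hp.1.2).2
  have z0 : m 0 = 0 := by
    simp only [m, Nat.cast_eq_zero, Finset.card_eq_zero, Finset.filter_eq_empty_iff]
    intro x hx; have := (hg x hx).1; omega
  have zn : m n = 0 := by
    simp only [m, Nat.cast_eq_zero, Finset.card_eq_zero, Finset.filter_eq_empty_iff]
    intro x hx; have := (hg x hx).2; omega
  have h := seq_ineq m c n hc
  rw [Finset.sum_add_distrib] at h
  have h3 : ∑ i ∈ Finset.range n, m (i + 1) * m (i + 1) = ∑ i ∈ Finset.range n, m i * m i := by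
    have a := Finset.sum_range_succ (fun i => m i * m i) n
    rw [Finset.sum_range_succ' (fun i => m i * m i) n] at a
    simp only [z0, zn] at a
    linarith
  rw [h3, z0, zn] at h
  have hm : ((J.filter (fun x => g x = c)).card : ℤ) = m c := rfl
  have hfin : ((J.filter (fun x => g x = c)).card : ℤ) +
      ((J ×ˢ J).filter (fun p => g p.1 = g p.2 + 1)).card ≤
      ((J ×ˢ J).filter (fun p => g p.1 = g p.2)).card := by
    rw [e1, e2, hm]
    linarith
  exact_mod_cast hfin

lemma comb_int {X : Type*} (J : Finset X) (f : X → ℤ) :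
    (J.filter (fun x => f x = 0)).card +
      ((J ×ˢ J).filter (fun p => f p.1 = f p.2 + 1)).card ≤
      ((J ×ˢ J).filter (fun p => f p.1 = f p.2)).card := by
  obtain ⟨K, hK⟩ : ∃ K : ℕ, ∀ x ∈ J, (f x).natAbs ≤ K :=
    ⟨J.sup (fun x => (f x).natAbs), fun x hx => Finset.le_sup (f := fun x => (f x).natAbs) hx⟩
  have h := comb_nat J (fun x => (f x + K + 1).toNat) (K + 1) (2 * K + 2) (by omega)
    (by intro x hx; have := hK x hx; omega)
  have e1 : J.filter (fun x => (f x + K + 1).toNat = K + 1) = J.filter (fun x => f x = 0) :=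
    Finset.filter_congr (by intro x hx; have := hK x hx; omega)
  have e2 : (J ×ˢ J).filter (fun p => (f p.1 + K + 1).toNat = (f p.2 + K + 1).toNat + 1) =
      (J ×ˢ J).filter (fun p => f p.1 = f p.2 + 1) :=
    Finset.filter_congr (by
      intro p hp
      have a := hK _ (Finset.mem_product.1 hp).1
      have b := hK _ (Finset.mem_product.1 hp).2
      omega)
  have e3 : (J ×ˢ J).filter (fun p => (f p.1 + K + 1).toNat = (f p.2 + K + 1).toNat) =
      (J ×ˢ J).filter (fun p => f p.1 = f p.2) :=
    Finset.filter_congr (by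
      intro p hp
      have a := hK _ (Finset.mem_product.1 hp).1
      have b := hK _ (Finset.mem_product.1 hp).2
      omega)
  rwa [e1, e2, e3] at h

namespace IsRS
variable {E : Type*} [NormedAddCommGroup E] [InnerProductSpace ℝ E] {Φ : Finset E}

lemma finrank_orth [FiniteDimensional ℝ E] (Φ1 J : Finset E)
    (hJ0 : (0 : E) ∉ J) (hJ : ∀ σ ∈ J, ∀ τ ∈ J, σ ≠ τ → inner ℝ σ τ = 0)
    (hΦ : ∀ γ ∈ Φ1, ∀ σ ∈ J, inner ℝ γ σ = 0)
    (W : Submodule ℝ E) (h1 : ∀ γ ∈ Φ1, γ ∈ W) (h2 : ∀ σ ∈ J, σ ∈ W) :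
    Module.finrank ℝ (Submodule.span ℝ (Φ1 : Set E)) + J.card ≤ Module.finrank ℝ W := by
  have hli : LinearIndependent ℝ (fun x : J => (x : E)) := by
    apply linearIndependent_of_ne_zero_of_inner_eq_zero
    · intro x hx; exact hJ0 (hx ▸ x.2)
    · intro x y hxy; exact hJ _ x.2 _ y.2 (fun h => hxy (Subtype.ext h))
  have hr : Module.finrank ℝ (Submodule.span ℝ (J : Set E)) = J.card := by
    rw [finrank_span_finset_eq_card hli]
  have hd : Disjoint (Submodule.span ℝ (Φ1 : Set E)) (Submodule.span ℝ (J : Set E)) := by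
    apply Submodule.IsOrtho.disjoint
    rw [Submodule.isOrtho_span]
    intro u hu v hv
    exact hΦ u hu v hv
  have h3 := Submodule.finrank_sup_add_finrank_inf_eq (Submodule.span ℝ (Φ1 : Set E))
    (Submodule.span ℝ (J : Set E))
  rw [hd.eq_bot, finrank_bot, add_zero, hr] at h3
  rw [← h3]
  apply Submodule.finrank_mono
  rw [sup_le_iff, Submodule.span_le, Submodule.span_le]
  exact ⟨h1, h2⟩

theorem caseA [FiniteDimensional ℝ E] (h : IsRS Φ) {N : ℝ}
    (hNpos : 0 < N)
    (hA : ∀ α ∈ Φ, ∀ β ∈ Φ, inner ℝ α α = N → inner ℝ β β = N →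
      β = α ∨ β = -α ∨ inner ℝ α β = 0)
    (hD : ∀ α ∈ Φ, ∀ β ∈ Φ, inner ℝ α α = N → inner ℝ β β = N → inner ℝ α β = 0 → α - β ∈ Φ)
    (hlong : ∀ γ ∈ Φ, inner ℝ γ γ = 2 * N → ∃ e ∈ Φ, ∃ e' ∈ Φ, inner ℝ e e = N ∧
      inner ℝ e' e' = N ∧ γ = e + e')
    {T : Type*} [AddCommGroup T] [Module ℝ T] (L : E →ₗ[ℝ] T) (κs κl : T)
    (hκ : ∀ a b : ℝ, a • κs + b • κl = 0 → a = 0 ∧ b = 0) :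
    (Φ.filter (fun α => inner ℝ α α = N ∧ L α = κs)).card +
      (Φ.filter (fun α => inner ℝ α α = 2 * N ∧ L α = κl)).card ≤
      (Φ.filter (fun α => L α = 0)).card + Module.finrank ℝ (Submodule.span ℝ (Φ : Set E)) := by
  set J := Φ.filter (fun σ => inner ℝ σ σ = N ∧ ∃ j : ℤ, L σ = κs + (j : ℝ) • κl) with hJdef
  have hJ' : ∀ σ, ∃ j : ℤ, σ ∈ J → L σ = κs + (j : ℝ) • κl := by
    intro σ
    by_cases hs : σ ∈ J
    · obtain ⟨j, hj⟩ := (Finset.mem_filter.1 hs).2.2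
      exact ⟨j, fun _ => hj⟩
    · exact ⟨0, fun h => absurd h hs⟩
  choose f hf using hJ'
  have hJΦ : ∀ σ ∈ J, σ ∈ Φ := fun σ hσ => (Finset.mem_filter.1 hσ).1
  have hJN : ∀ σ ∈ J, inner ℝ σ σ = N := fun σ hσ => (Finset.mem_filter.1 hσ).2.1
  have hfu : ∀ σ ∈ J, ∀ j : ℤ, L σ = κs + (j : ℝ) • κl → f σ = j := by
    intro σ hσ j hj
    have h1 := hf σ hσ
    rw [h1] at hj
    have := (hκ 0 ((f σ : ℝ) - j) (by
      have := add_left_cancel hj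
      rw [sub_smul, this]; simp)).2
    exact_mod_cast sub_eq_zero.1 this
  have hJorth : ∀ σ ∈ J, ∀ τ ∈ J, σ ≠ τ → inner ℝ σ τ = 0 := by
    intro σ hσ τ hτ hne
    rcases hA σ (hJΦ σ hσ) τ (hJΦ τ hτ) (hJN σ hσ) (hJN τ hτ) with h1 | h1 | h1
    · exact absurd h1.symm hne
    · exfalso
      have h2 := hf τ hτ
      rw [h1, map_neg, hf σ hσ] at h2
      have := (hκ 2 ((f σ : ℝ) + f τ) (by
        rw [add_smul, two_smul]
        rw [h1]
        have h3 := neg_eq_iff_add_eq_zero.1 h2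
        rw [← h3]; abel)).1
      norm_num at this
    · exact h1
  have hJ0 : (0 : E) ∉ J := fun h0 => h.ne0 (hJΦ 0 h0)
  set Φ1 := Φ.filter (fun γ => inner ℝ γ γ = 2 * N ∧ ∀ σ ∈ J, inner ℝ γ σ = 0) with hΦ1
  have hΦ1Φ : ∀ γ ∈ Φ1, γ ∈ Φ := fun σ hσ => (Finset.mem_filter.1 hσ).1
  have hΦ1N : ∀ γ ∈ Φ1, inner ℝ γ γ = 2 * N := fun σ hσ => (Finset.mem_filter.1 hσ).2.1
  have hΦ1J : ∀ γ ∈ Φ1, ∀ σ ∈ J, inner ℝ γ σ = 0 := fun σ hσ => (Finset.mem_filter.1 hσ).2.2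
  have hRS1 : IsRS Φ1 := by
    apply h.sub' (Finset.filter_subset _ _)
    intro α hα β hβ z hz hm
    refine Finset.mem_filter.2 ⟨hm, ?_, ?_⟩
    · rw [inner_refl_refl hz, hΦ1N β hβ]
    · intro σ hσ
      rw [inner_sub_left, real_inner_smul_left, hΦ1J α hα σ hσ, hΦ1J β hβ σ hσ]; simp
  have hκl : κl ≠ 0 := by
    intro h0
    have := (hκ 0 1 (by rw [h0]; simp)).2
    norm_num at this
  have hSL := hRS1.SL_count (2 * N) hΦ1N L κl hκl
  have hfr := finrank_orth Φ1 J hJ0 hJorth hΦ1J (Submodule.span ℝ (Φ : Set E))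
    (fun γ hγ => Submodule.subset_span (hΦ1Φ γ hγ))
    (fun γ hγ => Submodule.subset_span (hJΦ γ hγ))
  have hcomb := comb_int J f
  -- short part
  have hPs : (Φ.filter (fun α => inner ℝ α α = N ∧ L α = κs)).card ≤
      (J.filter (fun x => f x = 0)).card := by
    apply Finset.card_le_card
    intro α hα
    obtain ⟨h1, h2, h3⟩ := Finset.mem_filter.1 hα
    have hj : L α = κs + ((0 : ℤ) : ℝ) • κl := by simp [h3]
    have hαJ : α ∈ J := Finset.mem_filter.2 ⟨h1, h2, 0, hj⟩
    exact Finset.mem_filter.2 ⟨hαJ, hfu α hαJ 0 hj⟩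
  -- long part
  have hPl : (Φ.filter (fun α => inner ℝ α α = 2 * N ∧ L α = κl)).card ≤
      (Φ1.filter (fun α => L α = κl)).card +
      ((J ×ˢ J).filter (fun p => f p.1 = f p.2 + 1)).card := by
    refine le_trans (Finset.card_le_card (t := (Φ1.filter (fun α => L α = κl)) ∪
      ((J ×ˢ J).filter (fun p => f p.1 = f p.2 + 1)).image (fun p => p.1 - p.2)) ?_)
      ((Finset.card_union_le _ _).trans (by gcongr; exact Finset.card_image_le))
    intro γ hγ
    obtain ⟨h1, h2, h3⟩ := Finset.mem_filter.1 hγ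
    rw [Finset.mem_union]
    by_cases hγ1 : ∀ σ ∈ J, inner ℝ γ σ = 0
    · left
      exact Finset.mem_filter.2 ⟨Finset.mem_filter.2 ⟨h1, h2, hγ1⟩, h3⟩
    right
    push Not at hγ1
    obtain ⟨σ, hσ, hne⟩ := hγ1
    -- decompose with σ or its negative
    have key : ∃ ρ ∈ Φ, inner ℝ ρ ρ = N ∧ (γ = σ + ρ ∨ γ = -σ + ρ) := by
      obtain ⟨e, he, e', he', hn, hn', hsum⟩ := hlong γ h1 h2
      rcases hA σ (hJΦ σ hσ) e he (hJN σ hσ) hn with h4 | h4 | h4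
      · exact ⟨e', he', hn', Or.inl (by rw [hsum, h4])⟩
      · exact ⟨e', he', hn', Or.inr (by rw [hsum, h4])⟩
      rcases hA σ (hJΦ σ hσ) e' he' (hJN σ hσ) hn' with h5 | h5 | h5
      · exact ⟨e, he, hn, Or.inl (by rw [hsum, h5, add_comm])⟩
      · exact ⟨e, he, hn, Or.inr (by rw [hsum, h5, add_comm])⟩
      exfalso; apply hne
      rw [hsum, real_inner_comm, inner_add_right, h4, h5, add_zero]
    obtain ⟨ρ, hρ, hρN, h4 | h4⟩ := key
    · have hL : L (-ρ) = κs + ((f σ - 1 : ℤ) : ℝ) • κl := by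
        have : ρ = γ - σ := by rw [h4]; abel
        rw [this, map_neg, map_sub, h3, hf σ hσ]
        push_cast
        rw [sub_smul, one_smul]; abel
      have hm : -ρ ∈ J := Finset.mem_filter.2 ⟨h.neg_mem hρ, by rw [inner_neg_neg, hρN], _, hL⟩
      refine Finset.mem_image.2 ⟨(σ, -ρ), Finset.mem_filter.2 ⟨Finset.mem_product.2 ⟨hσ, hm⟩, ?_⟩,
        ?_⟩
      · simp only; rw [hfu _ hm _ hL]; omega
      · simp only; rw [h4]; abel
    · have hL : L ρ = κs + ((f σ + 1 : ℤ) : ℝ) • κl := by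
        have : ρ = γ + σ := by rw [h4]; abel
        rw [this, map_add, h3, hf σ hσ]
        push_cast
        rw [add_smul, one_smul]; abel
      have hm : ρ ∈ J := Finset.mem_filter.2 ⟨hρ, hρN, _, hL⟩
      refine Finset.mem_image.2 ⟨(ρ, σ), Finset.mem_filter.2 ⟨Finset.mem_product.2 ⟨hm, hσ⟩, ?_⟩,
        ?_⟩
      · simp only; rw [hfu _ hm _ hL]
      · simp only; rw [h4]; abel
  -- zeros
  have hZ : (Φ1.filter (fun α => L α = 0)).card +
      (((J ×ˢ J).filter (fun p => f p.1 = f p.2)).filter (fun p => p.1 ≠ p.2)).card ≤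
      (Φ.filter (fun α => L α = 0)).card := by
    have hinj : Set.InjOn (fun p : E × E => p.1 - p.2)
        (((J ×ˢ J).filter (fun p => f p.1 = f p.2)).filter (fun p => p.1 ≠ p.2) : Finset _) := by
      rintro ⟨σ, τ⟩ hp ⟨σ', τ'⟩ hq heq
      simp only [Finset.coe_filter, Set.mem_ofPred_eq, Finset.mem_filter, Finset.mem_product]
        at hp hq heq
      obtain ⟨⟨⟨p1, p2⟩, p3⟩, p4⟩ := hp
      obtain ⟨⟨⟨q1, q2⟩, q3⟩, q4⟩ := hq
      have h1 : inner ℝ σ (σ - τ) = inner ℝ σ (σ' - τ') := by rw [heq]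
      rw [inner_sub_right, inner_sub_right, hJN σ p1, hJorth σ p1 τ p2 p4] at h1
      have hss : σ = σ' := by
        by_contra hne
        rw [hJorth σ p1 σ' q1 hne] at h1
        by_cases h2 : σ = τ'
        · rw [← h2, hJN σ p1] at h1; linarith
        · rw [hJorth σ p1 τ' q2 h2] at h1; linarith
      subst hss
      have : τ = τ' := sub_right_injective heq
      rw [this]
    rw [← Finset.card_image_of_injOn hinj, ← Finset.card_union_of_disjoint]
    · apply Finset.card_le_card
      intro x hx
      rcases Finset.mem_union.1 hx with hx | hx
      · obtain ⟨h1, h2⟩ := Finset.mem_filter.1 hx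
        exact Finset.mem_filter.2 ⟨hΦ1Φ x h1, h2⟩
      · obtain ⟨⟨σ, τ⟩, hp, rfl⟩ := Finset.mem_image.1 hx
        simp only [Finset.mem_filter, Finset.mem_product] at hp
        obtain ⟨⟨⟨p1, p2⟩, p3⟩, p4⟩ := hp
        refine Finset.mem_filter.2 ⟨?_, ?_⟩
        · exact hD σ (hJΦ σ p1) τ (hJΦ τ p2) (hJN σ p1) (hJN τ p2) (hJorth σ p1 τ p2 p4)
        · simp only; rw [map_sub, hf σ p1, hf τ p2, p3, sub_self]
    · rw [Finset.disjoint_left]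
      intro x hx hx2
      obtain ⟨⟨σ, τ⟩, hp, rfl⟩ := Finset.mem_image.1 hx2
      simp only [Finset.mem_filter, Finset.mem_product] at hp
      obtain ⟨⟨⟨p1, p2⟩, p3⟩, p4⟩ := hp
      have := hΦ1J _ (Finset.mem_filter.1 hx).1 σ p1
      simp only at this
      rw [inner_sub_left, hJN σ p1, real_inner_comm, hJorth σ p1 τ p2 p4] at this
      linarith
  have hsplit : ((J ×ˢ J).filter (fun p => f p.1 = f p.2)).card ≤
      (((J ×ˢ J).filter (fun p => f p.1 = f p.2)).filter (fun p => p.1 ≠ p.2)).card + J.card := by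
    rw [← Finset.card_filter_add_card_filter_not (s := (J ×ˢ J).filter (fun p => f p.1 = f p.2))
      (fun p => p.1 ≠ p.2)]
    gcongr
    apply Finset.card_le_card_of_injOn (fun p => p.1)
    · intro p hp
      simp at hp
      exact hp.1.1.1
    · rintro ⟨a, b⟩ hp ⟨c, d⟩ hq heq
      simp at hp hq heq
      rw [← hp.2, ← hq.2, heq]
  omega

end IsRS


lemma dirs {E : Type*} [NormedAddCommGroup E] [InnerProductSpace ℝ E] (N : ℝ)
    (x : E) (hx : inner ℝ x x = N) (S Z : Finset E) (hxS : x ∉ S)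
    (hS : ∀ y ∈ S, inner ℝ y y = N) (hZ : ∀ y ∈ S, ∃ c : ℝ, 0 < c ∧ c • (x - y) ∈ Z) :
    S.card ≤ Z.card := by
  have hZ' : ∀ y, ∃ c : ℝ, y ∈ S → 0 < c ∧ c • (x - y) ∈ Z := by
    intro y
    by_cases hy : y ∈ S
    · obtain ⟨c, hc⟩ := hZ y hy
      exact ⟨c, fun _ => hc⟩
    · exact ⟨0, fun h => absurd h hy⟩
  choose c hc using hZ'
  apply Finset.card_le_card_of_injOn (fun y => c y • (x - y))
  · intro y hy; exact (hc y hy).2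
  · intro y hy y' hy' heq
    simp only at heq
    have hcy := (hc y hy).1
    have hcy' := (hc y' hy').1
    set t := c y / c y' with ht
    have e1 : x - y' = t • (x - y) := by
      rw [ht, div_eq_inv_mul, mul_smul, heq, smul_smul, inv_mul_cancel₀ hcy'.ne', one_smul]
    have hne : x - y ≠ 0 := by
      intro h0; rw [sub_eq_zero] at h0; exact hxS (h0 ▸ hy)
    have hpos : 0 < inner ℝ (x - y) (x - y) := real_inner_self_pos.2 hne
    have gen : ∀ w, inner ℝ w w = N → inner ℝ (x - w) (x - w) = 2 * inner ℝ x (x - w) := by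
      intro w hw
      rw [inner_sub_left, inner_sub_right, inner_sub_right, hx, hw, real_inner_comm w x]; ring
    have g1 := gen y (hS y hy)
    have g2 := gen y' (hS y' hy')
    rw [e1, real_inner_smul_left, real_inner_smul_right, real_inner_smul_right] at g2
    have ht0 : t ≠ 0 := by rw [ht]; positivity
    have ht1 : t = 1 := by
      have : t * ((t - 1) * inner ℝ (x - y) (x - y)) = 0 := by
        linear_combination g2 - t * g1
      rcases mul_eq_zero.1 this with h | h
      · exact absurd h ht0
      · rcases mul_eq_zero.1 h with h | h
        · linarith
        · exact absurd h hpos.ne'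
    rw [ht1, one_smul] at e1
    exact (sub_right_injective e1).symm

namespace IsRS
variable {E : Type*} [NormedAddCommGroup E] [InnerProductSpace ℝ E] {Φ : Finset E}

theorem caseF_half (h : IsRS Φ) {N : ℝ}
    (horth : ∀ α ∈ Φ, ∀ β ∈ Φ, inner ℝ α α = N → inner ℝ β β = N → inner ℝ α β = 0 →
      ∃ c : ℝ, 0 < c ∧ c • (α - β) ∈ Φ)
    {T : Type*} [AddCommGroup T] [Module ℝ T] (L : E →ₗ[ℝ] T) (κ : T) (hκ : κ ≠ 0) :
    2 * (Φ.filter (fun α => inner ℝ α α = N ∧ L α = κ)).card ≤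
      (Φ.filter (fun α => L α = 0)).card + 4 := by
  set Q := Φ.filter (fun α => inner ℝ α α = N ∧ L α = κ) with hQ
  set Z := Φ.filter (fun α => L α = 0) with hZ
  by_cases hne : Q = ∅
  · rw [hne]; simp
  obtain ⟨α, hα⟩ := Finset.nonempty_iff_ne_empty.2 hne
  have hQΦ : ∀ x ∈ Q, x ∈ Φ := fun x hx => (Finset.mem_filter.1 hx).1
  have hQN : ∀ x ∈ Q, inner ℝ x x = N := fun x hx => (Finset.mem_filter.1 hx).2.1
  have hQL : ∀ x ∈ Q, L x = κ := fun x hx => (Finset.mem_filter.1 hx).2.2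
  have hNpos : 0 < N := hQN α hα ▸ h.pos (hQΦ α hα)
  have hZneg : ∀ z ∈ Z, -z ∈ Z := by
    intro z hz
    obtain ⟨h1, h2⟩ := Finset.mem_filter.1 hz
    exact Finset.mem_filter.2 ⟨h.neg_mem h1, by rw [map_neg, h2, neg_zero]⟩
  have hvals : ∀ x ∈ Q, ∀ y ∈ Q, y ≠ x → (2 * inner ℝ x y = -N) ∨
      (inner ℝ x y < N ∧ 2 * inner ℝ x y ≠ -N ∧ ∃ c : ℝ, 0 < c ∧ c • (x - y) ∈ Z) := by
    intro x hx y hy hxy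
    have mZ : ∀ c : ℝ, c • (x - y) ∈ Φ → c • (x - y) ∈ Z := by
      intro c hc
      refine Finset.mem_filter.2 ⟨hc, ?_⟩
      rw [map_smul, map_sub, hQL x hx, hQL y hy, sub_self, smul_zero]
    have hxN := hQN x hx
    rcases h.vals (hQΦ x hx) (hQΦ y hy) (by rw [hQN x hx, hQN y hy]) with h1 | h1 | h1 | h1 | h1
    · exact absurd h1 hxy
    · right
      rw [hxN] at h1
      refine ⟨by linarith, by linarith, 1, one_pos, mZ 1 ?_⟩
      rw [one_smul]
      apply h.sub_mem (hQΦ y hy) (hQΦ x hx)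
      rw [real_inner_comm, h1, hQN y hy]
    · right
      refine ⟨by linarith, by rw [h1]; linarith, ?_⟩
      obtain ⟨c, hc, hm⟩ := horth x (hQΦ x hx) y (hQΦ y hy) hxN (hQN y hy) h1
      exact ⟨c, hc, mZ c hm⟩
    · left; rw [h1, hxN]
    · exfalso
      have h2 := hQL y hy
      rw [h1, map_neg, hQL x hx] at h2
      have : (2 : ℝ) • κ = 0 := by
        rw [two_smul]; nth_rewrite 1 [← h2]; exact neg_add_cancel κ
      rcases smul_eq_zero.1 this with h3 | h3
      · norm_num at h3
      · exact hκ h3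
  set Ap := (Q.erase α).filter (fun δ => 2 * inner ℝ α δ ≠ -N) with hAp
  set Am := (Q.erase α).filter (fun δ => ¬ (2 * inner ℝ α δ ≠ -N)) with hAm
  have hcard : Ap.card + Am.card + 1 = Q.card := by
    rw [hAp, hAm, Finset.card_filter_add_card_filter_not, Finset.card_erase_add_one hα]
  have negcard : ∀ (x : E) (q : E → Prop) (hq : ∀ z, q (-z) ↔ q z),
      (Z.filter (fun z => q z ∧ inner ℝ x z < 0)).card =
        (Z.filter (fun z => q z ∧ 0 < inner ℝ x z)).card := by
    intro x q hq
    apply Finset.card_bij (fun z _ => -z)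
    · intro z hz
      obtain ⟨h1, h2, h3⟩ := Finset.mem_filter.1 hz
      exact Finset.mem_filter.2 ⟨hZneg z h1, (hq z).2 h2, by rw [inner_neg_right]; linarith⟩
    · intro a _ b _ hab; exact neg_injective hab
    · intro z hz
      obtain ⟨h1, h2, h3⟩ := Finset.mem_filter.1 hz
      exact ⟨-z, Finset.mem_filter.2 ⟨hZneg z h1, (hq z).2 h2, by rw [inner_neg_right]; linarith⟩,
        neg_neg z⟩
  have split : ∀ (x : E) (q : E → Prop),
      (Z.filter q).card = (Z.filter (fun z => q z ∧ inner ℝ x z = 0)).card +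
        (Z.filter (fun z => q z ∧ inner ℝ x z < 0)).card +
        (Z.filter (fun z => q z ∧ 0 < inner ℝ x z)).card := by
    intro x q
    rw [← Finset.card_union_of_disjoint, ← Finset.card_union_of_disjoint]
    · congr 1
      ext z
      simp only [Finset.mem_union, Finset.mem_filter]
      rcases lt_trichotomy (inner ℝ x z : ℝ) 0 with h1 | h1 | h1
      · simp [h1, h1.ne, h1.not_gt]
      · simp [h1]
      · simp [h1, h1.ne', h1.not_gt]
    · rw [Finset.disjoint_left]
      intro z hz hz2
      simp only [Finset.mem_union, Finset.mem_filter] at hz hz2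
      rcases hz with hz | hz <;> linarith [hz.2.2, hz2.2.2]
    · rw [Finset.disjoint_left]
      intro z hz hz2
      simp only [Finset.mem_filter] at hz hz2
      linarith [hz.2.2, hz2.2.2]
  obtain ⟨q, hq⟩ : ∃ q : E → Prop, ∀ z, q z := ⟨fun _ => True, fun _ => trivial⟩
  obtain ⟨q2, hq2⟩ : ∃ q2 : E → Prop, ∀ z, q2 z ↔ inner ℝ α z = 0 :=
    ⟨fun z => inner ℝ α z = 0, fun _ => Iff.rfl⟩
  have s1 := split α q
  rw [negcard α q (by simp [hq])] at s1
  have hq12 : (Z.filter q2).card = (Z.filter (fun z => q z ∧ inner ℝ α z = 0)).card := by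
    congr 1
    ext z
    simp [hq2, hq]
  replace s1 := s1.ge.trans (Finset.card_filter_le Z _)
  have c1 : Ap.card ≤ (Z.filter (fun z => q z ∧ 0 < inner ℝ α z)).card := by
    apply dirs N α (hQN α hα)
    · simp [hAp]
    · intro y hy
      exact hQN y (Finset.mem_of_mem_erase (Finset.mem_filter.1 hy).1)
    · intro y hy
      obtain ⟨h1, h2⟩ := Finset.mem_filter.1 hy
      obtain ⟨h3, h4⟩ := Finset.mem_erase.1 h1
      rcases hvals α hα y h4 h3 with h5 | ⟨h5, -, c, hc, hm⟩
      · exact absurd h5 h2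
      · refine ⟨c, hc, Finset.mem_filter.2 ⟨hm, hq _, ?_⟩⟩
        rw [real_inner_smul_right, inner_sub_right, hQN α hα]
        exact mul_pos hc (by linarith)
  by_cases hAm0 : Am = ∅
  · rw [hAm0, Finset.card_empty] at hcard
    omega
  obtain ⟨β0, hβ0⟩ := Finset.nonempty_iff_ne_empty.2 hAm0
  have hAmQ : ∀ y ∈ Am, y ∈ Q := fun y hy => Finset.mem_of_mem_erase (Finset.mem_filter.1 hy).1
  have hAmv : ∀ y ∈ Am, 2 * inner ℝ α y = -N := fun y hy => not_not.1 (Finset.mem_filter.1 hy).2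
  have s2 := split β0 q2
  rw [negcard β0 q2 (by simp [hq2])] at s2
  have c2 : (Am.erase β0).card ≤
      (Z.filter (fun z => q2 z ∧ 0 < inner ℝ β0 z)).card := by
    apply dirs N β0 (hQN β0 (hAmQ β0 hβ0))
    · simp
    · intro y hy
      exact hQN y (hAmQ y (Finset.mem_of_mem_erase hy))
    · intro y hy
      obtain ⟨h1, h2⟩ := Finset.mem_erase.1 hy
      have hy1 := hAmQ y h2
      have hβ1 := hAmQ β0 hβ0
      rcases hvals β0 hβ1 y hy1 h1 with h5 | ⟨h5, -, c, hc, hm⟩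
      · exfalso
        have hs : inner ℝ (α + β0 + y) (α + β0 + y) = 0 := by
          rw [inner_add_left, inner_add_left, inner_add_right, inner_add_right, inner_add_right,
            inner_add_right, inner_add_right, inner_add_right, real_inner_comm α β0,
            real_inner_comm α y, real_inner_comm β0 y, hQN α hα, hQN y hy1, hQN β0 hβ1]
          linarith [hAmv y h2, hAmv β0 hβ0]
        rw [inner_self_eq_zero] at hs
        have hL := congrArg L hs
        rw [map_add, map_add, map_zero, hQL α hα, hQL y hy1, hQL β0 hβ1] at hL
        have : (3 : ℝ) • κ = 0 := by
          rw [← hL, show (3 : ℝ) = 1 + 1 + 1 by norm_num, add_smul, add_smul, one_smul]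
        rcases smul_eq_zero.1 this with h3 | h3
        · norm_num at h3
        · exact hκ h3
      · refine ⟨c, hc, Finset.mem_filter.2 ⟨hm, (hq2 _).2 ?_, ?_⟩⟩
        · rw [real_inner_smul_right, inner_sub_right]
          have : inner ℝ α β0 - inner ℝ α y = 0 := by linarith [hAmv y h2, hAmv β0 hβ0]
          rw [this, mul_zero]
        · rw [real_inner_smul_right, inner_sub_right, hQN β0 hβ1]
          exact mul_pos hc (by linarith)
  have := Finset.card_erase_add_one hβ0
  omega

theorem caseG [FiniteDimensional ℝ E] (h : IsRS Φ) (hi : Irr Φ) {N : ℝ} (hNpos : 0 < N)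
    (hN : ∀ α ∈ Φ, inner ℝ α α = N ∨ inner ℝ α α = 3 * N)
    (hs : ∃ α ∈ Φ, inner ℝ α α = N) (hl : ∃ α ∈ Φ, inner ℝ α α = 3 * N) :
    Module.finrank ℝ (Submodule.span ℝ (Φ : Set E)) ≤ 2 := by
  obtain ⟨α, hα, hαN⟩ := hs
  obtain ⟨γ0, hγ0, hγ0N⟩ := hl
  obtain ⟨γ, hγ, hγN, hp⟩ := h.TRn hi hα hγ0
  rw [hγ0N] at hγN
  rw [real_inner_comm] at hp
  have hαγ : 2 * inner ℝ α γ = 3 * N := by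
    have h1 := (h.NR hα hγ hp.ne' (by rw [hαN, hγN]; linarith)).2
    rw [hγN] at h1
    rcases h1 with h1 | h1 <;> linarith
  have claim : ∀ β ∈ Φ, (inner ℝ α β = 0 ∧ inner ℝ γ β = 0) ∨
      β ∈ Submodule.span ℝ ({α, γ} : Set E) := by
    intro β hβ
    obtain ⟨a, ha, -⟩ := h.refl α hα β hβ
    obtain ⟨b, hb, -⟩ := h.refl γ hγ β hβ
    rw [hαN] at ha
    rw [hγN] at hb
    set x := (4 * inner ℝ α β - 2 * inner ℝ γ β) / N with hx
    set y := (4 / 3 * inner ℝ γ β - 2 * inner ℝ α β) / N with hy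
    have hxN : x * N = 4 * inner ℝ α β - 2 * inner ℝ γ β := by rw [hx]; field_simp
    have hyN : y * N = 4 / 3 * inner ℝ γ β - 2 * inner ℝ α β := by rw [hy]; field_simp
    have hres : inner ℝ (β - x • α - y • γ) (β - x • α - y • γ) =
        inner ℝ β β - x * inner ℝ α β - y * inner ℝ γ β := by
      simp only [inner_sub_left, inner_sub_right, real_inner_smul_left, real_inner_smul_right,
        real_inner_comm α β, real_inner_comm γ β, real_inner_comm α γ]
      rw [hαN, hγN]
      have hαγ' : inner ℝ α γ = 3 * N / 2 := by linarith
      rw [hαγ']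
      have e1 : x * (x * N) + y * (x * (3 * N / 2)) - x * inner ℝ α β = 0 := by
        linear_combination x * hxN + (3 / 2) * x * hyN
      have e2 : y * (y * (3 * N)) + x * (y * (3 * N / 2)) - y * inner ℝ γ β = 0 := by
        linear_combination 3 * y * hyN + (3 / 2) * y * hxN
      linear_combination e1 + e2
    have hnn : 0 ≤ inner ℝ (β - x • α - y • γ) (β - x • α - y • γ) := real_inner_self_nonneg
    have fin : inner ℝ β β ≤ x * inner ℝ α β + y * inner ℝ γ β →
        β ∈ Submodule.span ℝ ({α, γ} : Set E) := by
      intro hle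
      have h0 : inner ℝ (β - x • α - y • γ) (β - x • α - y • γ) = 0 := by
        apply le_antisymm _ hnn
        rw [hres]; linarith
      rw [inner_self_eq_zero] at h0
      have : β = x • α + y • γ := by
        rw [← sub_eq_zero, ← h0]; abel
      rw [this]
      exact Submodule.add_mem _ (Submodule.smul_mem _ _ (Submodule.subset_span (by simp)))
        (Submodule.smul_mem _ _ (Submodule.subset_span (by simp)))
    have ha' : inner ℝ α β = a * N / 2 := by linarith
    have hb' : inner ℝ γ β = b * (3 * N) / 2 := by linarith
    have hx' : x = 2 * a - 3 * b := by
      have : x * N = (2 * a - 3 * b) * N := by rw [hxN, ha', hb']; ring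
      exact mul_right_cancel₀ hNpos.ne' this
    have hy' : y = 2 * b - a := by
      have : y * N = (2 * b - a) * N := by rw [hyN, ha', hb']; ring
      exact mul_right_cancel₀ hNpos.ne' this
    by_cases h0 : inner ℝ α β = 0 ∧ inner ℝ γ β = 0
    · left; exact h0
    right
    apply fin
    rcases hN β hβ with hβN | hβN
    · rw [hβN, hx', hy', ha', hb']
      have hintg : 1 ≤ a * a - 3 * a * b + 3 * b * b := by
        by_contra hc
        have h1 : 4 * (a * a - 3 * a * b + 3 * b * b) = (2 * a - 3 * b) * (2 * a - 3 * b) +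
            3 * (b * b) := by ring
        have h2 : 0 ≤ (2 * a - 3 * b) * (2 * a - 3 * b) := mul_self_nonneg _
        have h3 : 0 ≤ b * b := mul_self_nonneg _
        have hb0 : b = 0 := mul_self_eq_zero.1 (by omega)
        have ha0 : 2 * a - 3 * b = 0 := mul_self_eq_zero.1 (by omega)
        apply h0
        have : a = 0 := by omega
        rw [ha', hb', this, hb0]; simp
      have hr : (1 : ℝ) ≤ a * a - 3 * a * b + 3 * b * b := by exact_mod_cast hintg
      nlinarith
    · obtain ⟨a', hca, -⟩ := h.refl β hβ α hα
      rw [hβN, real_inner_comm, ha'] at hca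
      have haa : (a : ℝ) = 3 * a' := by
        have : (a : ℝ) * N = (3 * a') * N := by linarith
        exact mul_right_cancel₀ hNpos.ne' this
      rw [hβN, hx', hy', ha', hb', haa]
      have hintg : 1 ≤ 3 * a' * a' - 3 * a' * b + b * b := by
        by_contra hc
        have h1 : 4 * (3 * a' * a' - 3 * a' * b + b * b) = (2 * b - 3 * a') * (2 * b - 3 * a') +
            3 * (a' * a') := by ring
        have h2 : 0 ≤ (2 * b - 3 * a') * (2 * b - 3 * a') := mul_self_nonneg _
        have h3 : 0 ≤ a' * a' := mul_self_nonneg _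
        have hb0 : a' = 0 := mul_self_eq_zero.1 (by omega)
        have ha0 : 2 * b - 3 * a' = 0 := mul_self_eq_zero.1 (by omega)
        apply h0
        have : b = 0 := by omega
        rw [ha', hb', haa, this, hb0]; simp
      have hr : (1 : ℝ) ≤ 3 * a' * a' - 3 * a' * b + b * b := by exact_mod_cast hintg
      nlinarith
  have hall := hi (Φ.filter (fun β => β ∈ Submodule.span ℝ ({α, γ} : Set E)))
    (Finset.filter_subset _ _)
    ⟨α, Finset.mem_filter.2 ⟨hα, Submodule.subset_span (by simp)⟩⟩ (by
      intro x hx y hy hn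
      have hx' := (Finset.mem_filter.1 hx).2
      rcases claim y hy with h1 | h1
      · obtain ⟨s, t, rfl⟩ := Submodule.mem_span_pair.1 hx'
        rw [inner_add_left, real_inner_smul_left, real_inner_smul_left, h1.1, h1.2]; simp
      · exact absurd (Finset.mem_filter.2 ⟨hy, h1⟩) hn)
  have hle : Submodule.span ℝ (Φ : Set E) ≤ Submodule.span ℝ ((({α, γ} : Finset E)) : Set E) := by
    rw [Submodule.span_le]
    intro x hx
    rw [← hall] at hx
    have := (Finset.mem_filter.1 (Finset.mem_coe.1 hx)).2
    simpa using this
  refine (Submodule.finrank_mono hle).trans ((finrank_span_finset_le_card _).trans ?_)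
  exact Finset.card_le_two

end IsRS


/-- irreducible root system with two root lengths of ratio two -/
structure R2 {E : Type*} [NormedAddCommGroup E] [InnerProductSpace ℝ E] (Φ : Finset E) (N : ℝ) :
    Prop where
  rs : IsRS Φ
  irr : Irr Φ
  pos : 0 < N
  norms : ∀ α ∈ Φ, inner ℝ α α = N ∨ inner ℝ α α = 2 * N
  short : ∃ α ∈ Φ, inner ℝ α α = N
  long : ∃ α ∈ Φ, inner ℝ α α = 2 * N

/-- reflection -/
def rf {E : Type*} [NormedAddCommGroup E] [InnerProductSpace ℝ E] (ρ : E) : E →ₗ[ℝ] E :=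
  LinearMap.id - ((2 / inner ℝ ρ ρ : ℝ) • (innerₗ E ρ)).smulRight ρ

section
variable {E : Type*} [NormedAddCommGroup E] [InnerProductSpace ℝ E] {Φ : Finset E}

lemma rf_apply (ρ x : E) : rf ρ x = x - (2 / inner ℝ ρ ρ * inner ℝ ρ x : ℝ) • ρ := by
  simp [rf]

lemma rf_eq (h : IsRS Φ) {ρ x : E} (hρ : ρ ∈ Φ) {c : ℝ}
    (hc : 2 * inner ℝ ρ x = c * inner ℝ ρ ρ) : x - c • ρ = rf ρ x := by
  rw [rf_apply]
  have := h.pos hρ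
  congr 2
  field_simp
  linarith

lemma rf_mem (h : IsRS Φ) {ρ x : E} (hρ : ρ ∈ Φ) (hx : x ∈ Φ) : rf ρ x ∈ Φ := by
  rw [rf_apply]
  apply h.refl_mem hρ hx
  have := (h.pos hρ).ne'
  field_simp

lemma rf_inner (h : IsRS Φ) {ρ : E} (hρ : ρ ∈ Φ) (x y : E) :
    inner ℝ (rf ρ x) (rf ρ y) = inner ℝ x y := by
  rw [rf_apply, rf_apply, inner_sub_left, inner_sub_right, inner_sub_right, real_inner_smul_left,
    real_inner_smul_left, real_inner_smul_right, real_inner_smul_right, real_inner_comm ρ x]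
  have := (h.pos hρ).ne'
  field_simp
  ring

/-- stability via the reflection maps -/
lemma stab_of (h : IsRS Φ) {p : E → Prop} (hp : ∀ ρ ∈ Φ, ∀ x ∈ Φ, p x → p (rf ρ x)) :
    Stab Φ p := by
  intro α hα β hβ c hc hb
  rw [rf_eq h hα hc]
  exact hp α hα β hβ hb

end

namespace R2
variable {E : Type*} [NormedAddCommGroup E] [InnerProductSpace ℝ E] {Φ : Finset E} {N : ℝ}

lemma ls (h : R2 Φ N) {e γ : E} (he : e ∈ Φ) (hγ : γ ∈ Φ) (hen : inner ℝ e e = N)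
    (hγn : inner ℝ γ γ = 2 * N) : inner ℝ e γ = 0 ∨ inner ℝ e γ = N ∨ inner ℝ e γ = -N := by
  by_cases h0 : inner ℝ e γ = 0
  · left; exact h0
  right
  have hp := h.pos
  have := (h.rs.NR he hγ h0 (by rw [hen, hγn]; linarith)).2
  rw [hγn] at this
  rcases this with h1 | h1
  · left; linarith
  · right; linarith

lemma ss (h : R2 Φ N) {e f : E} (he : e ∈ Φ) (hf : f ∈ Φ) (hen : inner ℝ e e = N)
    (hfn : inner ℝ f f = N) : f = e ∨ inner ℝ e f = N / 2 ∨ inner ℝ e f = 0 ∨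
      inner ℝ e f = -(N / 2) ∨ f = -e := by
  rcases h.rs.vals he hf (by rw [hen, hfn]) with h1 | h1 | h1 | h1 | h1
  · left; exact h1
  · right; left; rw [hen] at h1; linarith
  · right; right; left; exact h1
  · right; right; right; left; rw [hen] at h1; linarith
  · right; right; right; right; exact h1

/-- subtraction of a short root from a long one -/
lemma long_sub (h : R2 Φ N) {e γ : E} (he : e ∈ Φ) (hγ : γ ∈ Φ) (hen : inner ℝ e e = N)
    (hγn : inner ℝ γ γ = 2 * N) (hi : inner ℝ e γ = N) :
    γ - e ∈ Φ ∧ inner ℝ (γ - e) (γ - e) = N ∧ inner ℝ e (γ - e) = 0 := by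
  have h1 := h.rs.refl_mem hγ he 1 (by rw [real_inner_comm, hi, hγn, one_mul])
  rw [one_smul] at h1
  have h2 := h.rs.neg_mem h1
  rw [neg_sub] at h2
  refine ⟨h2, ?_, ?_⟩
  · rw [inner_sub_left, inner_sub_right, inner_sub_right, hγn, hen, hi, real_inner_comm, hi]; ring
  · rw [inner_sub_right, hi, hen, sub_self]

lemma decomp (h : R2 Φ N) {γ : E} (hγ : γ ∈ Φ) (hγn : inner ℝ γ γ = 2 * N) :
    ∃ e ∈ Φ, ∃ e' ∈ Φ, inner ℝ e e = N ∧ inner ℝ e' e' = N ∧ inner ℝ e e' = 0 ∧ γ = e + e' := by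
  obtain ⟨α, hα, hαN⟩ := h.short
  obtain ⟨e, he, hen, hp⟩ := h.rs.TRn h.irr hγ hα
  rw [hαN] at hen
  have hi : inner ℝ e γ = N := by
    have := h.pos
    rcases h.ls he hγ hen hγn with h1 | h1 | h1 <;> linarith
  obtain ⟨h1, h2, h3⟩ := h.long_sub he hγ hen hγn hi
  exact ⟨e, he, γ - e, h1, hen, h2, h3, by abel⟩

lemma sum_norm {e f : E} (hen : inner ℝ e e = N)
    (hfn : inner ℝ f f = N) (hi : inner ℝ e f = 0) : inner ℝ (e + f) (e + f) = 2 * N ∧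
    inner ℝ (e - f) (e - f) = 2 * N := by
  rw [inner_sub_left, inner_sub_right, inner_sub_right, inner_add_left, inner_add_right,
    inner_add_right, real_inner_comm e f, hen, hfn, hi]
  constructor <;> ring

lemma add_of_sub (h : R2 Φ N) {e f : E} (hf : f ∈ Φ)
    (hi : inner ℝ e f = 0) (hm : e - f ∈ Φ) : e + f ∈ Φ := by
  have := h.rs.refl_mem hf hm (-2) (by rw [inner_sub_right, real_inner_comm, hi]; ring)
  have e1 : e - f - (-2 : ℝ) • f = e + f := by rw [neg_smul, two_smul]; abel
  rwa [e1] at this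

lemma sub_of_add (h : R2 Φ N) {e f : E} (hf : f ∈ Φ)
    (hi : inner ℝ e f = 0) (hm : e + f ∈ Φ) : e - f ∈ Φ := by
  have := h.rs.refl_mem hf hm 2 (by rw [inner_add_right, real_inner_comm, hi]; ring)
  have e1 : e + f - (2 : ℝ) • f = e - f := by rw [two_smul]; abel
  rwa [e1] at this

/-- case A: shorts are orthogonal or parallel, then differences of orthogonal shorts are roots -/
lemma A_diff (h : R2 Φ N)
    (hA : ∀ α ∈ Φ, ∀ β ∈ Φ, inner ℝ α α = N → inner ℝ β β = N →
      β = α ∨ β = -α ∨ inner ℝ α β = 0)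
    {α β : E} (hα : α ∈ Φ) (hβ : β ∈ Φ) (hαn : inner ℝ α α = N) (hβn : inner ℝ β β = N)
    (hi : inner ℝ α β = 0) : α - β ∈ Φ := by
  let q : E → Prop := fun σ => σ = α ∨ σ = -α ∨ (α - σ ∈ Φ ∧ α + σ ∈ Φ)
  have hqneg : ∀ σ, q σ → q (-σ) := by
    rintro σ (h1 | h1 | h1)
    · right; left; rw [h1]
    · left; rw [h1, neg_neg]
    · right; right; rw [sub_neg_eq_add, ← sub_eq_add_neg]; exact ⟨h1.2, h1.1⟩
  have hpos := h.pos
  have hstep : ∀ σ ∈ Φ, ∀ τ ∈ Φ, inner ℝ σ σ = N → inner ℝ τ τ = N → inner ℝ σ τ = 0 →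
      σ + τ ∈ Φ → σ - τ ∈ Φ → q σ → q τ := by
    intro σ hσ τ hτ hσn hτn hst hp hm hq
    rcases hq with h1 | h1 | h1
    · subst h1; right; right; exact ⟨hm, hp⟩
    · subst h1
      right; right
      have a := h.rs.neg_mem hp
      have b := h.rs.neg_mem hm
      rw [neg_add, neg_neg] at a
      rw [neg_sub, sub_neg_eq_add] at b
      refine ⟨by rwa [sub_eq_add_neg], by rwa [add_comm]⟩
    · by_cases hαn' : inner ℝ α τ = 0
      · by_cases hασ : inner ℝ α σ = 0
        · right; right
          constructor
          · have := h.rs.add_mem hm h1.1 (by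
              rw [inner_sub_left, inner_sub_left, inner_sub_right, inner_sub_right,
                inner_sub_right, inner_sub_right, hσn, hst, real_inner_comm, hασ, hτn,
                real_inner_comm α τ, hαn', real_inner_comm, hst]; ring)
            have e1 : α - σ + (σ - τ) = α - τ := by abel
            rwa [e1] at this
          · have := h.rs.add_mem hp h1.1 (by
              rw [inner_add_left, inner_add_left, inner_sub_right, inner_add_right,
                inner_sub_right, inner_add_right, hσn, hst, real_inner_comm, hασ, hτn,
                real_inner_comm α τ, hαn', real_inner_comm, hst]; ring)
            have e1 : α - σ + (σ + τ) = α + τ := by abel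
            rwa [e1] at this
        · rcases hA α hα σ hσ hαn hσn with h2 | h2 | h2
          · rw [h2, sub_self] at h1; exact absurd h1.1 h.rs.ne0
          · rw [h2, add_neg_cancel] at h1; exact absurd h1.2 h.rs.ne0
          · exact absurd h2 hασ
      · rcases hA α hα τ hτ hαn hτn with h2 | h2 | h2
        · left; exact h2
        · right; left; exact h2
        · exact absurd h2 hαn'
  have hst : Stab Φ (fun σ => inner ℝ σ σ = N ∧ q σ) := by
    intro ρ hρ σ hσ c hc hp
    obtain ⟨hσn, hq⟩ := hp
    refine ⟨by rw [IsRS.inner_refl_refl hc, hσn], ?_⟩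
    have hρp := h.rs.pos hρ
    have hceq : ∀ c', 2 * inner ℝ ρ σ = c' * inner ℝ ρ ρ → c = c' := by
      intro c' hc'
      exact mul_right_cancel₀ hρp.ne' (hc.symm.trans hc')
    by_cases h0 : inner ℝ ρ σ = 0
    · rw [hceq 0 (by rw [h0]; ring), zero_smul, sub_zero]; exact hq
    rcases h.norms ρ hρ with hρn | hρn
    · rcases hA ρ hρ σ hσ hρn hσn with h1 | h1 | h1
      · rw [hceq 2 (by rw [h1]), ← h1]
        have e1 : σ - (2 : ℝ) • σ = -σ := by rw [two_smul]; abel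
        rw [e1]; exact hqneg σ hq
      · rw [hceq (-2) (by rw [h1, inner_neg_right]; ring)]
        have e1 : σ - (-2 : ℝ) • ρ = -σ := by rw [h1, neg_smul, two_smul]; abel
        rw [e1]; exact hqneg σ hq
      · exact absurd h1 h0
    · obtain ⟨e, he, e', he', hen, hen', hee, hsum⟩ := h.decomp hρ hρn
      have key : ∃ τ ∈ Φ, inner ℝ τ τ = N ∧ inner ℝ σ τ = 0 ∧ (ρ = σ + τ ∨ ρ = -σ + τ) := by
        rcases hA σ hσ e he hσn hen with h4 | h4 | h4
        · exact ⟨e', he', hen', by rw [← h4, hee], Or.inl (by rw [hsum, h4])⟩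
        · refine ⟨e', he', hen', ?_, Or.inr (by rw [hsum, h4])⟩
          rw [h4, inner_neg_left] at hee; linarith
        rcases hA σ hσ e' he' hσn hen' with h5 | h5 | h5
        · exact ⟨e, he, hen, h4, Or.inl (by rw [hsum, h5, add_comm])⟩
        · exact ⟨e, he, hen, h4, Or.inr (by rw [hsum, h5, add_comm])⟩
        exfalso; apply h0
        rw [hsum, real_inner_comm, inner_add_right, h4, h5, add_zero]
      obtain ⟨τ, hτ, hτn, hστ, h1 | h1⟩ := key
      · have hc1 : c = 1 := hceq 1 (by
          rw [hρn, h1, inner_add_left, hσn, real_inner_comm, hστ]; ring)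
        have e1 : σ - c • ρ = -τ := by rw [hc1, one_smul, h1]; abel
        rw [e1]
        have hp : σ + τ ∈ Φ := h1 ▸ hρ
        exact hqneg τ (hstep σ hσ τ hτ hσn hτn hστ hp (h.sub_of_add hτ hστ hp) hq)
      · have hc1 : c = -1 := hceq (-1) (by
          rw [hρn, h1, inner_add_left, inner_neg_left, hσn, real_inner_comm, hστ]; ring)
        have e1 : σ - c • ρ = τ := by rw [hc1, neg_smul, one_smul, h1]; abel
        rw [e1]
        have hm : σ - τ ∈ Φ := by
          have := h.rs.neg_mem hρ
          rw [h1] at this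
          have e2 : -(-σ + τ) = σ - τ := by abel
          rwa [e2] at this
        exact hstep σ hσ τ hτ hσn hτn hστ (h.add_of_sub hτ hστ hm) hm hq
  have := (h.rs.conj h.irr hst hα ⟨hαn, Or.inl rfl⟩ hβ (by rw [hβn, hαn])).2
  rcases this with h1 | h1 | h1
  · rw [h1, hαn] at hi; linarith
  · rw [h1, inner_neg_right, hαn] at hi; linarith
  · exact h1.1

theorem countA [FiniteDimensional ℝ E] (h : R2 Φ N)
    (hA : ∀ α ∈ Φ, ∀ β ∈ Φ, inner ℝ α α = N → inner ℝ β β = N →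
      β = α ∨ β = -α ∨ inner ℝ α β = 0)
    {T : Type*} [AddCommGroup T] [Module ℝ T] (L : E →ₗ[ℝ] T) (κs κl : T)
    (hκ : ∀ a b : ℝ, a • κs + b • κl = 0 → a = 0 ∧ b = 0) :
    (Φ.filter (fun α => inner ℝ α α = N ∧ L α = κs)).card +
      (Φ.filter (fun α => inner ℝ α α = 2 * N ∧ L α = κl)).card ≤
      (Φ.filter (fun α => L α = 0)).card + Module.finrank ℝ (Submodule.span ℝ (Φ : Set E)) := by
  apply h.rs.caseA h.pos hA _ _ L κs κl hκ
  · intro α hα β hβ h1 h2 h3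
    exact h.A_diff hA hα hβ h1 h2 h3
  · intro γ hγ hγn
    obtain ⟨e, he, e', he', h1, h2, -, h3⟩ := h.decomp hγ hγn
    exact ⟨e, he, e', he', h1, h2, h3⟩

end R2


/-- (rescaled) coroot -/
def du {E : Type*} [NormedAddCommGroup E] [InnerProductSpace ℝ E] (N : ℝ) (α : E) : E :=
  (2 * N / inner ℝ α α : ℝ) • α

namespace R2
variable {E : Type*} [NormedAddCommGroup E] [InnerProductSpace ℝ E] {Φ : Finset E} {N : ℝ}

lemma du_short (h : R2 Φ N) {α : E} (hα : inner ℝ α α = N) : du N α = (2 : ℝ) • α := by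
  have := h.pos.ne'
  rw [du, hα]
  congr 1
  field_simp

lemma du_long (h : R2 Φ N) {α : E} (hα : inner ℝ α α = 2 * N) : du N α = α := by
  have := h.pos.ne'
  rw [du, hα, div_self (by positivity), one_smul]

lemma du_inner (α β : E) : inner ℝ (du N α) (du N β) =
    (2 * N / inner ℝ α α) * (2 * N / inner ℝ β β) * inner ℝ α β := by
  rw [du, du, real_inner_smul_left, real_inner_smul_right]; ring

lemma du_norm (h : R2 Φ N) {α : E} (hα : α ∈ Φ) : inner ℝ (du N α) (du N α) =
    4 * N * N / inner ℝ α α := by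
  have := (h.rs.pos hα).ne'
  rw [du_inner]; field_simp; ring

lemma du_inj (h : R2 Φ N) {α β : E} (hα : α ∈ Φ) (hβ : β ∈ Φ) (heq : du N α = du N β) : α = β := by
  have h1 := h.du_norm hα
  have h2 := h.du_norm hβ
  rw [heq, h2] at h1
  have p1 := (h.rs.pos hα).ne'
  have p2 := (h.rs.pos hβ).ne'
  have p := h.pos.ne'
  have h3 : inner ℝ α α = inner ℝ β β := by field_simp at h1; exact h1
  rw [du, du, h3] at heq
  exact smul_right_injective E (r := (2 * N / inner ℝ β β : ℝ)) (by positivity) heq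

lemma dual (h : R2 Φ N) : R2 (Φ.image (du N)) (2 * N) := by
  have hp := h.pos
  have hN0 := hp.ne'
  have hrs : IsRS (Φ.image (du N)) := by
    refine ⟨?_, ?_, ?_⟩
    · intro h0
      obtain ⟨α, hα, h1⟩ := Finset.mem_image.1 h0
      have p1 := h.rs.pos hα
      rw [du, smul_eq_zero] at h1
      rcases h1 with h1 | h1
      · have : 0 < 2 * N / inner ℝ α α := by positivity
        linarith
      · rw [h1] at hα; exact h.rs.ne0 hα
    · intro a ha b hb
      obtain ⟨α, hα, rfl⟩ := Finset.mem_image.1 ha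
      obtain ⟨β, hβ, rfl⟩ := Finset.mem_image.1 hb
      have p1 := (h.rs.pos hα).ne'
      have p2 := (h.rs.pos hβ).ne'
      obtain ⟨z, hz, hm⟩ := h.rs.refl α hα β hβ
      obtain ⟨w, hw, -⟩ := h.rs.refl β hβ α hα
      rw [real_inner_comm] at hw
      refine ⟨w, ?_, ?_⟩
      · rw [du_inner, h.du_norm hα]
        field_simp
        linear_combination 4 * hw
      · refine Finset.mem_image.2 ⟨_, hm, ?_⟩
        rw [du, IsRS.inner_refl_refl hz, smul_sub, du, du, smul_smul, smul_smul]
        congr 2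
        have hzw : (z : ℝ) * inner ℝ α α = w * inner ℝ β β := by rw [← hz, hw]
        field_simp
        linear_combination hzw
    · intro a ha c hc
      obtain ⟨α, hα, rfl⟩ := Finset.mem_image.1 ha
      obtain ⟨β, hβ, h1⟩ := Finset.mem_image.1 hc
      have p1 := h.rs.pos hα
      have p2 := h.rs.pos hβ
      have hβ' : β = (inner ℝ β β / inner ℝ α α * c) • α := by
        rw [du, du, smul_smul] at h1
        have := congrArg (fun x => (inner ℝ β β / (2 * N) : ℝ) • x) h1
        simp only [smul_smul] at this
        have e1 : inner ℝ β β / (2 * N) * (2 * N / inner ℝ β β) = 1 := by field_simp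
        rw [e1, one_smul] at this
        refine this.trans ?_
        congr 1
        field_simp
      have h2 := h.rs.red α hα _ (hβ' ▸ hβ)
      have h3 : inner ℝ β β = inner ℝ α α := by
        rcases h2 with h2 | h2 <;> rw [h2] at hβ' <;> rw [hβ'] <;> simp
      rw [h3, div_self p1.ne', one_mul] at h2
      exact h2
  refine ⟨hrs, ?_, by linarith, ?_, ?_, ?_⟩
  · intro S hS hne ho
    have := h.irr (Φ.filter (fun α => du N α ∈ S)) (Finset.filter_subset _ _) ?_ ?_
    · apply Finset.Subset.antisymm hS
      intro x hx
      obtain ⟨α, hα, rfl⟩ := Finset.mem_image.1 hx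
      rw [← this] at hα
      exact (Finset.mem_filter.1 hα).2
    · obtain ⟨x, hx⟩ := hne
      obtain ⟨α, hα, rfl⟩ := Finset.mem_image.1 (hS hx)
      exact ⟨α, Finset.mem_filter.2 ⟨hα, hx⟩⟩
    · intro α hα β hβ hn
      obtain ⟨hα1, hα2⟩ := Finset.mem_filter.1 hα
      have h1 := ho _ hα2 (du N β) (Finset.mem_image_of_mem _ hβ)
        (fun h2 => hn (Finset.mem_filter.2 ⟨hβ, h2⟩))
      rw [du_inner] at h1
      have p1 := h.rs.pos hα1
      have p2 := h.rs.pos hβ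
      rcases mul_eq_zero.1 h1 with h2 | h2
      · have : 0 < 2 * N / inner ℝ α α * (2 * N / inner ℝ β β) := by positivity
        linarith
      · exact h2
  · intro a ha
    obtain ⟨α, hα, rfl⟩ := Finset.mem_image.1 ha
    rw [h.du_norm hα]
    rcases h.norms α hα with h1 | h1
    · right; rw [h1]; field_simp; norm_num
    · left; rw [h1]; field_simp; norm_num
  · obtain ⟨α, hα, h1⟩ := h.long
    exact ⟨_, Finset.mem_image_of_mem _ hα, by rw [h.du_norm hα, h1]; field_simp; norm_num⟩
  · obtain ⟨α, hα, h1⟩ := h.short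
    exact ⟨_, Finset.mem_image_of_mem _ hα, by rw [h.du_norm hα, h1]; field_simp; norm_num⟩

/-- short roots of the dual are the long roots -/
lemma dual_short (h : R2 Φ N) {x : E} (hx : x ∈ Φ.image (du N)) (hn : inner ℝ x x = 2 * N) :
    x ∈ Φ := by
  obtain ⟨α, hα, rfl⟩ := Finset.mem_image.1 hx
  have hp := h.pos
  rcases h.norms α hα with h1 | h1
  · exfalso
    rw [h.du_norm hα, h1] at hn
    field_simp at hn
    linarith
  · rwa [h.du_long h1]

lemma dual_long (h : R2 Φ N) {x : E} (hx : x ∈ Φ.image (du N)) (hn : inner ℝ x x = 2 * (2 * N)) :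
    ∃ α ∈ Φ, inner ℝ α α = N ∧ x = (2 : ℝ) • α := by
  obtain ⟨α, hα, rfl⟩ := Finset.mem_image.1 hx
  have hp := h.pos
  rcases h.norms α hα with h1 | h1
  · exact ⟨α, hα, h1, h.du_short h1⟩
  · exfalso
    rw [h.du_long h1, h1] at hn
    linarith

lemma mem_dual_of_long (h : R2 Φ N) {x : E} (hx : x ∈ Φ) (hn : inner ℝ x x = 2 * N) :
    x ∈ Φ.image (du N) := Finset.mem_image.2 ⟨x, hx, h.du_long hn⟩

lemma mem_dual_of_short (h : R2 Φ N) {x : E} (hx : x ∈ Φ) (hn : inner ℝ x x = N) :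
    (2 : ℝ) • x ∈ Φ.image (du N) := Finset.mem_image.2 ⟨x, hx, h.du_short hn⟩

theorem countC [FiniteDimensional ℝ E] (h : R2 Φ N)
    (hC : ∀ α ∈ Φ, ∀ β ∈ Φ, inner ℝ α α = 2 * N → inner ℝ β β = 2 * N →
      β = α ∨ β = -α ∨ inner ℝ α β = 0)
    {T : Type*} [AddCommGroup T] [Module ℝ T] (L : E →ₗ[ℝ] T) (κs κl : T)
    (hκ : ∀ a b : ℝ, a • κs + b • κl = 0 → a = 0 ∧ b = 0) :
    (Φ.filter (fun α => inner ℝ α α = N ∧ L α = κs)).card +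
      (Φ.filter (fun α => inner ℝ α α = 2 * N ∧ L α = κl)).card ≤
      (Φ.filter (fun α => L α = 0)).card + Module.finrank ℝ (Submodule.span ℝ (Φ : Set E)) := by
  have hp := h.pos
  have key := h.dual.countA (fun α hα β hβ h1 h2 => hC α (h.dual_short hα h1) β
    (h.dual_short hβ h2) h1 h2) L κl ((2 : ℝ) • κs) (by
      intro a b hab
      have := hκ (b * 2) a (by rw [mul_smul, add_comm]; exact hab)
      exact ⟨this.2, by linarith [this.1]⟩)
  have c1 : (Φ.filter (fun α => inner ℝ α α = 2 * N ∧ L α = κl)).card ≤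
      ((Φ.image (du N)).filter (fun α => inner ℝ α α = 2 * N ∧ L α = κl)).card := by
    apply Finset.card_le_card
    intro x hx
    obtain ⟨h1, h2⟩ := Finset.mem_filter.1 hx
    exact Finset.mem_filter.2 ⟨h.mem_dual_of_long h1 h2.1, h2⟩
  have c2 : (Φ.filter (fun α => inner ℝ α α = N ∧ L α = κs)).card ≤
      ((Φ.image (du N)).filter (fun α => inner ℝ α α = 2 * (2 * N) ∧
        L α = (2 : ℝ) • κs)).card := by
    apply Finset.card_le_card_of_injOn (fun x => (2 : ℝ) • x)
    · intro x hx
      obtain ⟨h1, h2, h3⟩ := Finset.mem_filter.1 hx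
      refine Finset.mem_filter.2 ⟨h.mem_dual_of_short h1 h2, ?_, ?_⟩
      · rw [real_inner_smul_left, real_inner_smul_right, h2]
      · rw [map_smul, h3]
    · intro x _ y _ hxy
      exact smul_right_injective E (r := (2 : ℝ)) (by norm_num) hxy
  have c3 : ((Φ.image (du N)).filter (fun α => L α = 0)).card ≤
      (Φ.filter (fun α => L α = 0)).card := by
    refine le_trans (Finset.card_le_card ?_) (Finset.card_image_le (f := du N))
    intro x hx
    obtain ⟨h1, h2⟩ := Finset.mem_filter.1 hx
    obtain ⟨α, hα, rfl⟩ := Finset.mem_image.1 h1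
    refine Finset.mem_image_of_mem _ (Finset.mem_filter.2 ⟨hα, ?_⟩)
    rw [du, map_smul, smul_eq_zero] at h2
    rcases h2 with h2 | h2
    · have := h.rs.pos hα
      have : 0 < 2 * N / inner ℝ α α := by positivity
      linarith
    · exact h2
  have c4 : Module.finrank ℝ (Submodule.span ℝ ((Φ.image (du N) : Finset E) : Set E)) ≤
      Module.finrank ℝ (Submodule.span ℝ (Φ : Set E)) := by
    apply Submodule.finrank_mono
    rw [Submodule.span_le]
    intro x hx
    obtain ⟨α, hα, rfl⟩ := Finset.mem_image.1 (Finset.mem_coe.1 hx)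
    exact Submodule.smul_mem _ _ (Submodule.subset_span hα)
  omega

end R2


namespace R2
variable {E : Type*} [NormedAddCommGroup E] [InnerProductSpace ℝ E] {Φ : Finset E} {N : ℝ}

/-- `σ` is short with two orthogonal companions -/
def T3 (Φ : Finset E) (N : ℝ) (σ : E) : Prop :=
  ∃ x ∈ Φ, ∃ y ∈ Φ, inner ℝ x x = N ∧ inner ℝ y y = N ∧ inner ℝ σ x = 0 ∧ inner ℝ σ y = 0 ∧
    inner ℝ x y = 0 ∧ σ - x ∈ Φ ∧ σ - y ∈ Φ

def S4 (Φ : Finset E) (N : ℝ) (σ : E) : Prop :=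
  ∃ x ∈ Φ, ∃ y ∈ Φ, ∃ z ∈ Φ, inner ℝ x x = N ∧ inner ℝ y y = N ∧ inner ℝ z z = N ∧
    inner ℝ σ x = 0 ∧ inner ℝ σ y = 0 ∧ inner ℝ σ z = 0 ∧
    inner ℝ x y = 0 ∧ inner ℝ x z = 0 ∧ inner ℝ y z = 0 ∧ σ - x ∈ Φ ∧ σ - y ∈ Φ ∧ σ - z ∈ Φ

/-- `σ` has a neighbour at angle 60 degrees -/
def Nb (Φ : Finset E) (N : ℝ) (σ : E) : Prop :=
  ∃ x ∈ Φ, inner ℝ x x = N ∧ inner ℝ σ x = N / 2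

lemma T3_stab (h : R2 Φ N) : Stab Φ (T3 Φ N) := by
  refine stab_of h.rs ?_
  rintro ρ hρ σ hσ ⟨x, hx, y, hy, h1, h2, h3, h4, h5, h6, h7⟩
  refine ⟨rf ρ x, rf_mem h.rs hρ hx, rf ρ y, rf_mem h.rs hρ hy, ?_⟩
  simp only [rf_inner h.rs hρ, ← map_sub]
  exact ⟨h1, h2, h3, h4, h5, rf_mem h.rs hρ h6, rf_mem h.rs hρ h7⟩

lemma S4_stab (h : R2 Φ N) : Stab Φ (S4 Φ N) := by
  refine stab_of h.rs ?_
  rintro ρ hρ σ hσ ⟨x, hx, y, hy, z, hz, a1, a2, a3, a4, a5, a6, a7, a8, a9, h5, h6, h7⟩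
  refine ⟨rf ρ x, rf_mem h.rs hρ hx, rf ρ y, rf_mem h.rs hρ hy, rf ρ z, rf_mem h.rs hρ hz, ?_⟩
  simp only [rf_inner h.rs hρ, ← map_sub]
  exact ⟨a1, a2, a3, a4, a5, a6, a7, a8, a9,
    rf_mem h.rs hρ h5, rf_mem h.rs hρ h6, rf_mem h.rs hρ h7⟩

lemma Nb_stab (h : R2 Φ N) : Stab Φ (Nb Φ N) := by
  refine stab_of h.rs ?_
  rintro ρ hρ σ hσ ⟨x, hx, h1, h2⟩
  refine ⟨rf ρ x, rf_mem h.rs hρ hx, ?_⟩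
  simp only [rf_inner h.rs hρ]
  exact ⟨h1, h2⟩

lemma allNb (h : R2 Φ N)
    (hA : ¬ ∀ α ∈ Φ, ∀ β ∈ Φ, inner ℝ α α = N → inner ℝ β β = N →
      β = α ∨ β = -α ∨ inner ℝ α β = 0) {σ : E} (hσ : σ ∈ Φ) (hn : inner ℝ σ σ = N) :
    Nb Φ N σ := by
  push Not at hA
  obtain ⟨α, hα, β, hβ, h1, h2, h3, h4, h5⟩ := hA
  refine h.rs.conj h.irr h.Nb_stab hα ?_ hσ (by rw [hn, h1])
  rcases h.ss hα hβ h1 h2 with h6 | h6 | h6 | h6 | h6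
  · exact absurd h6 h3
  · exact ⟨β, hβ, h2, h6⟩
  · exact absurd h6 h5
  · exact ⟨-β, h.rs.neg_mem hβ, by simpa using h2, by rw [inner_neg_right, h6]; ring⟩
  · exact absurd h6 h4

lemma T3_of (h : R2 Φ N) {γ δ : E} (hγ : γ ∈ Φ) (hδ : δ ∈ Φ) (hγn : inner ℝ γ γ = 2 * N)
    (hδn : inner ℝ δ δ = 2 * N) (hi : inner ℝ γ δ = N) :
    ∃ e ∈ Φ, inner ℝ e e = N ∧ T3 Φ N e := by
  have hp := h.pos
  obtain ⟨e, he, e', he', h1, h2, h3, rfl⟩ := h.decomp hγ hγn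
  wlog hw : inner ℝ e δ = N ∧ inner ℝ e' δ = 0 generalizing e e'
  · refine this e' he' e he h2 h1 (by rw [real_inner_comm]; exact h3) (by rwa [add_comm])
      (by rwa [add_comm]) (by rwa [add_comm]) ?_
    rw [inner_add_left] at hi
    rcases h.ls he hδ h1 hδn with h4 | h4 | h4 <;> rcases h.ls he' hδ h2 hδn with h5 | h5 | h5
    · exfalso; linarith
    · exact ⟨h5, h4⟩
    · exfalso; linarith
    · exact absurd ⟨h4, h5⟩ hw
    all_goals exfalso; linarith
  obtain ⟨k1, k2, k3⟩ := h.long_sub he hδ h1 hδn hw.1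
  refine ⟨e, he, h1, e', he', δ - e, k1, h2, k2, h3, k3, ?_, h.sub_of_add he' h3 hγ,
    h.sub_of_add k1 k3 (by rwa [add_sub_cancel])⟩
  rw [inner_sub_right, hw.2, real_inner_comm, h3, sub_zero]

lemma half_trans (h : R2 Φ N) {a b σ : E} (hb : b ∈ Φ) (hσ : σ ∈ Φ)
    (han : inner ℝ a a = N) (hbn : inner ℝ b b = N) (hσn : inner ℝ σ σ = N)
    (hab : inner ℝ a b = 0) (hm : a - b ∈ Φ)
    (hh : inner ℝ σ a = N / 2 ∨ inner ℝ σ a = -(N / 2)) :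
    inner ℝ σ b = N / 2 ∨ inner ℝ σ b = -(N / 2) := by
  have hp := h.pos
  have h1 := h.ls hσ hm hσn (sum_norm han hbn hab).2
  rw [inner_sub_right] at h1
  have h2 : inner ℝ σ b = N ∨ inner ℝ σ b = N / 2 ∨ inner ℝ σ b = 0 ∨ inner ℝ σ b = -(N / 2) ∨
      inner ℝ σ b = - N := by
    rcases h.ss hσ hb hσn hbn with h2 | h2 | h2 | h2 | h2
    · left; rw [h2, hσn]
    · right; left; exact h2
    · right; right; left; exact h2
    · right; right; right; left; exact h2
    · right; right; right; right; rw [h2, inner_neg_right, hσn]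
  rcases h2 with h2 | h2 | h2 | h2 | h2
  · exfalso; rcases h1 with h1 | h1 | h1 <;> rcases hh with hh | hh <;> linarith
  · left; exact h2
  · exfalso; rcases h1 with h1 | h1 | h1 <;> rcases hh with hh | hh <;> linarith
  · right; exact h2
  · exfalso; rcases h1 with h1 | h1 | h1 <;> rcases hh with hh | hh <;> linarith

lemma half_dich (h : R2 Φ N) {b σ : E} (hb : b ∈ Φ) (hσ : σ ∈ Φ)
    (hbn : inner ℝ b b = N) (hσn : inner ℝ σ σ = N) :
    σ = b ∨ σ = -b ∨ inner ℝ σ b = 0 ∨ (inner ℝ σ b = N / 2 ∨ inner ℝ σ b = -(N / 2)) := by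
  rcases h.ss hb hσ hbn hσn with h2 | h2 | h2 | h2 | h2
  · left; exact h2
  · right; right; right; left; rw [real_inner_comm]; exact h2
  · right; right; left; rw [real_inner_comm]; exact h2
  · right; right; right; right; rw [real_inner_comm]; exact h2
  · right; left; exact h2

/-- sign normalisation -/
lemma T3_flip (h : R2 Φ N) {α β e : E} (he : e ∈ Φ) (hβ : β ∈ Φ)
    (hα : inner ℝ α α = N) (hen : inner ℝ e e = N) (hβn : inner ℝ β β = N)
    (ho : inner ℝ α e = 0) (hm : α - e ∈ Φ) (hab : inner ℝ β α = N / 2) :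
    ∃ s : ℝ, (s = 1 ∨ s = -1) ∧ s • e ∈ Φ ∧ inner ℝ β (s • e) = N / 2 ∧ α + s • e ∈ Φ := by
  rcases h.half_trans he hβ hα hen hβn ho hm (Or.inl hab) with h1 | h1
  · exact ⟨1, Or.inl rfl, by rwa [one_smul], by rwa [one_smul],
      by rw [one_smul]; exact h.add_of_sub he ho hm⟩
  · refine ⟨-1, Or.inr rfl, by rw [neg_smul, one_smul]; exact h.rs.neg_mem he,
      by rw [neg_smul, one_smul, inner_neg_right, h1]; ring, ?_⟩
    rw [neg_smul, one_smul, ← sub_eq_add_neg]; exact hm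

lemma S4_of (h : R2 Φ N) {α β : E} (hβ : β ∈ Φ)
    (hαn : inner ℝ α α = N) (hβn : inner ℝ β β = N) (hi : inner ℝ α β = N / 2)
    (ht : T3 Φ N α) : S4 Φ N β := by
  have hp := h.pos
  obtain ⟨x0, hx0, y0, hy0, h1, h2, h3, h4, h5, h6, h7⟩ := ht
  rw [real_inner_comm] at hi
  obtain ⟨s, hs, hx, ix, px⟩ := h.T3_flip hx0 hβ hαn h1 hβn h3 h6 hi
  obtain ⟨t, htt, hy, iy, py⟩ := h.T3_flip hy0 hβ hαn h2 hβn h4 h7 hi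
  have hs2 : s * s = 1 := by rcases hs with rfl | rfl <;> norm_num
  have ht2 : t * t = 1 := by rcases htt with rfl | rfl <;> norm_num
  have nx : inner ℝ (s • x0) (s • x0) = N := by
    rw [real_inner_smul_left, real_inner_smul_right, h1, ← mul_assoc, hs2, one_mul]
  have ny : inner ℝ (t • y0) (t • y0) = N := by
    rw [real_inner_smul_left, real_inner_smul_right, h2, ← mul_assoc, ht2, one_mul]
  have oxy : inner ℝ (s • x0) (t • y0) = 0 := by
    rw [real_inner_smul_left, real_inner_smul_right, h5]; ring
  have oαx : inner ℝ α (s • x0) = 0 := by rw [real_inner_smul_right, h3]; ring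
  have oαy : inner ℝ α (t • y0) = 0 := by rw [real_inner_smul_right, h4]; ring
  generalize s • x0 = x at *
  generalize t • y0 = y at *
  have nαx := (sum_norm hαn nx oαx).1
  have nαy := (sum_norm hαn ny oαy).1
  have nxy := (sum_norm nx ny oxy).1
  have mxy' : x - y ∈ Φ := by
    have := h.rs.sub_mem py px (by
      rw [nαy]
      simp only [inner_add_left, inner_add_right, hαn, oαx, real_inner_comm x y, oxy,
        real_inner_comm α y, oαy]
      ring)
    simpa using this
  have mxy := h.add_of_sub hy oxy mxy'
  have rx := h.rs.sub_mem px hβ (by rw [nαx, real_inner_comm, inner_add_right, hi, ix]; ring)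
  have ry := h.rs.sub_mem py hβ (by rw [nαy, real_inner_comm, inner_add_right, hi, iy]; ring)
  have rz := h.rs.sub_mem mxy hβ (by rw [nxy, real_inner_comm, inner_add_right, ix, iy]; ring)
  have c1 := real_inner_comm α β
  have c2 := real_inner_comm x β
  have c3 := real_inner_comm y β
  have c4 := real_inner_comm x α
  have c5 := real_inner_comm y α
  have c6 := real_inner_comm y x
  refine ⟨_, rx, _, ry, _, rz, ?_, ?_, ?_, ?_, ?_, ?_, ?_, ?_, ?_, ?_, ?_, ?_⟩
  iterate 9
    simp only [inner_sub_left, inner_sub_right, inner_add_left, inner_add_right]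
    linarith
  · rw [sub_sub_cancel]; exact px
  · rw [sub_sub_cancel]; exact py
  · rw [sub_sub_cancel]; exact mxy

lemma allS4 (h : R2 Φ N)
    (hA : ¬ ∀ α ∈ Φ, ∀ β ∈ Φ, inner ℝ α α = N → inner ℝ β β = N →
      β = α ∨ β = -α ∨ inner ℝ α β = 0)
    (hC : ¬ ∀ α ∈ Φ, ∀ β ∈ Φ, inner ℝ α α = 2 * N → inner ℝ β β = 2 * N →
      β = α ∨ β = -α ∨ inner ℝ α β = 0)
    {σ : E} (hσ : σ ∈ Φ) (hn : inner ℝ σ σ = N) : S4 Φ N σ := by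
  have hp := h.pos
  obtain ⟨e, he, hen, het⟩ : ∃ e ∈ Φ, inner ℝ e e = N ∧ T3 Φ N e := by
    push Not at hC
    obtain ⟨α, hα, β, hβ, h1, h2, h3, h4, h5⟩ := hC
    rcases h.rs.vals hα hβ (by rw [h1, h2]) with h6 | h6 | h6 | h6 | h6
    · exact absurd h6 h3
    · exact h.T3_of hα hβ h1 h2 (by linarith)
    · exact absurd h6 h5
    · exact h.T3_of hα (h.rs.neg_mem hβ) h1 (by simpa using h2)
        (by rw [inner_neg_right]; linarith)
    · exact absurd h6 h4
  obtain ⟨β, hβ, hβn, hb⟩ := h.allNb hA he hen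
  exact h.rs.conj h.irr h.S4_stab hβ (h.S4_of hβ hen hβn hb het) hσ (by rw [hn, hβn])

lemma orthF (h : R2 Φ N)
    (hA : ¬ ∀ α ∈ Φ, ∀ β ∈ Φ, inner ℝ α α = N → inner ℝ β β = N →
      β = α ∨ β = -α ∨ inner ℝ α β = 0)
    (hC : ¬ ∀ α ∈ Φ, ∀ β ∈ Φ, inner ℝ α α = 2 * N → inner ℝ β β = 2 * N →
      β = α ∨ β = -α ∨ inner ℝ α β = 0)
    {α δ : E} (hα : α ∈ Φ) (hαn : inner ℝ α α = N) (hδ : δ ∈ Φ) (hδn : inner ℝ δ δ = N)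
    (ho : inner ℝ α δ = 0) : α - δ ∈ Φ := by
  have hp := h.pos
  have hp0 := hp.ne'
  obtain ⟨x, hx, y, hy, z, hz, nx, ny, nz, ax, ay, az, xy, xz, yz, mx, my, mz⟩ :=
    h.allS4 hA hC hα hαn
  let W : Submodule ℝ E := Submodule.span ℝ {α, x, y, z}
  have hαW : α ∈ W := Submodule.subset_span (by simp)
  have hxW : x ∈ W := Submodule.subset_span (by simp)
  have hyW : y ∈ W := Submodule.subset_span (by simp)
  have hzW : z ∈ W := Submodule.subset_span (by simp)
  have perp : ∀ σ : E, inner ℝ σ α = 0 → inner ℝ σ x = 0 → inner ℝ σ y = 0 → inner ℝ σ z = 0 →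
      ∀ w ∈ W, inner ℝ σ w = 0 := by
    intro σ h1 h2 h3 h4 w hw
    induction hw using Submodule.span_induction with
    | mem v hv =>
      simp only [Set.mem_insert_iff, Set.mem_singleton_iff] at hv
      rcases hv with rfl | rfl | rfl | rfl <;> assumption
    | zero => simp
    | add u v _ _ hu hv => rw [inner_add_right, hu, hv, add_zero]
    | smul c u _ hu => rw [real_inner_smul_right, hu, mul_zero]
  have full : ∀ σ ∈ Φ, inner ℝ σ σ = N → (inner ℝ σ α = N / 2 ∨ inner ℝ σ α = -(N / 2)) →
      σ ∈ W := by
    intro σ hσ hσn hh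
    have h1 := h.half_trans hx hσ hαn nx hσn ax mx hh
    have h2 := h.half_trans hy hσ hαn ny hσn ay my hh
    have h3 := h.half_trans hz hσ hαn nz hσn az mz hh
    have sq : ∀ t : ℝ, (t = N / 2 ∨ t = -(N / 2)) → t * t = N * N / 4 := by
      rintro t (rfl | rfl) <;> ring
    have s0 := sq _ hh
    have s1 := sq _ h1
    have s2 := sq _ h2
    have s3 := sq _ h3
    have key : σ - (inner ℝ σ α / N) • α - (inner ℝ σ x / N) • x - (inner ℝ σ y / N) • y
        - (inner ℝ σ z / N) • z = 0 := by
      rw [← inner_self_eq_zero (𝕜 := ℝ)]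
      have c1 := real_inner_comm σ α
      have c2 := real_inner_comm σ x
      have c3 := real_inner_comm σ y
      have c4 := real_inner_comm σ z
      have d1 := real_inner_comm α x
      have d2 := real_inner_comm α y
      have d3 := real_inner_comm α z
      have d4 := real_inner_comm x y
      have d5 := real_inner_comm x z
      have d6 := real_inner_comm y z
      simp only [inner_sub_left, inner_sub_right, real_inner_smul_left, real_inner_smul_right,
        d1, d2, d3, d4, d5, d6, ax, ay, az, xy, xz, yz, hσn, hαn, nx, ny, nz, c1, c2, c3, c4]
      field_simp
      nlinarith
    have : σ = (inner ℝ σ α / N) • α + (inner ℝ σ x / N) • x + (inner ℝ σ y / N) • y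
        + (inner ℝ σ z / N) • z := by
      rw [sub_sub, sub_sub, sub_sub, sub_eq_zero] at key
      rw [← add_assoc, ← add_assoc] at key
      convert key using 1
    rw [this]
    exact W.add_mem (W.add_mem (W.add_mem (W.smul_mem _ hαW) (W.smul_mem _ hxW))
      (W.smul_mem _ hyW)) (W.smul_mem _ hzW)
  have one : ∀ b ∈ Φ, inner ℝ b b = N → b ∈ W → inner ℝ b α = 0 → b - α ∈ Φ →
      ∀ σ ∈ Φ, inner ℝ σ σ = N → σ ∈ W ∨ inner ℝ σ b = 0 := by
    intro b hb hbn hbW hba hm σ hσ hσn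
    rcases h.half_dich hb hσ hbn hσn with h1 | h1 | h1 | h1
    · left; rw [h1]; exact hbW
    · left; rw [h1]; exact W.neg_mem hbW
    · right; exact h1
    · left; exact full σ hσ hσn (h.half_trans hα hσ hbn hαn hσn hba hm h1)
  have fl : ∀ b, α - b ∈ Φ → b - α ∈ Φ := fun b hb => by
    have := h.rs.neg_mem hb
    rwa [neg_sub] at this
  have cm : ∀ b, inner ℝ α b = 0 → inner ℝ b α = 0 := fun b hb => by rwa [real_inner_comm]
  have dichS : ∀ σ ∈ Φ, inner ℝ σ σ = N → σ ∈ W ∨ ∀ w ∈ W, inner ℝ σ w = 0 := by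
    intro σ hσ hσn
    by_cases hW : σ ∈ W
    · left; exact hW
    right
    refine perp σ ?_ ((one x hx nx hxW (cm x ax) (fl x mx) σ hσ hσn).resolve_left hW)
      ((one y hy ny hyW (cm y ay) (fl y my) σ hσ hσn).resolve_left hW)
      ((one z hz nz hzW (cm z az) (fl z mz) σ hσ hσn).resolve_left hW)
    rcases h.half_dich hα hσ hαn hσn with h1 | h1 | h1 | h1
    · exact absurd (h1 ▸ hαW) hW
    · exact absurd (h1 ▸ W.neg_mem hαW) hW
    · exact h1
    · exact absurd (full σ hσ hσn h1) hW
  have mixed : ∀ r ∈ Φ, ∀ r' ∈ Φ, inner ℝ r r = N → inner ℝ r' r' = N → inner ℝ r r' = 0 →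
      r + r' ∈ Φ → r ∈ W → (∀ w ∈ W, inner ℝ r' w = 0) → False := by
    intro r hr r' hr' nr nr' hrr hm hrW hr'W
    obtain ⟨τ, hτ, hτn, hi⟩ := h.allNb hA hr nr
    have hτW : τ ∈ W := by
      rcases dichS τ hτ hτn with h1 | h1
      · exact h1
      · have := h1 r hrW
        rw [real_inner_comm] at this
        linarith
    have h1 := hr'W τ hτW
    have h2 := h.ls hτ hm hτn (sum_norm nr nr' hrr).1
    rw [inner_add_right, real_inner_comm, hi, real_inner_comm, h1] at h2
    rcases h2 with h2 | h2 | h2 <;> linarith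
  have dich : ∀ σ ∈ Φ, σ ∈ W ∨ ∀ w ∈ W, inner ℝ σ w = 0 := by
    intro σ hσ
    rcases h.norms σ hσ with h1 | h1
    · exact dichS σ hσ h1
    obtain ⟨r, hr, r', hr', nr, nr', hrr, rfl⟩ := h.decomp hσ h1
    rcases dichS r hr nr with h2 | h2 <;> rcases dichS r' hr' nr' with h3 | h3
    · left; exact W.add_mem h2 h3
    · exact (mixed r hr r' hr' nr nr' hrr hσ h2 h3).elim
    · exact (mixed r' hr' r hr nr' nr (by rwa [real_inner_comm]) (by rwa [add_comm]) h3 h2).elim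
    · right; intro w hw; rw [inner_add_left, h2 w hw, h3 w hw, add_zero]
  have all : Φ.filter (fun σ => σ ∈ W) = Φ := by
    apply h.irr _ (Finset.filter_subset _ _) ⟨α, Finset.mem_filter.2 ⟨hα, hαW⟩⟩
    intro σ hσ β hβ hn
    have hβW : β ∉ W := fun h1 => hn (Finset.mem_filter.2 ⟨hβ, h1⟩)
    rw [real_inner_comm]
    exact (dich β hβ).resolve_left hβW σ (Finset.mem_filter.1 hσ).2
  have hδW : δ ∈ W := by
    rw [← all] at hδ; exact (Finset.mem_filter.1 hδ).2
  have ho' := cm δ ho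
  have last : ∀ b ∈ Φ, inner ℝ b b = N → inner ℝ α b = 0 → α - b ∈ Φ →
      α - δ ∈ Φ ∨ inner ℝ δ b = 0 := by
    intro b hb hbn hab hm
    rcases h.half_dich hb hδ hbn hδn with h1 | h1 | h1 | h1
    · left; rw [h1]; exact hm
    · left; rw [h1, sub_neg_eq_add]; exact h.add_of_sub hb hab hm
    · right; exact h1
    · have := h.half_trans hα hδ hbn hαn hδn (cm b hab) (fl b hm) h1
      rw [ho'] at this
      rcases this with h2 | h2 <;> linarith
  by_contra hcon
  have := perp δ ho' ((last x hx nx ax mx).resolve_left hcon) ((last y hy ny ay my).resolve_left hcon)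
    ((last z hz nz az mz).resolve_left hcon) δ hδW
  linarith

theorem countF [FiniteDimensional ℝ E] (h : R2 Φ N)
    (hA : ¬ ∀ α ∈ Φ, ∀ β ∈ Φ, inner ℝ α α = N → inner ℝ β β = N →
      β = α ∨ β = -α ∨ inner ℝ α β = 0)
    (hC : ¬ ∀ α ∈ Φ, ∀ β ∈ Φ, inner ℝ α α = 2 * N → inner ℝ β β = 2 * N →
      β = α ∨ β = -α ∨ inner ℝ α β = 0)
    {T : Type*} [AddCommGroup T] [Module ℝ T] (L : E →ₗ[ℝ] T) (κs κl : T)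
    (hs : κs ≠ 0) (hl : κl ≠ 0) :
    (Φ.filter (fun α => inner ℝ α α = N ∧ L α = κs)).card +
      (Φ.filter (fun α => inner ℝ α α = 2 * N ∧ L α = κl)).card ≤
      (Φ.filter (fun α => L α = 0)).card + Module.finrank ℝ (Submodule.span ℝ (Φ : Set E)) := by
  have hp := h.pos
  have h1 := h.rs.caseF_half (N := N) (fun α hα β hβ ha hb hab =>
    ⟨1, one_pos, by rw [one_smul]; exact h.orthF hA hC hα ha hβ hb hab⟩) L κs hs
  have h2 := h.rs.caseF_half (N := 2 * N) (fun α hα β hβ ha hb hab => by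
    have hA' : ¬ ∀ α ∈ Φ.image (du N), ∀ β ∈ Φ.image (du N), inner ℝ α α = 2 * N →
        inner ℝ β β = 2 * N → β = α ∨ β = -α ∨ inner ℝ α β = 0 := fun hh =>
      hC (fun α hα β hβ ha hb => hh α (h.mem_dual_of_long hα ha) β (h.mem_dual_of_long hβ hb) ha hb)
    have hC' : ¬ ∀ α ∈ Φ.image (du N), ∀ β ∈ Φ.image (du N), inner ℝ α α = 2 * (2 * N) →
        inner ℝ β β = 2 * (2 * N) → β = α ∨ β = -α ∨ inner ℝ α β = 0 := fun hh => by
      refine hA (fun α hα β hβ ha hb => ?_)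
      have inj := smul_right_injective E (r := (2 : ℝ)) (by norm_num)
      have := hh _ (h.mem_dual_of_short hα ha) _ (h.mem_dual_of_short hβ hb)
        (by rw [real_inner_smul_left, real_inner_smul_right, ha])
        (by rw [real_inner_smul_left, real_inner_smul_right, hb])
      rcases this with h3 | h3 | h3
      · left; exact inj h3
      · right; left; rw [← smul_neg] at h3; exact inj h3
      · right; right
        rw [real_inner_smul_left, real_inner_smul_right] at h3
        linarith
    have h3 := h.dual.orthF hA' hC' (h.mem_dual_of_long hα ha) ha (h.mem_dual_of_long hβ hb) hb hab
    obtain ⟨σ, hσ, -, h4⟩ := h.dual_long h3 (sum_norm ha hb hab).2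
    refine ⟨1 / 2, by norm_num, ?_⟩
    rw [h4, smul_smul]
    norm_num
    exact hσ) L κl hl
  have hr : 4 ≤ Module.finrank ℝ (Submodule.span ℝ (Φ : Set E)) := by
    obtain ⟨α, hα, hαn⟩ := h.short
    obtain ⟨x, hx, y, hy, z, hz, nx, ny, nz, ax, ay, az, xy, xz, yz, mx, my, mz⟩ :=
      h.allS4 hA hC hα hαn
    have ne : ∀ a b : E, inner ℝ a a = N → inner ℝ a b = 0 → a ≠ b := by
      rintro a b h1 h2 rfl
      linarith
    have n1 := ne _ _ hαn ax
    have n2 := ne _ _ hαn ay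
    have n3 := ne _ _ hαn az
    have n4 := ne _ _ nx xy
    have n5 := ne _ _ nx xz
    have n6 := ne _ _ ny yz
    have hc : ({α, x, y, z} : Finset E).card = 4 := by
      rw [Finset.card_insert_of_notMem, Finset.card_insert_of_notMem,
        Finset.card_insert_of_notMem, Finset.card_singleton] <;> simp [n1, n2, n3, n4, n5, n6]
    have sub : ∀ σ ∈ ({α, x, y, z} : Finset E), σ ∈ Φ := by
      intro σ hσ
      simp only [Finset.mem_insert, Finset.mem_singleton] at hσ
      rcases hσ with rfl | rfl | rfl | rfl <;> assumption
    have := IsRS.finrank_orth (∅ : Finset E) {α, x, y, z} (fun h0 => h.rs.ne0 (sub 0 h0)) (by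
      intro σ hσ τ hτ hne
      simp only [Finset.mem_insert, Finset.mem_singleton] at hσ hτ
      rcases hσ with rfl | rfl | rfl | rfl <;> rcases hτ with rfl | rfl | rfl | rfl <;>
        first
          | exact absurd rfl hne
          | assumption
          | (rw [real_inner_comm]; assumption)) (by simp)
      (Submodule.span ℝ (Φ : Set E)) (by simp) (fun σ hσ => Submodule.subset_span (sub σ hσ))
    rw [hc] at this
    omega
  omega

end R2


namespace IsRS
variable {E : Type*} [NormedAddCommGroup E] [InnerProductSpace ℝ E] {Φ : Finset E}

lemma pair_count [FiniteDimensional ℝ E] {T : Type*} [AddCommGroup T] [Module ℝ T]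
    (L : E →ₗ[ℝ] T) (κs κl : T) (hκ : ∀ a b : ℝ, a • κs + b • κl = 0 → a = 0 ∧ b = 0)
    (hr : Module.finrank ℝ (Submodule.span ℝ (Φ : Set E)) ≤ 2) {σ τ : E} (hσ : σ ∈ Φ) (hτ : τ ∈ Φ)
    (h1 : L σ = κs) (h2 : L τ = κl) (p q : E → Prop) :
    (Φ.filter (fun α => p α ∧ L α = κs)).card + (Φ.filter (fun α => q α ∧ L α = κl)).card ≤
      Module.finrank ℝ (Submodule.span ℝ (Φ : Set E)) := by
  have hli : LinearIndependent ℝ ![σ, τ] := by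
    rw [LinearIndependent.pair_iff]
    intro a b hab
    apply hκ
    rw [← h1, ← h2, ← map_smul, ← map_smul, ← map_add, hab, map_zero]
  have hfr := finrank_span_eq_card hli
  rw [Fintype.card_fin, Matrix.range_cons, Matrix.range_cons, Matrix.range_empty, Set.union_empty,
    Set.singleton_union] at hfr
  have hle : Submodule.span ℝ {σ, τ} ≤ Submodule.span ℝ (Φ : Set E) := by
    apply Submodule.span_mono
    rintro x (rfl | rfl)
    · exact hσ
    · exact hτ
  have heq := Submodule.eq_of_le_of_finrank_le hle (by rw [hfr]; exact hr)
  rw [← heq, hfr]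
  have hrep : ∀ α ∈ Φ, ∃ a b : ℝ, a • σ + b • τ = α := by
    intro α hα
    have : α ∈ Submodule.span ℝ (Φ : Set E) := Submodule.subset_span hα
    rw [← heq] at this
    exact Submodule.mem_span_pair.1 this
  have c1 : (Φ.filter (fun α => p α ∧ L α = κs)).card ≤ 1 := by
    rw [← Finset.card_singleton σ]
    apply Finset.card_le_card
    intro α hα
    obtain ⟨m, -, h3⟩ := Finset.mem_filter.1 hα
    obtain ⟨a, b, rfl⟩ := hrep α m
    rw [map_add, map_smul, map_smul, h1, h2] at h3
    have := hκ (a - 1) b (by rw [sub_smul, one_smul, sub_add_eq_add_sub, h3, sub_self])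
    rw [Finset.mem_singleton, this.2, sub_eq_zero.1 this.1, one_smul, zero_smul, add_zero]
  have c2 : (Φ.filter (fun α => q α ∧ L α = κl)).card ≤ 1 := by
    rw [← Finset.card_singleton τ]
    apply Finset.card_le_card
    intro α hα
    obtain ⟨m, -, h3⟩ := Finset.mem_filter.1 hα
    obtain ⟨a, b, rfl⟩ := hrep α m
    rw [map_add, map_smul, map_smul, h1, h2] at h3
    have := hκ a (b - 1) (by rw [sub_smul, one_smul, ← add_sub_assoc, h3, sub_self])
    rw [Finset.mem_singleton, this.1, sub_eq_zero.1 this.2, one_smul, zero_smul, zero_add]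
  omega

/-- counting inside one norm class -/
lemma class_count [FiniteDimensional ℝ E] (h : IsRS Φ) (N : ℝ)
    {T : Type*} [AddCommGroup T] [Module ℝ T] (L : E →ₗ[ℝ] T) (κ : T) (hκ : κ ≠ 0) :
    (Φ.filter (fun α => inner ℝ α α = N ∧ L α = κ)).card ≤
      (Φ.filter (fun α => L α = 0)).card + Module.finrank ℝ (Submodule.span ℝ (Φ : Set E)) := by
  have h1 := (h.norm_class N).SL_count N (fun α hα => (Finset.mem_filter.1 hα).2) L κ hκ
  rw [Finset.filter_filter] at h1
  refine h1.trans (Nat.add_le_add (Finset.card_le_card ?_) (Submodule.finrank_mono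
    (Submodule.span_mono ?_)))
  · exact Finset.filter_subset_filter _ (Finset.filter_subset _ _)
  · exact Finset.coe_subset.2 (Finset.filter_subset _ _)

lemma core_irr [FiniteDimensional ℝ E] (h : IsRS Φ) (hi : Irr Φ)
    {T : Type*} [AddCommGroup T] [Module ℝ T] (L : E →ₗ[ℝ] T) (κ : E → T)
    (hinv : ∀ α ∈ Φ, ∀ β ∈ Φ, ∀ c : ℝ, 2 * inner ℝ α β = c * inner ℝ α α → κ (β - c • α) = κ β)
    (h0 : ∀ α ∈ Φ, κ α ≠ 0)
    (hind : ∀ α ∈ Φ, ∀ β ∈ Φ, (inner ℝ α α : ℝ) ≠ inner ℝ β β →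
      ∀ a b : ℝ, a • κ α + b • κ β = 0 → a = 0 ∧ b = 0) :
    (Φ.filter (fun α => L α = κ α)).card ≤
      (Φ.filter (fun α => L α = 0)).card + Module.finrank ℝ (Submodule.span ℝ (Φ : Set E)) := by
  have hconj : ∀ α ∈ Φ, ∀ β ∈ Φ, (inner ℝ β β : ℝ) = inner ℝ α α → κ β = κ α := by
    intro α hα β hβ hn
    refine h.conj hi (p := fun x => κ x = κ α) ?_ hα rfl hβ hn
    intro ρ hρ σ hσ c hc h1
    change κ _ = _
    rw [hinv ρ hρ σ hσ c hc, h1]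
  rcases h.norms hi with ⟨N, hN⟩ | ⟨N, hNpos, r, hr, ⟨σ, hσ, hσn⟩, ⟨τ, hτ, hτn⟩, hN⟩
  · by_cases hne : Φ = ∅
    · subst hne; simp
    obtain ⟨α, hα⟩ := Finset.nonempty_iff_ne_empty.2 hne
    have h1 := h.SL_count N hN L (κ α) (h0 α hα)
    rw [Finset.filter_congr (q := fun β => L β = κ α) (fun β hβ => by
      rw [hconj α hα β hβ (by rw [hN α hα, hN β hβ])])]
    exact h1
  have hκ := hind σ hσ τ hτ (by
    rw [hσn, hτn]
    rcases hr with rfl | rfl <;> intro h1 <;> linarith)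
  have hs0 := h0 σ hσ
  have hl0 := h0 τ hτ
  have hsplit : (Φ.filter (fun α => L α = κ α)).card ≤
      (Φ.filter (fun α => inner ℝ α α = N ∧ L α = κ σ)).card +
      (Φ.filter (fun α => inner ℝ α α = r * N ∧ L α = κ τ)).card := by
    refine le_trans (Finset.card_le_card ?_) (Finset.card_union_le _ _)
    intro α hα
    obtain ⟨hα, h1⟩ := Finset.mem_filter.1 hα
    rw [Finset.mem_union]
    rcases hN α hα with h2 | h2
    · left
      exact Finset.mem_filter.2 ⟨hα, h2, by rw [h1, hconj σ hσ α hα (by rw [h2, hσn])]⟩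
    · right
      exact Finset.mem_filter.2 ⟨hα, h2, by rw [h1, hconj τ hτ α hα (by rw [h2, hτn])]⟩
  refine hsplit.trans ?_
  rcases hr with rfl | rfl
  · have R : R2 Φ N := ⟨h, hi, hNpos, hN, ⟨σ, hσ, hσn⟩, ⟨τ, hτ, hτn⟩⟩
    by_cases hA : ∀ α ∈ Φ, ∀ β ∈ Φ, inner ℝ α α = N → inner ℝ β β = N →
      β = α ∨ β = -α ∨ inner ℝ α β = 0
    · exact R.countA hA L _ _ hκ
    by_cases hC : ∀ α ∈ Φ, ∀ β ∈ Φ, inner ℝ α α = 2 * N → inner ℝ β β = 2 * N →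
      β = α ∨ β = -α ∨ inner ℝ α β = 0
    · exact R.countC hC L _ _ hκ
    exact R.countF hA hC L _ _ hs0 hl0
  · have hfr := h.caseG hi hNpos hN ⟨σ, hσ, hσn⟩ ⟨τ, hτ, hτn⟩
    by_cases e1 : (Φ.filter (fun α => inner ℝ α α = N ∧ L α = κ σ)) = ∅
    · rw [e1, Finset.card_empty, zero_add]
      exact h.class_count _ L _ hl0
    by_cases e2 : (Φ.filter (fun α => inner ℝ α α = 3 * N ∧ L α = κ τ)) = ∅
    · rw [e2, Finset.card_empty, add_zero]
      exact h.class_count _ L _ hs0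
    obtain ⟨s, hs⟩ := Finset.nonempty_iff_ne_empty.2 e1
    obtain ⟨t, ht⟩ := Finset.nonempty_iff_ne_empty.2 e2
    obtain ⟨hs1, hs2, hs3⟩ := Finset.mem_filter.1 hs
    obtain ⟨ht1, ht2, ht3⟩ := Finset.mem_filter.1 ht
    have := pair_count L _ _ hκ hfr hs1 ht1 hs3 ht3 (fun α => inner ℝ α α = N)
      (fun α => inner ℝ α α = 3 * N)
    omega

theorem core [FiniteDimensional ℝ E] 
    {T : Type*} [AddCommGroup T] [Module ℝ T] (L : E →ₗ[ℝ] T) (κ : E → T) (h : IsRS Φ)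
    (hinv : ∀ α ∈ Φ, ∀ β ∈ Φ, ∀ c : ℝ, 2 * inner ℝ α β = c * inner ℝ α α → κ (β - c • α) = κ β)
    (h0 : ∀ α ∈ Φ, κ α ≠ 0)
    (hind : ∀ α ∈ Φ, ∀ β ∈ Φ, (inner ℝ α α : ℝ) ≠ inner ℝ β β →
      ∀ a b : ℝ, a • κ α + b • κ β = 0 → a = 0 ∧ b = 0) :
    (Φ.filter (fun α => L α = κ α)).card ≤
      (Φ.filter (fun α => L α = 0)).card + Module.finrank ℝ (Submodule.span ℝ (Φ : Set E)) := by
  induction Φ using Finset.strongInduction with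
  | H Φ ih =>
  by_cases hi : Irr Φ
  · exact h.core_irr hi L κ hinv h0 hind
  rw [Irr] at hi
  push Not at hi
  obtain ⟨S, hS, hne, ho, hneq⟩ := hi
  have hS' : S ⊂ Φ := lt_of_le_of_ne hS hneq
  have hD : Φ \ S ⊆ Φ := Finset.sdiff_subset
  have hD' : Φ \ S ⊂ Φ := Finset.sdiff_ssubset hS hne
  have rS : IsRS S := by
    apply h.sub' hS
    intro α hα β hβ z hz hm
    by_contra hn
    have h1 := ho α hα _ hm hn
    have h2 := ho β hβ _ hm hn
    have p := h.pos hm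
    rw [inner_sub_left, real_inner_smul_left, h1, h2] at p
    simp at p
  have rD : IsRS (Φ \ S) := by
    apply h.sub' hD
    intro α hα β hβ z hz hm
    rw [Finset.mem_sdiff] at hα hβ ⊢
    refine ⟨hm, fun hn => ?_⟩
    have h1 := ho _ hn α hα.1 hα.2
    have h2 := ho _ hn β hβ.1 hβ.2
    have p := h.pos hm
    rw [inner_sub_right, real_inner_smul_right, h1, h2] at p
    simp at p
  have k1 := ih S hS' rS (fun α hα β hβ => hinv α (hS hα) β (hS hβ)) (fun α hα => h0 α (hS hα))
    (fun α hα β hβ => hind α (hS hα) β (hS hβ))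
  have k2 := ih _ hD' rD (fun α hα β hβ => hinv α (hD hα) β (hD hβ)) (fun α hα => h0 α (hD hα))
    (fun α hα β hβ => hind α (hD hα) β (hD hβ))
  have hfil : ∀ p : E → Prop, (Φ.filter p).card = (S.filter p).card + ((Φ \ S).filter p).card := by
    intro p
    rw [← Finset.card_union_of_disjoint, ← Finset.filter_union, Finset.union_sdiff_of_subset hS]
    exact Finset.disjoint_filter_filter Finset.disjoint_sdiff
  have hfr : Module.finrank ℝ (Submodule.span ℝ (S : Set E)) +
      Module.finrank ℝ (Submodule.span ℝ ((Φ \ S : Finset E) : Set E)) ≤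
      Module.finrank ℝ (Submodule.span ℝ (Φ : Set E)) := by
    have horth : Submodule.span ℝ (S : Set E) ⟂ Submodule.span ℝ ((Φ \ S : Finset E) : Set E) := by
      rw [Submodule.isOrtho_span]
      intro u hu v hv
      have := Finset.mem_sdiff.1 (Finset.mem_coe.1 hv)
      exact ho u hu v this.1 this.2
    have hdis := horth.disjoint
    have := Submodule.finrank_sup_add_finrank_inf_eq (Submodule.span ℝ (S : Set E))
      (Submodule.span ℝ ((Φ \ S : Finset E) : Set E))
    rw [hdis.eq_bot, finrank_bot, add_zero] at this
    rw [← this]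
    apply Submodule.finrank_mono
    exact sup_le (Submodule.span_mono (Finset.coe_subset.2 hS))
      (Submodule.span_mono (Finset.coe_subset.2 hD))
  have f1 := hfil (fun α => L α = κ α)
  have f2 := hfil (fun α => L α = 0)
  omega

end IsRS

section transfer

/-- the canonical form on `V` -/
def bf : V →ₗ[ℝ] Module.Dual ℝ V := ∑ γ ∈ rs.roots, (γ : V →ₗ[ℝ] ℝ).smulRight γ

lemma bf_apply (u v : V) : bf rs u v = ∑ γ ∈ rs.roots, γ u * γ v := by
  simp [bf, LinearMap.sum_apply]

lemma bf_inv {α : Module.Dual ℝ V} (hα : α ∈ rs.roots) (u v : V) :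
    bf rs (u - α u • rs.coroot α) (v - α v • rs.coroot α) = bf rs u v := by
  rw [bf_apply, bf_apply]
  have h2 := rs.coroot_two α hα
  refine Finset.sum_bij' (fun γ _ => γ - γ (rs.coroot α) • α) (fun γ _ => γ - γ (rs.coroot α) • α)
    (fun γ hγ => rs.reflect_mem α hα γ hγ) (fun γ hγ => rs.reflect_mem α hα γ hγ) ?_ ?_ ?_
  · intro γ _
    ext w
    simp [h2]
    ring
  · intro γ _
    ext w
    simp [h2]
    ring
  · intro γ _
    simp
    ring

lemma bf_coroot {α : Module.Dual ℝ V} (hα : α ∈ rs.roots) (v : V) :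
    2 * bf rs (rs.coroot α) v = α v * bf rs (rs.coroot α) (rs.coroot α) := by
  have := bf_inv rs hα (rs.coroot α) v
  rw [rs.coroot_two α hα, two_smul, sub_add_cancel_left, map_neg, LinearMap.neg_apply, map_sub,
    map_smul, smul_eq_mul] at this
  linarith

lemma bf_pos [FiniteDimensional ℝ V] {v : V} (hv : v ≠ 0) : 0 < bf rs v v := by
  rw [bf_apply]
  refine lt_of_le_of_ne (Finset.sum_nonneg fun γ _ => mul_self_nonneg _) (fun h => hv ?_)
  rw [eq_comm, Finset.sum_eq_zero_iff_of_nonneg (fun γ _ => mul_self_nonneg _)] at h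
  rw [← Module.forall_dual_apply_eq_zero_iff ℝ]
  intro φ
  have : φ ∈ Submodule.span ℝ (rs.roots : Set (Module.Dual ℝ V)) := by rw [rs.spanning]; trivial
  induction this using Submodule.span_induction with
  | mem γ hγ => exact mul_self_eq_zero.1 (h γ hγ)
  | zero => simp
  | add a b _ _ ha hb => rw [LinearMap.add_apply, ha, hb, add_zero]
  | smul c a _ ha => rw [LinearMap.smul_apply, ha, smul_zero]

def bfE [FiniteDimensional ℝ V] : V ≃ₗ[ℝ] Module.Dual ℝ V :=
  LinearEquiv.ofInjectiveOfFinrankEq (bf rs) (by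
    rw [injective_iff_map_eq_zero]
    intro v hv
    by_contra h0
    have := bf_pos rs h0
    rw [hv] at this
    simp at this) (Subspace.dual_finrank_eq).symm

lemma bfE_apply [FiniteDimensional ℝ V] (v : V) : bfE rs v = bf rs v := rfl

/-- the embedding of `V` in a Euclidean space -/
def JJ : V →ₗ[ℝ] EuclideanSpace ℝ rs.roots :=
  (WithLp.linearEquiv 2 ℝ (rs.roots → ℝ)).symm.toLinearMap ∘ₗ
    LinearMap.pi (fun γ : rs.roots => (γ : Module.Dual ℝ V))

lemma JJ_inner (u v : V) : inner ℝ (JJ rs u) (JJ rs v) = bf rs u v := by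
  rw [bf_apply, PiLp.inner_apply, ← Finset.sum_coe_sort rs.roots]
  refine Finset.sum_congr rfl fun γ _ => ?_
  simp [JJ, mul_comm]

def io [FiniteDimensional ℝ V] : Module.Dual ℝ V →ₗ[ℝ] EuclideanSpace ℝ rs.roots :=
  JJ rs ∘ₗ (bfE rs).symm.toLinearMap

variable [FiniteDimensional ℝ V]

lemma io_inner (x y : Module.Dual ℝ V) : inner ℝ (io rs x) (io rs y) = x ((bfE rs).symm y) := by
  rw [io, LinearMap.comp_apply, LinearMap.comp_apply, JJ_inner]
  change bf rs ((bfE rs).symm x) _ = _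
  rw [← bfE_apply, LinearEquiv.apply_symm_apply]
  rfl

lemma io_root {α : Module.Dual ℝ V} (hα : α ∈ rs.roots) (x : Module.Dual ℝ V) :
    2 * inner ℝ (io rs α) (io rs x) = x (rs.coroot α) * inner ℝ (io rs α) (io rs α) ∧
      0 < inner ℝ (io rs α) (io rs α) := by
  have h2 := rs.coroot_two α hα
  have hne : rs.coroot α ≠ 0 := by
    intro h0; rw [h0] at h2; simp at h2
  have hp := bf_pos rs hne
  have hb : (bfE rs).symm α = (2 / bf rs (rs.coroot α) (rs.coroot α)) • rs.coroot α := by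
    rw [LinearEquiv.symm_apply_eq, map_smul, bfE_apply]
    ext v
    rw [LinearMap.smul_apply, smul_eq_mul]
    have := bf_coroot rs hα v
    field_simp
    linarith
  rw [real_inner_comm, io_inner, io_inner, hb, map_smul, map_smul, h2, smul_eq_mul, smul_eq_mul]
  constructor
  · ring
  · positivity

lemma io_inj : Function.Injective (io rs) := by
  rw [injective_iff_map_eq_zero]
  intro x hx
  have h1 : ∀ y : Module.Dual ℝ V, y ((bfE rs).symm x) = 0 := by
    intro y
    rw [← io_inner, hx, inner_zero_right]
  have := (Module.forall_dual_apply_eq_zero_iff ℝ _).1 h1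
  simpa using this

lemma io_refl {α : Module.Dual ℝ V} (hα : α ∈ rs.roots) {β : Module.Dual ℝ V} {c : ℝ}
    (hc : 2 * inner ℝ (io rs α) (io rs β) = c * inner ℝ (io rs α) (io rs α)) :
    c = β (rs.coroot α) := by
  obtain ⟨h1, h2⟩ := io_root rs hα β
  rw [h1] at hc
  exact (mul_right_cancel₀ h2.ne' hc).symm

lemma io_norm_refl {α : Module.Dual ℝ V} (hα : α ∈ rs.roots) (β : Module.Dual ℝ V) :
    inner ℝ (io rs (β - β (rs.coroot α) • α)) (io rs (β - β (rs.coroot α) • α)) =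
      inner ℝ (io rs β) (io rs β) := by
  have h1 := (io_root rs hα β).1
  rw [map_sub, map_smul, inner_sub_left, inner_sub_right, inner_sub_right, real_inner_smul_left,
    real_inner_smul_right, real_inner_smul_left, real_inner_smul_right,
    real_inner_comm (io rs α) (io rs β)]
  linear_combination (- β (rs.coroot α)) * h1

/-- roots in a subspace form a root system -/
lemma io_isRS (X : Submodule ℝ (Module.Dual ℝ V)) :
    IsRS ((rs.roots.filter (fun α => α ∈ X)).image (io rs)) := by
  refine ⟨?_, ?_, ?_⟩
  · intro h0
    obtain ⟨α, hα, h1⟩ := Finset.mem_image.1 h0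
    have := (io_root rs (Finset.mem_filter.1 hα).1 α).2
    rw [h1] at this
    simp at this
  · intro a ha b hb
    obtain ⟨α, hα, rfl⟩ := Finset.mem_image.1 ha
    obtain ⟨β, hβ, rfl⟩ := Finset.mem_image.1 hb
    obtain ⟨hα, hαX⟩ := Finset.mem_filter.1 hα
    obtain ⟨hβ, hβX⟩ := Finset.mem_filter.1 hβ
    obtain ⟨z, hz⟩ := rs.integral α hα β hβ
    refine ⟨z, by rw [← hz]; exact (io_root rs hα β).1, ?_⟩
    refine Finset.mem_image.2 ⟨β - β (rs.coroot α) • α, Finset.mem_filter.2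
      ⟨rs.reflect_mem α hα β hβ, X.sub_mem hβX (X.smul_mem _ hαX)⟩, ?_⟩
    rw [map_sub, map_smul, hz]
  · intro a ha c hc
    obtain ⟨α, hα, rfl⟩ := Finset.mem_image.1 ha
    obtain ⟨β, hβ, h1⟩ := Finset.mem_image.1 hc
    rw [← map_smul] at h1
    have := io_inj rs h1
    subst this
    exact rs.reduced α (Finset.mem_filter.1 hα).1 c (Finset.mem_filter.1 hβ).1

/-- evaluation functional -/
def ev (x : Module.Dual ℝ V) : Module.Dual ℝ (ParamSub rs) :=
  if h : x ∈ rs.roots then (LinearMap.proj (⟨x, h⟩ : rs.roots)) ∘ₗ (ParamSub rs).subtype else 0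

lemma ev_apply {x : Module.Dual ℝ V} (h : x ∈ rs.roots) (k : ParamSub rs) :
    ev rs x k = (k : rs.roots → ℝ) ⟨x, h⟩ := by
  rw [ev, dif_pos h]; rfl

lemma ev_refl {α β : Module.Dual ℝ V} (hα : α ∈ rs.roots) (hβ : β ∈ rs.roots) :
    ev rs (β - β (rs.coroot α) • α) = ev rs β := by
  ext k
  rw [ev_apply rs (rs.reflect_mem α hα β hβ), ev_apply rs hβ]
  exact k.2 ⟨α, hα⟩ ⟨β, hβ⟩

lemma ev_ind {α β : Module.Dual ℝ V} (hα : α ∈ rs.roots) (hβ : β ∈ rs.roots)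
    (hne : (inner ℝ (io rs α) (io rs α) : ℝ) ≠ inner ℝ (io rs β) (io rs β)) (a b : ℝ)
    (hab : a • ev rs α + b • ev rs β = 0) : a = 0 ∧ b = 0 := by
  have kmem : ∀ N : ℝ, (fun γ : rs.roots => if (inner ℝ (io rs γ) (io rs γ) : ℝ) = N then (1 : ℝ)
      else 0) ∈ ParamSub rs := by
    intro N γ δ
    simp only [io_norm_refl rs γ.2]
  have h1 := LinearMap.congr_fun hab ⟨_, kmem (inner ℝ (io rs α) (io rs α))⟩
  have h2 := LinearMap.congr_fun hab ⟨_, kmem (inner ℝ (io rs β) (io rs β))⟩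
  rw [LinearMap.add_apply, LinearMap.smul_apply, LinearMap.smul_apply, ev_apply rs hα,
    ev_apply rs hβ] at h1 h2
  simp only [if_true, if_neg hne, if_neg hne.symm, smul_eq_mul, LinearMap.zero_apply] at h1 h2
  exact ⟨by linarith, by linarith⟩

lemma ev_ne {α : Module.Dual ℝ V} (hα : α ∈ rs.roots) : ev rs α ≠ 0 := by
  intro h0
  have kmem : (fun _ : rs.roots => (1 : ℝ)) ∈ ParamSub rs := by
    intro γ δ
    rfl
  have h1 := LinearMap.congr_fun h0 ⟨_, kmem⟩
  rw [ev_apply rs hα] at h1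
  simp at h1

lemma count_roots (ξ : ParamSub rs →ₗ[ℝ] V) (X : Submodule ℝ (Module.Dual ℝ V)) :
    (rs.roots.filter (fun α => α ∈ X ∧ (α : V →ₗ[ℝ] ℝ) ∘ₗ ξ = ev rs α)).card ≤
      (rs.roots.filter (fun α => (α : V →ₗ[ℝ] ℝ) ∘ₗ ξ = 0)).card + Module.finrank ℝ X := by
  obtain ⟨g, hg⟩ := LinearMap.exists_leftInverse_of_injective (io rs)
    (LinearMap.ker_eq_bot.2 (io_inj rs))
  have hg' : ∀ x, g (io rs x) = x := fun x => LinearMap.congr_fun hg x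
  let pre : Module.Dual ℝ V →ₗ[ℝ] Module.Dual ℝ (ParamSub rs) := ξ.dualMap
  have key := (io_isRS rs X).core (pre ∘ₗ g) (fun e => ev rs (g e)) ?_ ?_ ?_
  · have c1 : ∀ p : EuclideanSpace ℝ rs.roots → Prop,
        (((rs.roots.filter (fun α => α ∈ X)).image (io rs)).filter p).card =
        ((rs.roots.filter (fun α => α ∈ X)).filter (fun α => p (io rs α))).card := by
      intro p
      rw [Finset.filter_image, Finset.card_image_of_injective _ (io_inj rs)]
    rw [c1, c1] at key
    simp only [LinearMap.comp_apply, hg', Finset.filter_filter] at key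
    refine key.trans (Nat.add_le_add (Finset.card_le_card ?_) ?_)
    · intro α hα
      obtain ⟨h1, h2, h3⟩ := Finset.mem_filter.1 hα
      exact Finset.mem_filter.2 ⟨h1, h3⟩
    · rw [Finset.coe_image, ← Submodule.map_span]
      refine (Submodule.finrank_map_le _ _).trans (Submodule.finrank_mono ?_)
      rw [Submodule.span_le]
      intro α hα
      exact (Finset.mem_filter.1 (Finset.mem_coe.1 hα)).2
  · intro a ha b hb c hc
    obtain ⟨α, hα, rfl⟩ := Finset.mem_image.1 ha
    obtain ⟨β, hβ, rfl⟩ := Finset.mem_image.1 hb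
    have hα := (Finset.mem_filter.1 hα).1
    have hβ := (Finset.mem_filter.1 hβ).1
    rw [io_refl rs hα hc]
    simp only [map_sub, map_smul, hg']
    exact ev_refl rs hα hβ
  · intro a ha
    obtain ⟨α, hα, rfl⟩ := Finset.mem_image.1 ha
    simp only [hg']
    exact ev_ne rs (Finset.mem_filter.1 hα).1
  · intro a ha b hb hne
    obtain ⟨α, hα, rfl⟩ := Finset.mem_image.1 ha
    obtain ⟨β, hβ, rfl⟩ := Finset.mem_image.1 hb
    simp only [hg']
    exact ev_ind rs (Finset.mem_filter.1 hα).1 (Finset.mem_filter.1 hβ).1 hne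

/-- coroots separate functionals -/
lemma coroot_sep {x : Module.Dual ℝ V} (hx : ∀ γ ∈ rs.roots, x (rs.coroot γ) = 0) : x = 0 := by
  have h1 : ∀ y ∈ Submodule.span ℝ (rs.roots : Set (Module.Dual ℝ V)),
      inner ℝ (io rs y) (io rs x) = 0 := by
    intro y hy
    induction hy using Submodule.span_induction with
    | mem γ hγ =>
      have := (io_root rs hγ x).1
      rw [hx γ hγ] at this
      linarith
    | zero => simp
    | add a b _ _ ha hb => rw [map_add, inner_add_left, ha, hb, add_zero]
    | smul c a _ ha => rw [map_smul, real_inner_smul_left, ha, mul_zero]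
  have h2 := h1 x (by rw [rs.spanning]; trivial)
  rw [inner_self_eq_zero] at h2
  exact io_inj rs (by rw [h2, map_zero])

/-- rational coefficients -/
lemma rational_coeff (P : rs.roots → Prop)
    (hP : Submodule.span ℝ {x : Module.Dual ℝ V | ∃ β : rs.roots, P β ∧ (β : Module.Dual ℝ V) = x}
      = ⊤) (α : rs.roots) : ∃ c : rs.roots → ℚ, (∀ β, ¬ P β → c β = 0) ∧
        (α : Module.Dual ℝ V) = ∑ β : rs.roots, (c β : ℝ) • (β : Module.Dual ℝ V) := by
  choose m hm using fun (γ : rs.roots) (β : rs.roots) => rs.integral γ γ.2 β β.2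
  let M : rs.roots → (rs.roots → ℚ) := fun β => if P β then (fun γ => (m γ β : ℚ)) else 0
  have hmem : (fun γ => (m γ α : ℚ)) ∈ Submodule.span ℚ (Set.range M) := by
    by_contra hn
    obtain ⟨φ, hφ1, hφ2⟩ := Submodule.exists_le_ker_of_notMem hn
    have hexp : ∀ v : rs.roots → ℚ, φ v = ∑ γ, v γ * φ (Pi.single γ 1) := by
      intro v
      conv_lhs => rw [pi_eq_sum_univ' v]
      rw [map_sum]
      refine Finset.sum_congr rfl fun γ _ => ?_
      rw [map_smul, smul_eq_mul]
    let Ψ : Module.Dual ℝ V →ₗ[ℝ] ℝ :=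
      ∑ γ : rs.roots, ((φ (Pi.single γ 1) : ℚ) : ℝ) • Module.Dual.eval ℝ V (rs.coroot γ)
    have hΨ : ∀ β : rs.roots, Ψ β = ((φ (fun γ => (m γ β : ℚ)) : ℚ) : ℝ) := by
      intro β
      rw [hexp]
      push_cast
      simp only [Ψ, LinearMap.sum_apply, LinearMap.smul_apply, Module.Dual.eval_apply, smul_eq_mul]
      refine Finset.sum_congr rfl fun γ _ => ?_
      rw [hm γ β]; ring
    have h0 : ∀ x : Module.Dual ℝ V, Ψ x = 0 := by
      intro x
      have hx : x ∈ Submodule.span ℝ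
        {x : Module.Dual ℝ V | ∃ β : rs.roots, P β ∧ (β : Module.Dual ℝ V) = x} := by
        rw [hP]; trivial
      induction hx using Submodule.span_induction with
      | mem x hx =>
        obtain ⟨β, hβ, rfl⟩ := hx
        rw [hΨ]
        have : M β ∈ Submodule.span ℚ (Set.range M) := Submodule.subset_span ⟨β, rfl⟩
        have h1 := hφ2 this
        rw [LinearMap.mem_ker] at h1
        simp only [M, if_pos hβ] at h1
        rw [h1]; simp
      | zero => simp
      | add a b _ _ ha hb => rw [map_add, ha, hb, add_zero]
      | smul c a _ ha => rw [map_smul, ha, smul_zero]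
    have h2 := hΨ α
    rw [h0] at h2
    exact hφ1 (by exact_mod_cast h2.symm)
  obtain ⟨c, hc⟩ := (Submodule.mem_span_range_iff_exists_fun ℚ).1 hmem
  refine ⟨fun β => if P β then c β else 0, fun β hβ => if_neg hβ, ?_⟩
  rw [← sub_eq_zero]
  apply coroot_sep rs
  intro γ hγ
  have h1 := congrFun hc ⟨γ, hγ⟩
  have h2 := congrArg (fun q : ℚ => (q : ℝ)) h1
  simp only [Finset.sum_apply, Pi.smul_apply, smul_eq_mul] at h2
  push_cast at h2
  rw [LinearMap.sub_apply, LinearMap.sum_apply, hm ⟨γ, hγ⟩ α, ← h2, sub_eq_zero]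
  refine Finset.sum_congr rfl fun β _ => ?_
  rw [LinearMap.smul_apply, hm ⟨γ, hγ⟩ β]
  by_cases hβ : P β <;> simp [M, hβ]

end transfer

/-- a generic parameter avoids finitely many proper hyperplanes -/
lemma exists_generic {K : Type*} [NormedAddCommGroup K] [NormedSpace ℝ K] [FiniteDimensional ℝ K]
    {U : Set K} (hU : IsOpen U) (hd : Dense U) {ι : Type*} [Finite ι] (f : ι → Module.Dual ℝ K) :
    ∃ k ∈ U, ∀ i, f i k = 0 → f i = 0 := by
  have := FiniteDimensional.complete ℝ K
  have h1 : Dense (⋂ i, {k : K | f i k = 0 → f i = 0}) := by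
    apply dense_iInter_of_isOpen
    · intro i
      by_cases h0 : f i = 0
      · simp [h0]
      · have e : {k : K | f i k = 0 → f i = 0} = ((LinearMap.ker (f i) : Set K))ᶜ := by
          ext k; simp [h0]
        rw [e]
        exact (Submodule.closed_of_finiteDimensional _).isOpen_compl
    · intro i
      by_cases h0 : f i = 0
      · simp [h0]
      · have e : {k : K | f i k = 0 → f i = 0} = ((LinearMap.ker (f i) : Set K))ᶜ := by
          ext k; simp [h0]
        rw [e, ← interior_eq_empty_iff_dense_compl]
        by_contra hne
        have := Submodule.eq_top_of_nonempty_interior' (LinearMap.ker (f i))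
          (Set.nonempty_iff_ne_empty.2 hne)
        exact h0 (LinearMap.ker_eq_top.1 this)
  have hne : Nonempty K := ⟨0⟩
  obtain ⟨k, hk1, hk2⟩ := (hd.inter_of_isOpen_left h1 hU).nonempty
  exact ⟨k, hk1, fun i => Set.mem_iInter.1 hk2 i⟩

/-- Rationality of generic linear residual points:  for every root `α ∈ R1`, the linear
functional `k ↦ α(ξ(k))` on `K` is a linear combination with rational coefficients of
the evaluation functionals `k ↦ k(β)`, `β ∈ R1`. -/
theorem generic_residual_point_rational (V : Type*) [AddCommGroup V] [Module ℝ V]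
    [FiniteDimensional ℝ V] (rs : RedRootSystem V)
    (ξ : (ParamSub rs) →ₗ[ℝ] V) (hξ : IsGeneric rs ξ) :
    ∀ α : rs.roots, ∃ c : rs.roots → ℚ, ∀ k : ParamSub rs,
      (α : Module.Dual ℝ V) (ξ k) = ∑ β : rs.roots, (c β : ℝ) * (k : rs.roots → ℝ) β := by
  obtain ⟨U, hUo, hUd, hU⟩ := hξ
  let f : rs.roots ⊕ rs.roots → Module.Dual ℝ (ParamSub rs) :=
    Sum.elim (fun α => ((α : Module.Dual ℝ V) : V →ₗ[ℝ] ℝ) ∘ₗ ξ - ev rs α)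
      (fun α => ((α : Module.Dual ℝ V) : V →ₗ[ℝ] ℝ) ∘ₗ ξ)
  obtain ⟨k, hkU, hk⟩ := exists_generic hUo hUd f
  have hres := hU k hkU
  have hP : ∀ α : rs.roots, ((α : Module.Dual ℝ V) (ξ k) = (k : rs.roots → ℝ) α ↔
      ((α : Module.Dual ℝ V) : V →ₗ[ℝ] ℝ) ∘ₗ ξ = ev rs α) := by
    intro α
    constructor
    · intro h
      refine sub_eq_zero.1 (hk (Sum.inl α) ?_)
      change (α : Module.Dual ℝ V) (ξ k) - ev rs α k = 0
      rw [ev_apply rs α.2, h, sub_self]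
    · intro h
      have := LinearMap.congr_fun h k
      rw [ev_apply rs α.2] at this
      exact this
  have hZ : ∀ α : rs.roots, ((α : Module.Dual ℝ V) (ξ k) = 0 ↔
      ((α : Module.Dual ℝ V) : V →ₗ[ℝ] ℝ) ∘ₗ ξ = 0) := by
    intro α
    constructor
    · intro h
      exact hk (Sum.inr α) h
    · intro h
      exact LinearMap.congr_fun h k
  have card : ∀ (p : Module.Dual ℝ V → Prop) [DecidablePred p], {α : rs.roots | p α}.ncard =
      (rs.roots.filter p).card := by
    intro p _
    rw [← Set.ncard_coe_finset, ← Set.ncard_image_of_injective _ Subtype.val_injective]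
    congr 1
    ext x
    simp [and_comm]
  let X : Submodule ℝ (Module.Dual ℝ V) := Submodule.span ℝ
    {x : Module.Dual ℝ V | ∃ β : rs.roots,
      (((β : Module.Dual ℝ V) : V →ₗ[ℝ] ℝ) ∘ₗ ξ = ev rs β) ∧ (β : Module.Dual ℝ V) = x}
  have hcount := count_roots rs ξ X
  rw [IsLinResidual] at hres
  simp only [hP, hZ] at hres
  rw [card (fun α => (α : V →ₗ[ℝ] ℝ) ∘ₗ ξ = ev rs α),
    card (fun α => (α : V →ₗ[ℝ] ℝ) ∘ₗ ξ = 0)] at hres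
  have hPX : (rs.roots.filter (fun α => (α : V →ₗ[ℝ] ℝ) ∘ₗ ξ = ev rs α)).card ≤
      (rs.roots.filter (fun α => α ∈ X ∧ (α : V →ₗ[ℝ] ℝ) ∘ₗ ξ = ev rs α)).card := by
    apply Finset.card_le_card
    intro α hα
    obtain ⟨h1, h2⟩ := Finset.mem_filter.1 hα
    exact Finset.mem_filter.2 ⟨h1, Submodule.subset_span ⟨⟨α, h1⟩, h2, rfl⟩, h2⟩
  have hX : X = ⊤ := by
    apply Submodule.eq_top_of_finrank_eq
    apply le_antisymm (Submodule.finrank_le X)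
    rw [Subspace.dual_finrank_eq]
    exact Nat.le_of_add_le_add_left (hres.symm.le.trans (hPX.trans hcount))
  intro α
  obtain ⟨c, hc0, hc⟩ := rational_coeff rs
    (fun β => ((β : Module.Dual ℝ V) : V →ₗ[ℝ] ℝ) ∘ₗ ξ = ev rs β) hX α
  refine ⟨c, fun k => ?_⟩
  rw [hc, LinearMap.sum_apply]
  refine Finset.sum_congr rfl fun β _ => ?_
  rw [LinearMap.smul_apply, smul_eq_mul]
  by_cases hβ : ((β : Module.Dual ℝ V) : V →ₗ[ℝ] ℝ) ∘ₗ ξ = ev rs β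
  · have := LinearMap.congr_fun hβ k
    rw [ev_apply rs β.2] at this
    rw [← this]; rfl
  · rw [hc0 β hβ]; simp

end GenRes

end
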